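/- Let (V, 𝒮) be a simplicial fan supported on ℝⁿ_{≥0} (encoding a geometric triangulation of the (n−1)-dimensional simplex). Let E ∈ 𝒮 and let F ∈ lk(E) be a face that admits a full partition F = F₁ ⊔ F₂ ⊔ 𝒜_F. If the coefficient of t^{|F₁| + |𝒜_F|} in the local h-polynomial ℓ(𝒮, E; t) is zero, then F is a U-pyramid. (Theorem 4.1 of the paper.) -/

import Mathlib

open scoped Classical

noncomputable section

/-- The conical hull (set of nonnegative linear combinations) of a finite set of
vectors in `ℝⁿ`. -/
def coneOf {n : ℕ} (F : Finset (Fin n → ℝ)) : Set (Fin n → ℝ) :=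
  {x | ∃ lam : (Fin n → ℝ) → ℝ, (∀ v ∈ F, 0 ≤ lam v) ∧ x = ∑ v ∈ F, lam v • v}

/-- A simplicial fan supported on `ℝⁿ_{≥0}`, encoding a geometric triangulation of
the `(n-1)`-dimensional simplex: a finite vertex set `V ⊆ ℝⁿ_{≥0} ∖ {0}` together
with a downward-closed collection of linearly independent finite subsets of `V`
(the faces, including `∅`) whose cones cover the nonnegative orthant and intersect
along common faces. -/
structure SimplicialFan (n : ℕ) where
  verts : Finset (Fin n → ℝ)
  faces : Finset (Finset (Fin n → ℝ))
  verts_nonneg : ∀ v ∈ verts, ∀ i, 0 ≤ v i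
  verts_ne_zero : ∀ v ∈ verts, v ≠ 0
  faces_subset_verts : ∀ F ∈ faces, F ⊆ verts
  empty_mem : ∅ ∈ faces
  indep : ∀ F ∈ faces, LinearIndependent ℝ (fun v : {x // x ∈ F} => (v : Fin n → ℝ))
  down_closed : ∀ F ∈ faces, ∀ F' ⊆ F, F' ∈ faces
  covers : (⋃ F ∈ faces, coneOf F) = {x : Fin n → ℝ | ∀ i, 0 ≤ x i}
  inter_cone : ∀ F ∈ faces, ∀ F' ∈ faces, coneOf F ∩ coneOf F' = coneOf (F ∩ F')

/-- `σ(F)`: the set of coordinates `ℓ` such that some `v ∈ F` has `v_ℓ ≠ 0`. -/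
def suppSet {n : ℕ} (F : Finset (Fin n → ℝ)) : Finset (Fin n) :=
  Finset.univ.filter fun ℓ => ∃ v ∈ F, v ℓ ≠ 0

/-- A face is interior if its support is all of `{1,…,n}`. -/
def IsInteriorFace {n : ℕ} (F : Finset (Fin n → ℝ)) : Prop :=
  suppSet F = Finset.univ

/-- The excess `e(F) = |σ(F)| − |F|`. -/
def excess {n : ℕ} (F : Finset (Fin n → ℝ)) : ℕ :=
  (suppSet F).card - F.card

/-- The link of a face `E`: faces `F` with `F ∩ E = ∅` and `F ∪ E ∈ 𝒮`. -/
def link {n : ℕ} (S : SimplicialFan n) (E : Finset (Fin n → ℝ)) :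
    Finset (Finset (Fin n → ℝ)) :=
  S.faces.filter fun F => F ∩ E = ∅ ∧ F ∪ E ∈ S.faces

/-- `F ∈ lk(E)` is a pyramid with apex `A ∈ F` if `F ∪ E` is interior but
`(F ∪ E) ∖ {A}` is not. -/
def IsPyramidApex {n : ℕ} (E F : Finset (Fin n → ℝ)) (A : Fin n → ℝ) : Prop :=
  A ∈ F ∧ IsInteriorFace (F ∪ E) ∧ ¬ IsInteriorFace ((F ∪ E).erase A)

/-- `𝒜_F`: the set of apices of `F` (relative to `E`). -/
def apices {n : ℕ} (E F : Finset (Fin n → ℝ)) : Finset (Fin n → ℝ) :=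
  F.filter fun A => IsPyramidApex E F A

/-- `V_A = {1,…,n} ∖ σ((F ∪ E) ∖ {A})`. -/
def baseDirs {n : ℕ} (E F : Finset (Fin n → ℝ)) (A : Fin n → ℝ) : Finset (Fin n) :=
  Finset.univ \ suppSet ((F ∪ E).erase A)

/-- `F` is a U-pyramid if `|V_A| = 1` for some apex `A` of `F`. -/
def IsUPyramid {n : ℕ} (E F : Finset (Fin n → ℝ)) : Prop :=
  ∃ A ∈ apices E F, (baseDirs E F A).card = 1

/-- A full partition of `F ∈ lk(E)`: a decomposition `F = F₁ ⊔ F₂ ⊔ 𝒜_F` with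
`F₁ ∪ 𝒜_F ∪ E` interior and `σ(F₂ ∪ E) = {1,…,n} ∖ ⋃_{A ∈ 𝒜_F} V_A`. -/
def IsFullPartition {n : ℕ} (E F F₁ F₂ : Finset (Fin n → ℝ)) : Prop :=
  F = F₁ ∪ F₂ ∪ apices E F ∧
  Disjoint F₁ F₂ ∧ Disjoint F₁ (apices E F) ∧ Disjoint F₂ (apices E F) ∧
  IsInteriorFace (F₁ ∪ apices E F ∪ E) ∧
  suppSet (F₂ ∪ E) = Finset.univ \ (apices E F).biUnion (baseDirs E F)

/-- The local `h`-polynomial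
`ℓ(𝒮, E; t) = Σ_{F ∈ 𝒮, E ⊆ F} (−1)^{n−|F|} t^{(n−|E|)−e(F)} (t−1)^{e(F)}`. -/
def localH {n : ℕ} (S : SimplicialFan n) (E : Finset (Fin n → ℝ)) : Polynomial ℤ :=
  ∑ F ∈ S.faces.filter (fun F => E ⊆ F),
    Polynomial.C ((-1 : ℤ) ^ (n - F.card)) *
      Polynomial.X ^ ((n - E.card) - excess F) * (Polynomial.X - 1) ^ (excess F)

open CategoryTheory in
/-- The `R`-module `M` has projective dimension less than `n`. -/
def PdLT (R M : Type) [CommRing R] [AddCommGroup M] [Module R M] (n : ℕ) : Prop :=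
  HasProjectiveDimensionLT (ModuleCat.of R M) n

namespace PdLT

open CategoryTheory

variable {R M N L : Type} [CommRing R] [AddCommGroup M] [AddCommGroup N] [AddCommGroup L]
  [Module R M] [Module R N] [Module R L] {n : ℕ}

theorem shortExact {f : M →ₗ[R] N} {g : N →ₗ[R] L} (hf : Function.Injective f)
    (hg : Function.Surjective g) (hfg : LinearMap.range f = LinearMap.ker g) :
    (ShortComplex.mk (ModuleCat.ofHom f) (ModuleCat.ofHom g) (by
      rw [← ModuleCat.ofHom_comp, (LinearMap.range_le_ker_iff.1 hfg.le)]; rfl)).ShortExact where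
  exact := (ShortComplex.moduleCat_exact_iff_range_eq_ker _).2 hfg
  mono_f := (ModuleCat.mono_iff_injective _).2 hf
  epi_g := (ModuleCat.epi_iff_surjective _).2 hg

theorem of_exact_left {f : M →ₗ[R] N} {g : N →ₗ[R] L} (hf : Function.Injective f)
    (hg : Function.Surjective g) (hfg : LinearMap.range f = LinearMap.ker g)
    (hN : PdLT R N n) (hL : PdLT R L (n + 1)) : PdLT R M n :=
  (shortExact hf hg hfg).hasProjectiveDimensionLT_X₁ n hN hL

theorem of_exact_middle {f : M →ₗ[R] N} {g : N →ₗ[R] L} (hf : Function.Injective f)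
    (hg : Function.Surjective g) (hfg : LinearMap.range f = LinearMap.ker g)
    (hM : PdLT R M n) (hL : PdLT R L n) : PdLT R N n :=
  (shortExact hf hg hfg).hasProjectiveDimensionLT_X₂ n hM hL

theorem of_exact_right {f : M →ₗ[R] N} {g : N →ₗ[R] L} (hf : Function.Injective f)
    (hg : Function.Surjective g) (hfg : LinearMap.range f = LinearMap.ker g)
    (hM : PdLT R M n) (hN : PdLT R N (n + 1)) : PdLT R L (n + 1) :=
  (shortExact hf hg hfg).hasProjectiveDimensionLT_X₃ n hM hN

theorem of_le {m : ℕ} (h : PdLT R M n) (hnm : n ≤ m) : PdLT R M m := by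
  have : HasProjectiveDimensionLT (ModuleCat.of R M) n := h
  exact hasProjectiveDimensionLT_of_ge _ n m hnm

theorem of_equiv (e : M ≃ₗ[R] N) (h : PdLT R M n) : PdLT R N n := by
  have : HasProjectiveDimensionLT (ModuleCat.of R M) n := h
  exact hasProjectiveDimensionLT_of_iso e.toModuleIso n

theorem one_iff : PdLT R M 1 ↔ Module.Projective R M := by
  unfold PdLT
  rw [← projective_iff_hasProjectiveDimensionLT_one, ← IsProjective.iff_projective]

theorem of_subsingleton [Subsingleton M] : PdLT R M n := by
  have : HasProjectiveDimensionLT (ModuleCat.of R M) 0 :=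
    (ModuleCat.isZero_of_subsingleton (ModuleCat.of R M)).hasProjectiveDimensionLT_zero
  exact hasProjectiveDimensionLT_of_ge _ 0 n (Nat.zero_le n)

/-- In an exact sequence `⋯ → D 2 → D 1 → D 0 = 0`, if `D (j + 1)` has projective dimension at
most `c - j`, then so has the `j`-th kernel. -/
theorem ker_of_exact (D : ℕ → Type) [∀ j, AddCommGroup (D j)] [∀ j, Module R (D j)]
    (d : ∀ j, D (j + 1) →ₗ[R] D j) [Subsingleton (D 0)] {c : ℕ}
    (hD : ∀ j ≤ c, PdLT R (D (j + 1)) (c - j + 1))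
    (hd : ∀ j < c, LinearMap.range (d (j + 1)) = LinearMap.ker (d j)) (j : ℕ) (hj : j ≤ c) :
    PdLT R (LinearMap.ker (d j)) (c - j + 1) := by
  induction j with
  | zero =>
    have : LinearMap.ker (d 0) = ⊤ := by
      rw [eq_top_iff]; intro x _; exact Subsingleton.elim _ _
    rw [this]
    exact of_equiv Submodule.topEquiv.symm (hD 0 hj)
  | succ j ih =>
    refine of_exact_left (f := (LinearMap.ker (d (j + 1))).subtype)
      (g := (d (j + 1)).rangeRestrict) Subtype.val_injective
      (LinearMap.surjective_rangeRestrict _) ?_ (hD _ hj) ?_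
    · rw [Submodule.range_subtype, LinearMap.ker_rangeRestrict]
    · rw [hd j hj]
      have := ih (by omega)
      rwa [show c - (j + 1) + 1 + 1 = c - j + 1 by omega]

end PdLT

/-- The submodule of families whose entries indexed by `s` lie in prescribed submodules. -/
def piOn {R A X : Type} [CommRing R] [AddCommGroup A] [Module R A] (I : X → Submodule R A)
    (s : Finset X) : Submodule R (X → A) where
  carrier := {f | ∀ x ∈ s, f x ∈ I x}
  zero_mem' _ _ := Submodule.zero_mem _
  add_mem' hf hg x hx := Submodule.add_mem _ (hf x hx) (hg x hx)
  smul_mem' c _ hf x hx := Submodule.smul_mem _ c (hf x hx)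

theorem mem_piOn {R A X : Type} [CommRing R] [AddCommGroup A] [Module R A] {I : X → Submodule R A}
    {s : Finset X} {f : X → A} : f ∈ piOn I s ↔ ∀ x ∈ s, f x ∈ I x := Iff.rfl

theorem PdLT.quotient_piOn {R A X : Type} [CommRing R] [AddCommGroup A] [Module R A]
    (I : X → Submodule R A) (s : Finset X) {n : ℕ} (h : ∀ x ∈ s, PdLT R (A ⧸ I x) n) :
    PdLT R ((X → A) ⧸ piOn I s) n := by
  induction s using Finset.induction_on with
  | empty =>
    have : Subsingleton ((X → A) ⧸ piOn I ∅) := by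
      rw [Submodule.Quotient.subsingleton_iff, eq_top_iff]
      intro f _ x hx
      simp at hx
    exact PdLT.of_subsingleton
  | insert a s ha ih =>
    have hle : I a ≤ (piOn I (insert a s)).comap (LinearMap.single R (fun _ => A) a) := by
      intro p hp x _
      by_cases hx : x = a
      · subst hx; simpa using hp
      · simp [Pi.single_eq_of_ne hx]
    have hle' : piOn I (insert a s) ≤ (piOn I s).comap LinearMap.id :=
      fun f hf x hx => hf x (Finset.mem_insert_of_mem hx)
    refine PdLT.of_exact_middle (f := Submodule.mapQ _ _ _ hle) (g := Submodule.mapQ _ _ _ hle')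
      ?_ ?_ ?_ (h a (Finset.mem_insert_self _ _))
      (ih fun x hx => h x (Finset.mem_insert_of_mem hx))
    · rw [← LinearMap.ker_eq_bot, eq_bot_iff]
      intro q hq
      obtain ⟨p, rfl⟩ := Submodule.Quotient.mk_surjective _ q
      have := hq
      rw [LinearMap.mem_ker, Submodule.mapQ_apply, Submodule.Quotient.mk_eq_zero] at this
      have := this a (Finset.mem_insert_self _ _)
      rw [Submodule.mem_bot, Submodule.Quotient.mk_eq_zero]
      simpa using this
    · intro q
      obtain ⟨p, rfl⟩ := Submodule.Quotient.mk_surjective _ q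
      exact ⟨Submodule.Quotient.mk p, rfl⟩
    · ext q
      obtain ⟨f, rfl⟩ := Submodule.Quotient.mk_surjective _ q
      rw [LinearMap.mem_ker, Submodule.mapQ_apply, Submodule.Quotient.mk_eq_zero]
      constructor
      · rintro ⟨p, hp⟩ x hx
        obtain ⟨p, rfl⟩ := Submodule.Quotient.mk_surjective _ p
        rw [Submodule.mapQ_apply, Submodule.Quotient.eq] at hp
        have hxa : x ≠ a := fun h => ha (h ▸ hx)
        have := hp x (Finset.mem_insert_of_mem hx)
        simp only [LinearMap.coe_single, Pi.sub_apply, Pi.single_eq_of_ne hxa, zero_sub] at this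
        simpa using this
      · intro hf
        refine ⟨Submodule.Quotient.mk (f a), ?_⟩
        rw [Submodule.mapQ_apply, Submodule.Quotient.eq]
        intro x hx
        rcases Finset.mem_insert.1 hx with rfl | hx'
        · simp
        · have hxa : x ≠ a := fun h => ha (h ▸ hx')
          have := hf x hx'
          simp only [LinearMap.coe_single, Pi.sub_apply, Pi.single_eq_of_ne hxa, zero_sub]
          simpa using this

/-- On a projective module over a polynomial ring, the variables form a regular sequence in any
order. -/
theorem smul_X_mem_of_projective {ι k M : Type} [Field k] [AddCommGroup M]
    [Module (MvPolynomial ι k) M] [Module.Projective (MvPolynomial ι k) M] (B : Set ι) {i : ι}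
    (hi : i ∉ B) (m : M)
    (h : (MvPolynomial.X i : MvPolynomial ι k) • m ∈
      (Ideal.span (MvPolynomial.X '' B) : Ideal (MvPolynomial ι k)) •
        (⊤ : Submodule (MvPolynomial ι k) M)) :
    m ∈ (Ideal.span (MvPolynomial.X '' B) : Ideal (MvPolynomial ι k)) •
      (⊤ : Submodule (MvPolynomial ι k) M) := by
  let P := MvPolynomial ι k
  set I : Ideal P := Ideal.span (MvPolynomial.X '' B)
  obtain ⟨s, hs⟩ := (Module.projective_def' (R := P) (P := M)).1 inferInstance
  have key : ∀ p : P, MvPolynomial.X i * p ∈ I → p ∈ I := by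
    intro p hp
    rw [MvPolynomial.mem_ideal_span_X_image] at hp ⊢
    intro m hm
    obtain ⟨j, hj, hj'⟩ := hp (Finsupp.single i 1 + m) (by
      rw [MvPolynomial.mem_support_iff, MvPolynomial.coeff_X_mul]
      exact MvPolynomial.mem_support_iff.1 hm)
    refine ⟨j, hj, ?_⟩
    have : i ≠ j := fun h => hi (h ▸ hj)
    simpa [Finsupp.single_apply, this] using hj'
  have hfree : ∀ x : M →₀ P, x ∈ I • (⊤ : Submodule P (M →₀ P)) ↔ ∀ y, x y ∈ I := by
    intro x
    constructor
    · intro hx y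
      have := Submodule.mem_map_of_mem (f := Finsupp.lapply (R := P) y) hx
      rw [Submodule.map_smul''] at this
      have h2 := Submodule.smul_mono le_rfl le_top this
      simpa using h2
    · intro hx
      rw [← Finsupp.sum_single x]
      refine Submodule.sum_mem _ fun y _ => ?_
      have : Finsupp.single y (x y) = x y • Finsupp.single y (1 : P) := by simp
      rw [this]
      exact Submodule.smul_mem_smul (hx y) trivial
  have h1 : s m ∈ I • (⊤ : Submodule P (M →₀ P)) := by
    rw [hfree]
    intro y
    apply key
    have := Submodule.mem_map_of_mem (f := s) h
    rw [Submodule.map_smul'', map_smul] at this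
    have h2 := (hfree _).1 (Submodule.smul_mono le_rfl le_top this) y
    simpa using h2
  have h2 := Submodule.mem_map_of_mem (f := Finsupp.linearCombination P (id : M → M)) h1
  rw [Submodule.map_smul''] at h2
  have h3 := Submodule.smul_mono le_rfl le_top h2
  have h4 : Finsupp.linearCombination P (id : M → M) (s m) = m := by
    simpa using LinearMap.congr_fun hs m
  rwa [h4] at h3

/-- The algebra homomorphism `X i ↦ ∑ x, a x i • X x`. -/
def linSubst {κ ι k : Type} [Field k] [Fintype κ] (a : Matrix κ ι k) :
    MvPolynomial ι k →ₐ[k] MvPolynomial κ k :=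
  MvPolynomial.aeval fun i => ∑ x, MvPolynomial.C (a x i) * MvPolynomial.X x

theorem linSubst_X {κ ι k : Type} [Field k] [Fintype κ] (a : Matrix κ ι k) (i : ι) :
    linSubst a (MvPolynomial.X i) = ∑ x, MvPolynomial.C (a x i) * MvPolynomial.X x := by
  simp [linSubst]

theorem linSubst_linSubst {κ ι μ k : Type} [Field k] [Fintype κ] [Fintype μ] (a : Matrix κ ι k)
    (b : Matrix μ κ k) (p : MvPolynomial ι k) :
    linSubst b (linSubst a p) = linSubst (b * a) p := by
  rw [← AlgHom.comp_apply]
  congr 1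
  apply MvPolynomial.algHom_ext
  intro i
  simp only [AlgHom.comp_apply, linSubst_X, map_sum, map_mul, Matrix.mul_apply]
  simp only [← MvPolynomial.algebraMap_eq, AlgHom.commutes]
  simp only [Finset.mul_sum, Finset.sum_mul]
  rw [Finset.sum_comm]
  refine Finset.sum_congr rfl fun _ _ => Finset.sum_congr rfl fun _ _ => by ring

theorem linSubst_one {κ k : Type} [Field k] [Fintype κ] (p : MvPolynomial κ k) :
    linSubst (1 : Matrix κ κ k) p = p := by
  have : linSubst (1 : Matrix κ κ k) = AlgHom.id k _ := by
    apply MvPolynomial.algHom_ext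
    intro i
    rw [linSubst_X, Finset.sum_eq_single i]
    · simp
    · intro b _ hb; simp [hb]
    · simp
  rw [this]; rfl

/-- A polynomial ring in `κ` variables, on which the polynomial ring in `ι` variables acts through
`κ` independent linear forms, has projective dimension at most `|ι| - |κ|`. -/
theorem PdLT.of_linSubst {ι k : Type} [Field k] [Fintype ι] (d : ℕ) {κ : Type} [Fintype κ]
    (a : Matrix κ ι k) (ha : LinearIndependent k a) (hd : Fintype.card κ + d = Fintype.card ι)
    {M : Type} [AddCommGroup M] [Module (MvPolynomial ι k) M] (e : M ≃+ MvPolynomial κ k)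
    (he : ∀ p m, e (p • m) = linSubst a p * e m) : PdLT (MvPolynomial ι k) M (d + 1) := by
  have hinj : Function.Injective (fun v => Matrix.vecMul v a) :=
    Matrix.vecMul_injective_iff.2 ha
  induction d generalizing κ M with
  | zero =>
    have hsurj : Function.Surjective (fun v => Matrix.vecMul v a) :=
      (LinearMap.injective_iff_surjective_of_finrank_eq_finrank (f := a.vecMulLinear)
        (by simpa using hd)).1 hinj
    obtain ⟨b, hb⟩ := Matrix.vecMul_surjective_iff_exists_left_inverse.1 hsurj
    have hb' : a * b = 1 := (Matrix.mul_eq_one_comm_of_card_eq _ _ _ (by simpa using hd.symm)).1 hb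
    rw [PdLT.one_iff]
    let f : MvPolynomial ι k →ₗ[MvPolynomial ι k] M := LinearMap.toSpanSingleton _ _ (e.symm 1)
    have hf : ∀ p, e (f p) = linSubst a p := fun p => by simp [f, he]
    refine Module.Projective.of_equiv (LinearEquiv.ofBijective f ⟨?_, ?_⟩)
    · intro p q hpq
      have : linSubst a p = linSubst a q := by rw [← hf, ← hf, hpq]
      have := congrArg (linSubst b) this
      rwa [linSubst_linSubst, linSubst_linSubst, hb, linSubst_one, linSubst_one] at this
    · intro m
      refine ⟨linSubst b (e m), e.injective ?_⟩
      rw [hf, linSubst_linSubst, hb', linSubst_one]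
  | succ d ih =>
    obtain ⟨r, hr⟩ : ∃ r : ι → k, r ∉ Submodule.span k (Set.range a) := by
      by_contra! h
      have h1 : Submodule.span k (Set.range a) = ⊤ := eq_top_iff.2 fun x _ => h x
      have h2 := finrank_span_eq_card ha
      rw [h1, finrank_top, Module.finrank_fintype_fun_eq_card] at h2
      omega
    let a' : Matrix (Option κ) ι k := fun o => o.elim r a
    have ha' : LinearIndependent k a' := linearIndependent_option.2 ⟨ha, hr⟩
    let _ : Module (MvPolynomial ι k) (MvPolynomial (Option κ) k) :=
      Module.compHom _ (linSubst a' : MvPolynomial ι k →+* MvPolynomial (Option κ) k)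
    have hsmul : ∀ (p : MvPolynomial ι k) (q : MvPolynomial (Option κ) k),
        p • q = linSubst a' p * q := fun _ _ => rfl
    have hM' := ih (κ := Option κ) a' ha' (by simp; omega) (AddEquiv.refl _) (fun p m => rfl)
      (Matrix.vecMul_injective_iff.2 ha')
    let ε : MvPolynomial (Option κ) k →ₐ[k] MvPolynomial κ k :=
      MvPolynomial.aeval fun o => o.elim 0 MvPolynomial.X
    have hε : ∀ p, ε (linSubst a' p) = linSubst a p := by
      intro p
      rw [← AlgHom.comp_apply]
      congr 1
      apply MvPolynomial.algHom_ext
      intro i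
      simp only [AlgHom.comp_apply, linSubst_X, Fintype.sum_option]
      simp only [← MvPolynomial.algebraMap_eq]
      simp [ε, a']
      rfl
    have hε' : ∀ q, ε q = (MvPolynomial.optionEquivLeft k κ q).coeff 0 := by
      intro q
      have : ε = ((Polynomial.aeval (0 : MvPolynomial κ k)).restrictScalars k).comp
          (MvPolynomial.optionEquivLeft k κ).toAlgHom := by
        apply MvPolynomial.algHom_ext
        rintro (_ | i)
        · simp [ε, MvPolynomial.optionEquivLeft_X_none]
        · simp [ε, MvPolynomial.optionEquivLeft_X_some]
      rw [this]
      simp [Polynomial.coeff_zero_eq_aeval_zero]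
    let f : MvPolynomial (Option κ) k →ₗ[MvPolynomial ι k] MvPolynomial (Option κ) k :=
      { toFun := fun q => MvPolynomial.X none * q
        map_add' := fun _ _ => mul_add _ _ _
        map_smul' := fun p q => by
          simp only [hsmul, RingHom.id_apply]; ring }
    let g : MvPolynomial (Option κ) k →ₗ[MvPolynomial ι k] M :=
      { toFun := fun q => e.symm (ε q)
        map_add' := fun _ _ => by simp
        map_smul' := fun p q => e.injective (by
          simp only [hsmul, RingHom.id_apply, he]; simp [hε]) }
    have hfq : ∀ q, f q = MvPolynomial.X none * q := fun _ => rfl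
    refine PdLT.of_exact_right (f := f) (g := g) ?_ ?_ ?_ hM' (hM'.of_le (Nat.le_succ _))
    · exact mul_right_injective₀ (MvPolynomial.X_ne_zero _)
    · intro m
      refine ⟨MvPolynomial.rename some (e m), e.injective ?_⟩
      change e (e.symm (ε _)) = _
      rw [AddEquiv.apply_symm_apply, MvPolynomial.aeval_rename]
      exact MvPolynomial.aeval_X_left_apply _
    · ext q
      constructor
      · rintro ⟨p, rfl⟩
        rw [hfq, LinearMap.mem_ker]
        change e.symm (ε (MvPolynomial.X none * p)) = 0
        rw [map_mul]
        simp [ε]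
      · intro hq
        have h0 : ε q = 0 := by
          have : e.symm (ε q) = 0 := hq
          simpa using this
        rw [hε', ← Polynomial.X_dvd_iff] at h0
        obtain ⟨p, hp⟩ := h0
        refine ⟨(MvPolynomial.optionEquivLeft k κ).symm p, ?_⟩
        rw [hfq]
        apply (MvPolynomial.optionEquivLeft k κ).injective
        rw [hp, map_mul, MvPolynomial.optionEquivLeft_X_none, AlgEquiv.apply_symm_apply]

/-- The ideal of polynomials all of whose monomials have a support satisfying `Q`. -/
def monoIdeal {V : Type} (k : Type) [Field k] (Q : Finset V → Prop) (hQ : Monotone Q) :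
    Ideal (MvPolynomial V k) where
  carrier := {p | ∀ m, p.coeff m ≠ 0 → Q m.support}
  zero_mem' m hm := absurd (MvPolynomial.coeff_zero m) hm
  add_mem' {p q} hp hq m hm := by
    rw [MvPolynomial.coeff_add] at hm
    by_cases h : p.coeff m = 0
    · exact hq m (by simpa [h] using hm)
    · exact hp m h
  smul_mem' c p hp m hm := by
    rw [smul_eq_mul, MvPolynomial.coeff_mul] at hm
    obtain ⟨x, hx, hx'⟩ := Finset.exists_ne_zero_of_sum_ne_zero hm
    refine hQ ?_ (hp x.2 (right_ne_zero_of_mul hx'))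
    rw [← Finset.HasAntidiagonal.mem_antidiagonal.1 hx]
    exact Finsupp.support_mono (le_add_of_nonneg_left (zero_le))

theorem mem_monoIdeal {V k : Type} [Field k] {Q : Finset V → Prop} {hQ : Monotone Q}
    {p : MvPolynomial V k} : p ∈ monoIdeal k Q hQ ↔ ∀ m, p.coeff m ≠ 0 → Q m.support := Iff.rfl

/-- The boundary (or rather coboundary-type) map of the complex with cells `T`, augmented by an
additional generator `none` which is attached to all cells of cardinality `N`. -/
def cellBd {V k : Type} [Field k] (T : Finset (Finset V)) (N : ℕ) :
    (Option (Finset V) → k) →ₗ[k] (Option (Finset V) → k) where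
  toFun c x := x.elim 0 fun ρ => if ρ ∈ T then
    ∑ τ ∈ T with ρ ⊂ τ ∧ τ.card = ρ.card + 1, c (some τ) + if ρ.card = N then c none else 0
    else 0
  map_add' c d := by
    ext (_ | ρ)
    · simp
    · simp only [Option.elim, Pi.add_apply, Finset.sum_add_distrib]
      split_ifs <;> ring
  map_smul' r c := by
    ext (_ | ρ)
    · simp
    · simp only [Option.elim, Pi.smul_apply, smul_eq_mul, RingHom.id_apply, ← Finset.mul_sum]
      split_ifs <;> ring

theorem cellBd_none {V k : Type} [Field k] (T : Finset (Finset V)) (N : ℕ)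
    (c : Option (Finset V) → k) : cellBd T N c none = 0 := rfl

theorem cellBd_some {V k : Type} [Field k] {T : Finset (Finset V)} (N : ℕ)
    (c : Option (Finset V) → k) {ρ : Finset V} (hρ : ρ ∈ T) : cellBd T N c (some ρ) =
    ∑ τ ∈ T with ρ ⊂ τ ∧ τ.card = ρ.card + 1, c (some τ) + if ρ.card = N then c none else 0 :=
  if_pos hρ

/-- Exactness at the indices in `U` of an endomorphism `∂` of a space of functions. -/
def AcyclicOn {X k : Type} [Field k] (d : (X → k) →ₗ[k] (X → k)) (U : Set X) : Prop :=
  ∀ c, (∀ x ∈ U, d c x = 0) → ∃ b, ∀ x ∈ U, c x = d b x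

/-- The augmentation together with the cells of `T` that contain `G`. -/
def starCells {V : Type} (T : Finset (Finset V)) (G : Finset V) : Set (Option (Finset V)) :=
  {x | ∀ τ, x = some τ → τ ∈ T ∧ G ⊆ τ}

/-- The polynomials vanishing on the coordinate subspace spanned by `τ`. -/
abbrev coordIdeal {V : Type} (k : Type) [Field k] (τ : Finset V) : Ideal (MvPolynomial V k) :=
  monoIdeal k (fun s => ¬ s ⊆ τ) fun _ _ hst hs ht => hs (hst.trans ht)

section CohenMacaulay

variable {V k P : Type} [Field k] [CommRing P] [Algebra P (MvPolynomial V k)]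

/-- Summation over the cells covering a given one, as a map on families of polynomials. -/
def sumUp (P : Type) [CommRing P] [Algebra P (MvPolynomial V k)] (T : Finset (Finset V)) :
    (Finset V → MvPolynomial V k) →ₗ[P] (Finset V → MvPolynomial V k) where
  toFun f ρ := ∑ τ ∈ T with ρ ⊂ τ ∧ τ.card = ρ.card + 1, f τ
  map_add' _ _ := by ext1; simp [Finset.sum_add_distrib]
  map_smul' _ _ := by ext1; simp [Finset.smul_sum]

/-- The families vanishing on the coordinate subspaces of the cells in `T` of cardinality `j - 1`.
-/
def cellSub (P : Type) [CommRing P] [Algebra P (MvPolynomial V k)] (T : Finset (Finset V))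
    (j : ℕ) : Submodule P (Finset V → MvPolynomial V k) :=
  piOn (fun τ => (coordIdeal k τ).restrictScalars P) (T.filter fun τ => τ.card + 1 = j)

theorem mem_cellSub {T : Finset (Finset V)} {j : ℕ} {f : Finset V → MvPolynomial V k} :
    f ∈ cellSub P T j ↔
      ∀ τ ∈ T, τ.card + 1 = j → ∀ m, m.support ⊆ τ → (f τ).coeff m = 0 := by
  simp only [cellSub, mem_piOn, Finset.mem_filter, Submodule.restrictScalars_mem]
  refine ⟨fun h τ hτ hj m hm => by_contra fun h' => h τ ⟨hτ, hj⟩ m h' hm,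
    fun h τ hτ m hm hm' => hm (h τ hτ.1 hτ.2 m hm')⟩

theorem cellSub_le_comap (T : Finset (Finset V)) (j : ℕ) :
    cellSub P T (j + 1) ≤ (cellSub P T j).comap (sumUp (k := k) P T) := by
  intro f hf
  rw [Submodule.mem_comap, mem_cellSub]
  intro ρ hρ hj m hm
  simp only [sumUp, LinearMap.coe_mk, AddHom.coe_mk, MvPolynomial.coeff_sum]
  refine Finset.sum_eq_zero fun τ hτ => ?_
  obtain ⟨hτ, hρτ, hc⟩ := Finset.mem_filter.1 hτ
  exact mem_cellSub.1 hf τ hτ (by omega) m (hm.trans hρτ.subset)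

variable [Fintype V] {T : Finset (Finset V)} {N : ℕ} {Γ : Finset V → Prop}

/-- If all stars of a complex of cells are acyclic, the kernels of `sumUp` consist, coefficient
by coefficient, of boundaries. -/
theorem exists_lift_of_acyclic
    (hac : ∀ G, Γ G → AcyclicOn (cellBd (k := k) T N) (starCells T G))
    (hno : ∀ G, ¬ Γ G → ∀ τ ∈ T, ¬ G ⊆ τ) {j : ℕ} {f : Finset V → MvPolynomial V k}
    (hf : sumUp P T f ∈ cellSub P T j) :
    ∃ (h : Finset V → MvPolynomial V k) (p : MvPolynomial V k), ∀ τ ∈ T, τ.card = j →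
      f τ - (sumUp P T h τ + if τ.card = N then p else 0) ∈ coordIdeal k τ := by
  let c : (V →₀ ℕ) → Option (Finset V) → k := fun m x =>
    x.elim 0 fun τ => if τ.card = j then (f τ).coeff m else 0
  have hc : ∀ m, ∃ b : Option (Finset V) → k, ∀ τ ∈ T, m.support ⊆ τ →
      c m (some τ) = cellBd T N b (some τ) := by
    intro m
    by_cases hG : Γ m.support
    · obtain ⟨b, hb⟩ := hac _ hG (c m) (by
        rintro (_ | ρ) hx
        · rfl
        · obtain ⟨hρ, hm⟩ := hx ρ rfl
          rw [cellBd_some N _ hρ]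
          have h0 : c m none = 0 := rfl
          rw [h0, ite_self, add_zero]
          by_cases hj : ρ.card + 1 = j
          · have := mem_cellSub.1 hf ρ hρ hj m hm
            simp only [sumUp, LinearMap.coe_mk, AddHom.coe_mk, MvPolynomial.coeff_sum] at this
            rw [← this]
            refine Finset.sum_congr rfl fun τ hτ => ?_
            exact if_pos (by rw [(Finset.mem_filter.1 hτ).2.2, hj])
          · refine Finset.sum_eq_zero fun τ hτ => ?_
            exact if_neg (by rw [(Finset.mem_filter.1 hτ).2.2]; exact hj))
      exact ⟨b, fun τ hτ hm => hb _ (by rintro _ ⟨⟩; exact ⟨hτ, hm⟩)⟩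
    · exact ⟨0, fun τ hτ hm => absurd hm (hno _ hG τ hτ)⟩
  choose b hb using hc
  let M : Finset (V →₀ ℕ) := Finset.univ.biUnion fun τ => (f τ).support
  have hM : ∀ m ∉ M, ∀ τ, (f τ).coeff m = 0 := by
    intro m hm τ
    by_contra h
    exact hm (Finset.mem_biUnion.2 ⟨τ, Finset.mem_univ _, MvPolynomial.mem_support_iff.2 h⟩)
  let q : Option (Finset V) → MvPolynomial V k := fun x => ∑ m ∈ M, MvPolynomial.monomial m (b m x)
  have hq : ∀ x m, (q x).coeff m = if m ∈ M then b m x else 0 := by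
    intro x m
    simp [q, MvPolynomial.coeff_sum, MvPolynomial.coeff_monomial]
  refine ⟨fun τ => q (some τ), q none, fun τ hτ hj => ?_⟩
  refine mem_monoIdeal.2 fun m hm hsub => hm ?_
  have hite : (if τ.card = N then q none else 0).coeff m =
      if τ.card = N then (q none).coeff m else 0 := by split_ifs <;> simp
  simp only [MvPolynomial.coeff_sub, MvPolynomial.coeff_add, sumUp, LinearMap.coe_mk,
    AddHom.coe_mk, MvPolynomial.coeff_sum, hq, hite]
  by_cases hmM : m ∈ M
  · simp only [if_pos hmM]
    have := hb m τ hτ hsub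
    rw [cellBd_some N _ hτ] at this
    rw [← this, sub_eq_zero]
    exact (if_pos hj).symm
  · simp [hM m hmM, hmM]

theorem projective_quotient_of_acyclic {hΓ : Monotone fun G => ¬ Γ G}
    (hac : ∀ G, Γ G → AcyclicOn (cellBd (k := k) T N) (starCells T G))
    (hno : ∀ G, ¬ Γ G → ∀ τ ∈ T, ¬ G ⊆ τ)
    (hcard : ∀ τ ∈ T, τ.card ≤ N)
    (hsq : ∀ c : Option (Finset V) → k, cellBd T N (cellBd T N c) = 0)
    (hpd : ∀ τ ∈ T, PdLT P (MvPolynomial V k ⧸ (coordIdeal k τ).restrictScalars P)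
      (N - τ.card + 1)) :
    Module.Projective P (MvPolynomial V k ⧸ (monoIdeal k _ hΓ).restrictScalars P) := by
  let D : ℕ → Type := fun j => (Finset V → MvPolynomial V k) ⧸ cellSub P T j
  let d : ∀ j, D (j + 1) →ₗ[P] D j := fun j => Submodule.mapQ _ _ _ (cellSub_le_comap T j)
  have hsub : Subsingleton (D 0) := by
    rw [Submodule.Quotient.subsingleton_iff, eq_top_iff]
    intro f _
    rw [mem_cellSub]
    intro τ _ h
    omega
  have hker : ∀ j f, (Submodule.Quotient.mk f : D (j + 1)) ∈ LinearMap.ker (d j) ↔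
      sumUp P T f ∈ cellSub P T j := by
    intro j f
    rw [LinearMap.mem_ker]
    exact Submodule.Quotient.mk_eq_zero _
  have hK : PdLT P (LinearMap.ker (d N)) (N - N + 1) := by
    refine PdLT.ker_of_exact D d (c := N) ?_ ?_ N le_rfl
    · intro j hj
      refine PdLT.quotient_piOn _ _ fun τ hτ => ?_
      obtain ⟨h1, h2⟩ := Finset.mem_filter.1 hτ
      have := hpd τ h1
      rwa [show τ.card = j by omega] at this
    · intro j hj
      ext x
      obtain ⟨f, rfl⟩ := Submodule.Quotient.mk_surjective _ x
      rw [hker]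
      constructor
      · rintro ⟨h, hh⟩
        obtain ⟨h, rfl⟩ := Submodule.Quotient.mk_surjective _ h
        have h1 : sumUp P T h - f ∈ cellSub P T (j + 1) := (Submodule.Quotient.eq _).1 hh
        have h2 := cellSub_le_comap T j h1
        rw [Submodule.mem_comap, map_sub] at h2
        have h3 : sumUp P T (sumUp P T h) ∈ cellSub P T j := by
          rw [mem_cellSub]
          intro ρ hρ _ m _
          have := congrFun (hsq fun x => x.elim 0 fun τ => (h τ).coeff m) (some ρ)
          rw [cellBd_some N _ hρ, cellBd_none, ite_self, add_zero] at this
          simp only [sumUp, LinearMap.coe_mk, AddHom.coe_mk, MvPolynomial.coeff_sum]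
          refine Eq.trans (Finset.sum_congr rfl fun τ hτ => ?_) this
          rw [cellBd_some N _ (Finset.mem_filter.1 hτ).1]
          simp
        have := Submodule.sub_mem _ h3 h2
        rwa [sub_sub_cancel] at this
      · intro hf
        obtain ⟨h, p, hp⟩ := exists_lift_of_acyclic hac hno hf
        refine ⟨Submodule.Quotient.mk h, ?_⟩
        refine (Submodule.Quotient.eq _).2 ?_
        rw [← neg_mem_iff, neg_sub, mem_cellSub]
        intro τ hτ hj' m hm
        by_contra hne
        have := hp τ hτ (by omega)
        rw [if_neg (by omega), add_zero] at this
        exact mem_monoIdeal.1 this m hne hm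
  rw [Nat.sub_self, zero_add, PdLT.one_iff] at hK
  let g : MvPolynomial V k →ₗ[P] D (N + 1) :=
    (cellSub P T (N + 1)).mkQ ∘ₗ LinearMap.pi fun _ => LinearMap.id
  have hg : ∀ p, g p = Submodule.Quotient.mk fun _ => p := fun _ => rfl
  have hgker : LinearMap.ker g = (monoIdeal k _ hΓ).restrictScalars P := by
    ext p
    rw [LinearMap.mem_ker, hg, Submodule.Quotient.mk_eq_zero, mem_cellSub,
      Submodule.restrictScalars_mem, mem_monoIdeal]
    constructor
    · intro h m hm hG
      obtain ⟨b, hb⟩ := hac _ hG (Pi.single none 1) (by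
        rintro (_ | ρ) hx
        · rfl
        · obtain ⟨hρ, hsub⟩ := hx ρ rfl
          rw [cellBd_some N _ hρ, if_neg]
          · simp
          · exact fun hρN => hm (h ρ hρ (by omega) m hsub))
      have := hb none (by rintro _ ⟨⟩)
      simp [cellBd_none] at this
    · intro h τ hτ _ m hsub
      by_contra hne
      exact hno _ (h m hne) τ hτ hsub
  have hgrange : LinearMap.range g = LinearMap.ker (d N) := by
    ext x
    obtain ⟨f, rfl⟩ := Submodule.Quotient.mk_surjective _ x
    rw [hker]
    constructor
    · rintro ⟨p, hp⟩
      have h1 : (fun _ => p) - f ∈ cellSub P T (N + 1) := (Submodule.Quotient.eq _).1 hp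
      have h2 := cellSub_le_comap T N h1
      rw [Submodule.mem_comap, map_sub] at h2
      have h3 : sumUp P T (fun _ => p) ∈ cellSub P T N := by
        rw [mem_cellSub]
        intro ρ hρ hN m _
        have := congrFun (hsq (Pi.single none (p.coeff m))) (some ρ)
        rw [cellBd_some N _ hρ, cellBd_none, ite_self, add_zero] at this
        simp only [sumUp, LinearMap.coe_mk, AddHom.coe_mk, MvPolynomial.coeff_sum]
        refine Eq.trans (Finset.sum_congr rfl fun τ hτ => ?_) this
        obtain ⟨hτ, -, hτc⟩ := Finset.mem_filter.1 hτ
        rw [cellBd_some N _ hτ, if_pos (by omega)]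
        simp
      have := Submodule.sub_mem _ h3 h2
      rwa [sub_sub_cancel] at this
    · intro hf
      obtain ⟨h, p, hp⟩ := exists_lift_of_acyclic hac hno hf
      refine ⟨p, (Submodule.Quotient.eq _).2 ?_⟩
      rw [← neg_mem_iff, neg_sub, mem_cellSub]
      intro τ hτ hj m hm
      by_contra hne
      have := hp τ hτ (by omega)
      have h0 : sumUp P T h τ = 0 := by
        refine Finset.sum_eq_zero fun τ' hτ' => ?_
        obtain ⟨h1, -, h2⟩ := Finset.mem_filter.1 hτ'
        have := hcard _ h1
        omega
      rw [if_pos (by omega), h0, zero_add] at this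
      exact mem_monoIdeal.1 this m hne hm
  rw [← hgrange] at hK
  rw [← hgker]
  exact Module.Projective.of_equiv (g.quotKerEquivRange).symm

end CohenMacaulay

/-- The sum of the submodules `θ j • N` over `j ∈ B`, where `N` is an ideal. -/
def thetaMul {ι A : Type} [CommRing A] (θ : ι → A) (B : Finset ι) (N : Ideal A) : Ideal A :=
  Ideal.span (θ '' B) * N

/-- The elements `θ j` with `j ∈ B` form, in any order, a weakly regular sequence on `N / D`. -/
def RegOn {ι A : Type} [CommRing A] (θ : ι → A) (N D : Ideal A) (B : Finset ι) : Prop :=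
  ∀ B' ⊆ B, ∀ i ∈ B, i ∉ B' → ∀ f ∈ N, θ i * f ∈ thetaMul θ B' N ⊔ D → f ∈ thetaMul θ B' N ⊔ D

/-- The linear forms whose coefficients are the columns of the matrix `a`. -/
def linForm {V ι k : Type} [Fintype V] [Field k] (a : V → ι → k) (i : ι) : MvPolynomial V k :=
  ∑ v, MvPolynomial.C (a v i) * MvPolynomial.X v

theorem smul_quotient_mem_iff {P A : Type} [CommRing P] [CommRing A] [Algebra P A]
    (J : Ideal P) (D : Ideal A) (f : A) :
    (Submodule.Quotient.mk f : A ⧸ D.restrictScalars P) ∈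
      J • (⊤ : Submodule P (A ⧸ D.restrictScalars P)) ↔ f ∈ J.map (algebraMap P A) ⊔ D := by
  have h1 : (⊤ : Submodule P (A ⧸ D.restrictScalars P)) =
      (⊤ : Submodule P A).map (D.restrictScalars P).mkQ := by
    rw [Submodule.map_top, Submodule.range_mkQ]
  rw [h1, ← Submodule.map_smul'', ← Submodule.mkQ_apply, ← Submodule.mem_comap,
    Submodule.comap_map_eq, Submodule.ker_mkQ, Ideal.smul_top_eq_map]
  rw [Submodule.mem_sup, Submodule.mem_sup]
  rfl

theorem linearIndependent_restrict {V ι k : Type} [Field k] (a : V → ι → k) (W : Finset ι)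
    (τ : Finset V) (hτ : LinearIndependent k fun v : τ => a v)
    (hW : ∀ v ∈ τ, ∀ i ∉ W, a v i = 0) :
    LinearIndependent k fun (v : τ) (i : W) => a v i := by
  rw [Fintype.linearIndependent_iff] at hτ ⊢
  intro g hg
  apply hτ
  funext i
  by_cases hi : i ∈ W
  · simpa using congrFun hg ⟨i, hi⟩
  · simp only [Finset.sum_apply, Pi.smul_apply, Pi.zero_apply]
    exact Finset.sum_eq_zero fun v _ => by rw [hW v v.2 i hi, smul_zero]

theorem card_le_of_linearIndependent {V ι k : Type} [Field k] (a : V → ι → k) (W : Finset ι)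
    (τ : Finset V) (hτ : LinearIndependent k fun v : τ => a v)
    (hW : ∀ v ∈ τ, ∀ i ∉ W, a v i = 0) : τ.card ≤ W.card := by
  simpa using (linearIndependent_restrict a W τ hτ hW).fintype_card_le_finrank

theorem pdLT_coordIdeal {V ι k : Type} [Fintype V] [Field k] (a : V → ι → k) (W : Finset ι)
    (τ : Finset V) (hτ : LinearIndependent k fun v : τ => a v) (hW : ∀ v ∈ τ, ∀ i ∉ W, a v i = 0)
    [Algebra (MvPolynomial W k) (MvPolynomial V k)]
    (halg : ∀ p, algebraMap (MvPolynomial W k) (MvPolynomial V k) p =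
      MvPolynomial.aeval (fun i : W => linForm a i) p) :
    PdLT (MvPolynomial W k)
      (MvPolynomial V k ⧸ (coordIdeal k τ).restrictScalars (MvPolynomial W k))
      (W.card - τ.card + 1) := by
  let b : Matrix τ W k := fun v i => a v i
  have hb : LinearIndependent k b := linearIndependent_restrict a W τ hτ hW
  have hcard : τ.card ≤ W.card := card_le_of_linearIndependent a W τ hτ hW
  let ε : MvPolynomial V k →ₐ[k] MvPolynomial τ k :=
    MvPolynomial.aeval fun v => if h : v ∈ τ then MvPolynomial.X ⟨v, h⟩ else 0
  have hεr : ∀ q, ε (MvPolynomial.rename (Subtype.val : τ → V) q) = q := by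
    intro q
    simp only [ε]
    rw [MvPolynomial.aeval_rename]
    convert MvPolynomial.aeval_X_left_apply q
    funext v
    simp
  have hεa : ∀ p, ε (algebraMap (MvPolynomial W k) _ p) = linSubst b p := by
    intro p
    rw [halg, ← AlgHom.comp_apply]
    congr 1
    apply MvPolynomial.algHom_ext
    intro i
    rw [AlgHom.comp_apply, MvPolynomial.aeval_X, linSubst_X, linForm, map_sum]
    rw [← Finset.sum_subset (Finset.subset_univ τ), ← Finset.sum_coe_sort τ]
    · refine Finset.sum_congr rfl fun v _ => ?_
      simp [ε, b]
    · intro v _ hv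
      simp [ε, hv]
  have hker : ∀ q, ε q = 0 ↔ q ∈ coordIdeal k τ := by
    have hsub : ∀ q, q - MvPolynomial.rename (Subtype.val : τ → V) (ε q) ∈ coordIdeal k τ := by
      intro q
      induction q using MvPolynomial.induction_on with
      | C c => simp [ε]
      | add p q hp hq =>
        rw [map_add, map_add, add_sub_add_comm]
        exact Ideal.add_mem _ hp hq
      | mul_X p v hp =>
        have hX : (MvPolynomial.X v : MvPolynomial V k) -
            MvPolynomial.rename (Subtype.val : τ → V) (ε (MvPolynomial.X v)) ∈ coordIdeal k τ := by
          by_cases hv : v ∈ τ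
          · simp [ε, hv]
          · refine mem_monoIdeal.2 fun m hm hs => hv (hs ?_)
            simp only [ε, MvPolynomial.aeval_X, dif_neg hv, map_zero, sub_zero,
              MvPolynomial.coeff_X, ne_eq, ite_eq_right_iff, one_ne_zero, imp_false,
              not_not] at hm
            simp [← hm]
        rw [map_mul, map_mul, ← sub_add_sub_cancel _ (MvPolynomial.rename _ (ε p) * _), ← sub_mul,
          ← mul_sub]
        exact Ideal.add_mem _ (Ideal.mul_mem_right _ _ hp) (Ideal.mul_mem_left _ _ hX)
    intro q
    constructor
    · intro h
      simpa [h] using hsub q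
    · intro h
      have h2 := (Submodule.sub_mem_iff_right _ h).1 (hsub q)
      have : MvPolynomial.rename (Subtype.val : τ → V) (ε q) = 0 := by
        ext m
        by_contra hm
        obtain ⟨d, rfl, -⟩ := MvPolynomial.coeff_rename_ne_zero _ _ _ hm
        refine mem_monoIdeal.1 h2 _ hm fun v hv => ?_
        obtain ⟨w, -, rfl⟩ := Finset.mem_image.1 (Finsupp.mapDomain_support hv)
        exact w.2
      simpa [hεr] using congrArg ε this
  let f : (MvPolynomial V k ⧸ (coordIdeal k τ).restrictScalars (MvPolynomial W k)) →+
      MvPolynomial τ k :=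
    QuotientAddGroup.lift _ (ε : MvPolynomial V k →+ MvPolynomial τ k) fun q hq => (hker q).2 hq
  have hf : ∀ q, f (Submodule.Quotient.mk q) = ε q := fun _ => rfl
  have hbij : Function.Bijective f := by
    constructor
    · rw [injective_iff_map_eq_zero]
      intro x hx
      obtain ⟨q, rfl⟩ := Submodule.Quotient.mk_surjective _ x
      rw [hf, hker] at hx
      exact (Submodule.Quotient.mk_eq_zero _).2 hx
    · exact fun q => ⟨Submodule.Quotient.mk (MvPolynomial.rename Subtype.val q), hεr q⟩
  refine PdLT.of_linSubst (W.card - τ.card) b hb (by simp; omega) (AddEquiv.ofBijective f hbij) ?_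
  intro p x
  obtain ⟨q, rfl⟩ := Submodule.Quotient.mk_surjective _ x
  rw [← Submodule.Quotient.mk_smul, AddEquiv.ofBijective_apply, AddEquiv.ofBijective_apply, hf, hf,
    Algebra.smul_def, map_mul, hεa]

theorem regOn_top_of_acyclic {V ι k : Type} [Fintype V] [Field k] (a : V → ι → k) (W : Finset ι)
    {T : Finset (Finset V)} {Γ : Finset V → Prop} {hΓ : Monotone fun G => ¬ Γ G}
    (hac : ∀ G, Γ G → AcyclicOn (cellBd (k := k) T W.card) (starCells T G))
    (hno : ∀ G, ¬ Γ G → ∀ τ ∈ T, ¬ G ⊆ τ)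
    (hsq : ∀ c : Option (Finset V) → k, cellBd T W.card (cellBd T W.card c) = 0)
    (hind : ∀ τ ∈ T, LinearIndependent k fun v : τ => a v)
    (hW : ∀ τ ∈ T, ∀ v ∈ τ, ∀ i ∉ W, a v i = 0) :
    RegOn (linForm a) ⊤ (monoIdeal k _ hΓ) W := by
  let φ : MvPolynomial W k →ₐ[k] MvPolynomial V k := MvPolynomial.aeval fun i : W => linForm a i
  let _ : Algebra (MvPolynomial W k) (MvPolynomial V k) := φ.toRingHom.toAlgebra
  have hX : ∀ j : W, algebraMap (MvPolynomial W k) (MvPolynomial V k) (MvPolynomial.X j) =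
      linForm a j := fun j => by
    change φ _ = _
    rw [MvPolynomial.aeval_X]
  have hpd := fun τ hτ => pdLT_coordIdeal a W τ (hind τ hτ) (hW τ hτ) fun _ => rfl
  have hcard : ∀ τ ∈ T, τ.card ≤ W.card := by
    exact fun τ hτ => card_le_of_linearIndependent a W τ (hind τ hτ) (hW τ hτ)
  have hproj := projective_quotient_of_acyclic (hΓ := hΓ) hac hno hcard hsq hpd
  intro B' hB' i hi hiB' f _ hf
  have hmap : (Ideal.span (MvPolynomial.X '' {j : W | (j : ι) ∈ B'})).map
      (algebraMap (MvPolynomial W k) (MvPolynomial V k)) =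
      thetaMul (linForm a) B' ⊤ := by
    rw [Ideal.map_span, thetaMul, Ideal.mul_top, ← Set.image_comp]
    congr 1
    ext x
    constructor
    · rintro ⟨j, hj, rfl⟩
      exact ⟨j, hj, (hX j).symm⟩
    · rintro ⟨j, hj, rfl⟩
      exact ⟨⟨j, hB' hj⟩, hj, hX _⟩
  have := smul_X_mem_of_projective (k := k) (M := MvPolynomial V k ⧸
    (monoIdeal k _ hΓ).restrictScalars (MvPolynomial W k)) {j : W | (j : ι) ∈ B'} (i := ⟨i, hi⟩)
    hiB' (Submodule.Quotient.mk f)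
  rw [← Submodule.Quotient.mk_smul, smul_quotient_mem_iff, smul_quotient_mem_iff, hmap] at this
  apply this
  rw [Algebra.smul_def]
  rwa [hX]

section RegOn

variable {ι A : Type} [CommRing A] {θ : ι → A}

theorem thetaMul_empty (N : Ideal A) : thetaMul θ ∅ N = ⊥ := by
  simp [thetaMul]

theorem thetaMul_insert (p : ι) (B : Finset ι) (N : Ideal A) :
    thetaMul θ (insert p B) N = Ideal.span {θ p} * N ⊔ thetaMul θ B N := by
  rw [thetaMul, Finset.coe_insert, Set.image_insert_eq, Ideal.span_insert, Ideal.sup_mul]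
  rfl

theorem thetaMul_mono {B B' : Finset ι} {N N' : Ideal A} (hB : B ⊆ B') (hN : N ≤ N') :
    thetaMul θ B N ≤ thetaMul θ B' N' :=
  Ideal.mul_mono (Ideal.span_mono (Set.image_mono hB)) hN

theorem thetaMul_le (B : Finset ι) (N : Ideal A) : thetaMul θ B N ≤ N := Ideal.mul_le_right

theorem thetaMul_sup (B : Finset ι) (N N' : Ideal A) :
    thetaMul θ B (N ⊔ N') = thetaMul θ B N ⊔ thetaMul θ B N' := Ideal.mul_sup _ _ _

theorem RegOn.subset {N D : Ideal A} {X Y : Finset ι} (h : RegOn θ N D X) (hY : Y ⊆ X) :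
    RegOn θ N D Y :=
  fun B hB i hi => h B (hB.trans hY) i (hY hi)

theorem RegOn.inf_thetaMul_le {B A' J : Ideal A} {X : Finset ι} (h : RegOn θ B A' X)
    (hJ : J ≤ A') (B' : Finset ι) (hB' : B' ⊆ X) :
    A' ⊓ (thetaMul θ B' B ⊔ J) ≤ thetaMul θ B' A' ⊔ J := by
  induction B' using Finset.induction_on with
  | empty => rw [thetaMul_empty, thetaMul_empty]; exact inf_le_right
  | insert p B' hp ih =>
    rintro f ⟨hfA, hf⟩
    rw [thetaMul_insert, sup_assoc] at hf ⊢
    obtain ⟨g, hg, u, hu, rfl⟩ := Submodule.mem_sup.1 hf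
    obtain ⟨b, hb, rfl⟩ := Ideal.mem_span_singleton_mul.1 hg
    have h1 : θ p * b ∈ thetaMul θ B' B ⊔ A' := by
      rw [← add_sub_cancel_right (θ p * b) u]
      exact Ideal.sub_mem _ (Ideal.mem_sup_right hfA) (sup_le_sup_left hJ _ hu)
    have h2 := h B' ((Finset.subset_insert _ _).trans hB') p (hB' (Finset.mem_insert_self _ _)) hp
      b hb h1
    obtain ⟨c, hc, a, ha, rfl⟩ := Submodule.mem_sup.1 h2
    have h3 : θ p * c + u ∈ thetaMul θ B' A' ⊔ J := by
      refine ih ((Finset.subset_insert _ _).trans hB') ⟨?_, ?_⟩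
      · have : θ p * c + u = (θ p * (c + a) + u) - θ p * a := by ring
        rw [this]
        exact Ideal.sub_mem _ hfA (Ideal.mul_mem_left _ _ ha)
      · exact Ideal.add_mem _ (Ideal.mem_sup_left (Ideal.mul_mem_left _ _ hc)) hu
    have : θ p * (c + a) + u = θ p * a + (θ p * c + u) := by ring
    rw [this]
    exact Ideal.add_mem _ (Ideal.mem_sup_left (Ideal.mem_span_singleton_mul.2 ⟨a, ha, rfl⟩))
      (Ideal.mem_sup_right h3)

theorem RegOn.depth {B A' J : Ideal A} {X : Finset ι} (h₁ : RegOn θ B J X) (h₂ : RegOn θ B A' X)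
    (hJ : J ≤ A') (hA : A' ≤ B) : RegOn θ A' J X := by
  intro B' hB' i hi hiB' f hf hθ
  exact h₂.inf_thetaMul_le hJ B' hB'
    ⟨hf, h₁ B' hB' i hi hiB' f (hA hf) (sup_le_sup_right (thetaMul_mono le_rfl hA) _ hθ)⟩

theorem RegOn.of_sup {N D : Ideal A} {X : Finset ι} (h : RegOn θ (N ⊔ D) D X) :
    RegOn θ N (N ⊓ D) X := by
  intro B' hB' i hi hiB' f hf hθ
  have h1 := h B' hB' i hi hiB' f (Ideal.mem_sup_left hf)
    ((sup_le_sup (thetaMul_mono le_rfl le_sup_left) inf_le_right :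
      thetaMul θ B' N ⊔ N ⊓ D ≤ thetaMul θ B' (N ⊔ D) ⊔ D) hθ)
  rw [thetaMul_sup, sup_assoc, sup_eq_right.2 (thetaMul_le B' D)] at h1
  obtain ⟨u, hu, d, hd, rfl⟩ := Submodule.mem_sup.1 h1
  refine Ideal.add_mem _ (Ideal.mem_sup_left hu) (Ideal.mem_sup_right ⟨?_, hd⟩)
  exact (Submodule.add_mem_iff_right _ (thetaMul_le _ _ hu)).1 hf

theorem RegOn.quotient {N' N'' D' D'' : Ideal A} {B : Finset ι} {p : ι} (hp : p ∉ B)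
    (hN : Ideal.span {θ p} * N' ≤ N'') (hN' : N'' ≤ N')
    (hD : Ideal.span {θ p} * D' ≤ D'') (hD' : D'' ≤ D')
    (h' : RegOn θ N' D' (insert p B)) (h'' : RegOn θ N'' D'' B) :
    RegOn θ N'' (D'' ⊔ Ideal.span {θ p} * N') B := by
  intro B' hB' i hi hiB' f hf hθ
  rw [← sup_assoc] at hθ ⊢
  obtain ⟨u, hu, v, hv, huv⟩ := Submodule.mem_sup.1 hθ
  obtain ⟨n, hn, rfl⟩ := Ideal.mem_span_singleton_mul.1 hv
  have h1 : θ p * n ∈ thetaMul θ (insert i B') N' ⊔ D' := by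
    rw [← add_sub_cancel_left u (θ p * n), huv, thetaMul_insert, sup_assoc]
    refine Ideal.sub_mem _ (Ideal.mem_sup_left
      (Ideal.mem_span_singleton_mul.2 ⟨f, hN' hf, rfl⟩)) (Ideal.mem_sup_right ?_)
    exact sup_le_sup (thetaMul_mono le_rfl hN') hD' hu
  have hpi : p ∉ insert i B' := by
    rw [Finset.mem_insert, not_or]
    exact ⟨fun h => hp (h ▸ hi), fun h => hp (hB' h)⟩
  have h2 := h' (insert i B') ((Finset.insert_subset hi hB').trans (Finset.subset_insert _ _)) p
    (Finset.mem_insert_self _ _) hpi n hn h1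
  rw [thetaMul_insert, sup_assoc] at h2
  obtain ⟨x, hx, y, hy, rfl⟩ := Submodule.mem_sup.1 h2
  obtain ⟨m, hm, rfl⟩ := Ideal.mem_span_singleton_mul.1 hx
  have hpm : θ p * m ∈ N'' := hN (Ideal.mem_span_singleton_mul.2 ⟨m, hm, rfl⟩)
  have h3 : f - θ p * m ∈ thetaMul θ B' N'' ⊔ D'' := by
    refine h'' B' hB' i hi hiB' _ (Ideal.sub_mem _ hf hpm) ?_
    have : θ i * (f - θ p * m) = u + θ p * y := by
      linear_combination -huv
    rw [this]
    refine Ideal.add_mem _ hu ?_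
    have h4 : Ideal.span {θ p} * (thetaMul θ B' N' ⊔ D') ≤ thetaMul θ B' N'' ⊔ D'' := by
      rw [Ideal.mul_sup]
      refine sup_le_sup ?_ hD
      rw [thetaMul, ← mul_assoc, mul_comm (Ideal.span {θ p}), mul_assoc]
      exact Ideal.mul_mono le_rfl hN
    exact h4 (Ideal.mem_span_singleton_mul.2 ⟨y, hy, rfl⟩)
  rw [← sub_add_cancel f (θ p * m)]
  exact Ideal.add_mem _ (Ideal.mem_sup_left h3)
    (Ideal.mem_sup_right (Ideal.mem_span_singleton_mul.2 ⟨m, hm, rfl⟩))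

/-- The ideal `D + ∑ p ∈ P, θ p • J (Q \ p)`. -/
def relIdeal (θ : ι → A) (J : Finset ι → Ideal A) (D : Ideal A) (Q P : Finset ι) : Ideal A :=
  D ⊔ P.sup fun p => Ideal.span {θ p} * J (Q.erase p)

variable {J : Finset ι → Ideal A} {D : Ideal A}

theorem relIdeal_empty (Q : Finset ι) : relIdeal θ J D Q ∅ = D := by simp [relIdeal]

theorem relIdeal_insert (Q P : Finset ι) (p : ι) : relIdeal θ J D Q (insert p P) =
    relIdeal θ J D Q P ⊔ Ideal.span {θ p} * J (Q.erase p) := by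
  rw [relIdeal, Finset.sup_insert, relIdeal, sup_assoc, sup_comm (Ideal.span {θ p} * _)]

theorem relIdeal_mono {J' : Finset ι → Ideal A} {D' : Ideal A} (hJ : ∀ Q, J Q ≤ J' Q)
    (hD : D ≤ D') (Q P : Finset ι) : relIdeal θ J D Q P ≤ relIdeal θ J' D' Q P :=
  sup_le_sup hD (Finset.sup_mono_fun fun _ _ => Ideal.mul_mono le_rfl (hJ _))

theorem relIdeal_erase_le (hJ : ∀ Q Q', Q ⊆ Q' → J Q' ≤ J Q) (Q P : Finset ι) (p : ι) :
    relIdeal θ J D Q P ≤ relIdeal θ J D (Q.erase p) P :=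
  sup_le_sup le_rfl (Finset.sup_mono_fun fun _ _ => Ideal.mul_mono le_rfl
    (hJ _ _ (Finset.erase_subset_erase _ (Finset.erase_subset _ _))))

theorem relIdeal_le (hDJ : ∀ Q, D ≤ J Q)
    (hθ : ∀ Q, ∀ p ∈ Q, Ideal.span {θ p} * J (Q.erase p) ≤ J Q) {Q P : Finset ι} (hPQ : P ⊆ Q) :
    relIdeal θ J D Q P ≤ J Q :=
  sup_le (hDJ Q) (Finset.sup_le fun p hp => hθ Q p (hPQ hp))

theorem mul_relIdeal_erase_le (hθ : ∀ Q, ∀ p ∈ Q, Ideal.span {θ p} * J (Q.erase p) ≤ J Q)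
    {Q P : Finset ι} {p : ι} (hpQ : p ∈ Q) (hpP : p ∉ P) :
    Ideal.span {θ p} * relIdeal θ J D (Q.erase p) P ≤ relIdeal θ J D Q P := by
  rw [relIdeal, Ideal.mul_sup]
  refine sup_le_sup Ideal.mul_le_right ?_
  simp only [Finset.sup_eq_iSup, Ideal.mul_iSup]
  refine iSup₂_mono fun q hq => ?_
  rw [← mul_assoc, mul_comm (Ideal.span {θ p}), mul_assoc, Finset.erase_right_comm]
  exact Ideal.mul_mono le_rfl
    (hθ _ p (Finset.mem_erase.2 ⟨fun h => hpP (h ▸ hq), hpQ⟩))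

theorem regOn_relIdeal [Fintype ι] (hJ : ∀ Q Q', Q ⊆ Q' → J Q' ≤ J Q)
    (hθ : ∀ Q, ∀ p ∈ Q, Ideal.span {θ p} * J (Q.erase p) ≤ J Q)
    (hreg : ∀ Q, RegOn θ (J Q) D Qᶜ) (P Q : Finset ι) (hPQ : P ⊆ Q) :
    RegOn θ (J Q) (relIdeal θ J D Q P) Qᶜ := by
  induction P using Finset.induction_on generalizing Q with
  | empty => rw [relIdeal_empty]; exact hreg Q
  | insert p P hp ih =>
    have hpQ : p ∈ Q := hPQ (Finset.mem_insert_self _ _)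
    have hPQ' : P ⊆ Q := (Finset.subset_insert _ _).trans hPQ
    rw [relIdeal_insert]
    refine RegOn.quotient (N' := J (Q.erase p)) (D' := relIdeal θ J D (Q.erase p) P)
      (by simpa using hpQ) (hθ Q p hpQ) (hJ _ _ (Finset.erase_subset _ _))
      (mul_relIdeal_erase_le hθ hpQ hp) (relIdeal_erase_le hJ _ _ _) ?_ (ih Q hPQ')
    rw [← Finset.compl_erase]
    exact ih (Q.erase p) fun q hq => Finset.mem_erase.2 ⟨fun h => hp (h ▸ hq), hPQ' hq⟩

theorem mem_relIdeal_of_mul_mem [Fintype ι] (hJ : ∀ Q Q', Q ⊆ Q' → J Q' ≤ J Q)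
    (hθ : ∀ Q, ∀ p ∈ Q, Ideal.span {θ p} * J (Q.erase p) ≤ J Q)
    (hreg : ∀ Q, RegOn θ (J Q) D Qᶜ) {P Q : Finset ι} (hPQ : P ⊆ Q) {p : ι}
    (hpP : p ∉ P) {f : A} (hf : f ∈ J (Q.erase p)) (h : θ p * f ∈ relIdeal θ J D Q P) :
    f ∈ relIdeal θ J D (Q.erase p) P := by
  have := regOn_relIdeal hJ hθ hreg P (Q.erase p)
    (fun q hq => Finset.mem_erase.2 ⟨fun h => hpP (h ▸ hq), hPQ hq⟩) ∅ (Finset.empty_subset _) p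
    (by simp) (by simp) f hf
  rw [thetaMul_empty, bot_sup_eq] at this
  exact this (relIdeal_erase_le hJ _ _ _ h)

end RegOn

section MonoIdeal

variable {V k : Type} [Field k]

theorem monoIdeal_mono {Q R : Finset V → Prop} {hQ : Monotone Q} {hR : Monotone R}
    (h : ∀ s, Q s → R s) : monoIdeal k Q hQ ≤ monoIdeal k R hR :=
  fun _ hp m hm => h _ (hp m hm)

theorem monoIdeal_le_sup {Q R T : Finset V → Prop} {hQ : Monotone Q} {hR : Monotone R}
    {hT : Monotone T} (h : ∀ s, T s → Q s ∨ R s) :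
    monoIdeal k T hT ≤ monoIdeal k Q hQ ⊔ monoIdeal k R hR := by
  intro p hp
  rw [p.as_sum]
  refine Ideal.sum_mem _ fun m hm => ?_
  have aux : ∀ (U : Finset V → Prop) (hU : Monotone U), U m.support →
      MvPolynomial.monomial m (p.coeff m) ∈ monoIdeal k U hU := by
    intro U hU hm' m' hm''
    rw [MvPolynomial.coeff_monomial] at hm''
    obtain rfl : m = m' := by
      by_contra hne
      exact hm'' (if_neg hne)
    exact hm'
  rcases h _ (hp m (MvPolynomial.mem_support_iff.1 hm)) with h' | h'
  · exact Ideal.mem_sup_left (aux Q hQ h')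
  · exact Ideal.mem_sup_right (aux R hR h')

theorem support_tsub_single {m : V →₀ ℕ} {v : V} (hv : v ∈ m.support) :
    insert v (m - Finsupp.single v 1).support = m.support := by
  ext w
  by_cases hw : w = v
  · subst hw; simpa using hv
  · simp [hw]

theorem X_mul_mem_monoIdeal {Q R : Finset V → Prop} {hQ : Monotone Q} {hR : Monotone R} {v : V}
    (h : ∀ s, Q s → R (insert v s)) {p : MvPolynomial V k} (hp : p ∈ monoIdeal k Q hQ) :
    MvPolynomial.X v * p ∈ monoIdeal k R hR := by
  intro m hm
  rw [MvPolynomial.coeff_X_mul'] at hm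
  have hv : v ∈ m.support := by
    by_contra hv
    exact hm (if_neg hv)
  rw [if_pos hv] at hm
  rw [← support_tsub_single hv]
  exact h _ (hp _ hm)

theorem mem_monoIdeal_of_X_mul_mem {Q R : Finset V → Prop} {hQ : Monotone Q} {hR : Monotone R}
    {v : V} (h : ∀ s, Q (insert v s) → R s) {p : MvPolynomial V k}
    (hp : MvPolynomial.X v * p ∈ monoIdeal k Q hQ) : p ∈ monoIdeal k R hR := by
  intro m hm
  apply h
  have := hp (Finsupp.single v 1 + m) (by rwa [MvPolynomial.coeff_X_mul])
  convert this using 1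
  ext w
  by_cases hw : w = v
  · subst hw; simp
  · simp [hw]

theorem monomial_mem_monoIdeal {Q : Finset V → Prop} {hQ : Monotone Q} {m : V →₀ ℕ} {c : k}
    (h : Q m.support) : MvPolynomial.monomial m c ∈ monoIdeal k Q hQ := by
  intro m' hm'
  rw [MvPolynomial.coeff_monomial] at hm'
  obtain rfl : m = m' := by
    by_contra hne
    exact hm' (if_neg hne)
  exact h

theorem linForm_mul_mem_monoIdeal {ι : Type} [Fintype V] {a : V → ι → k} {i : ι}
    {Q R : Finset V → Prop} {hQ : Monotone Q} {hR : Monotone R}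
    (h : ∀ v s, a v i ≠ 0 → Q s → R (insert v s)) :
    Ideal.span {linForm a i} * monoIdeal k Q hQ ≤ monoIdeal k R hR := by
  rw [Ideal.span_singleton_mul_le_iff]
  intro p hp
  rw [linForm, Finset.sum_mul]
  refine Ideal.sum_mem _ fun v _ => ?_
  by_cases hv : a v i = 0
  · simp [hv]
  · rw [mul_assoc]
    exact Ideal.mul_mem_left _ _ (X_mul_mem_monoIdeal (fun s => h v s hv) hp)

end MonoIdeal

/-- A simplicial complex on `V` with a monotone support function. -/
structure SuppComplex (V ι : Type) where
  Mem : Finset V → Prop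
  supp : Finset V → Finset ι
  mem_of_subset : ∀ {s t}, s ⊆ t → Mem t → Mem s
  supp_mono : ∀ {s t}, s ⊆ t → supp s ⊆ supp t

namespace SuppComplex

variable {V ι : Type} (C : SuppComplex V ι) (k : Type) [Field k]

/-- The ideal of the subcomplex of the faces supported in `W`. -/
def bad (W : Finset ι) : Ideal (MvPolynomial V k) :=
  monoIdeal k (fun s => ¬ (C.Mem s ∧ C.supp s ⊆ W))
    fun _ _ h h1 h2 => h1 ⟨C.mem_of_subset h h2.1, (C.supp_mono h).trans h2.2⟩

/-- The ideal generated by the faces which are not supported in `W` or whose support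
contains `Q`. -/
def rel (W Q : Finset ι) : Ideal (MvPolynomial V k) :=
  monoIdeal k (fun s => C.Mem s → C.supp s ⊆ W → Q ⊆ C.supp s)
    fun _ _ h h1 h2 h3 =>
      (h1 (C.mem_of_subset h h2) ((C.supp_mono h).trans h3)).trans (C.supp_mono h)

variable {C k}

theorem bad_le_rel (W Q : Finset ι) : C.bad k W ≤ C.rel k W Q :=
  monoIdeal_mono fun _ h h1 h2 => absurd ⟨h1, h2⟩ h

theorem rel_anti (W : Finset ι) {Q Q' : Finset ι} (h : Q ⊆ Q') : C.rel k W Q' ≤ C.rel k W Q :=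
  monoIdeal_mono fun _ h' h1 h2 => h.trans (h' h1 h2)

theorem rel_sup_bad (W Q : Finset ι) (i : ι) :
    C.rel k W Q ⊔ C.bad k (W.erase i) = C.rel k (W.erase i) Q := by
  refine le_antisymm (sup_le ?_ (bad_le_rel _ _)) ?_
  · exact monoIdeal_mono fun _ h h1 h2 => h h1 (h2.trans (Finset.erase_subset _ _))
  · refine monoIdeal_le_sup fun s h => ?_
    by_cases h' : C.Mem s ∧ C.supp s ⊆ W.erase i
    · exact Or.inl fun _ _ => h h'.1 h'.2
    · exact Or.inr h'

theorem rel_inf_bad (W Q : Finset ι) (i : ι) :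
    C.rel k W Q ⊓ C.bad k (W.erase i) = C.rel k W (insert i Q) := by
  refine le_antisymm ?_ (le_inf (rel_anti _ (Finset.subset_insert _ _)) ?_)
  · rintro p ⟨h1, h2⟩ m hm hC hW
    refine Finset.insert_subset ?_ (h1 m hm hC hW)
    by_contra hi
    exact h2 m hm ⟨hC, fun j hj => Finset.mem_erase.2 ⟨fun h => hi (h ▸ hj), hW hj⟩⟩
  · refine monoIdeal_mono fun s h h' => ?_
    have h1 := h h'.1 (h'.2.trans (Finset.erase_subset _ _)) (Finset.mem_insert_self _ _)
    exact (Finset.mem_erase.1 (h'.2 h1)).1 rfl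

theorem rel_empty (W : Finset ι) : C.rel k W ∅ = ⊤ := by
  rw [eq_top_iff]
  exact fun p _ m _ _ _ => Finset.empty_subset _

theorem regOn_rel {θ : ι → MvPolynomial V k} (hreg : ∀ W, RegOn θ ⊤ (C.bad k W) W)
    (Q W : Finset ι) : RegOn θ (C.rel k W Q) (C.bad k W) (W \ Q) := by
  induction Q using Finset.induction_on generalizing W with
  | empty => rw [rel_empty, Finset.sdiff_empty]; exact hreg W
  | insert i Q hi ih =>
    refine RegOn.depth (B := C.rel k W Q) ((ih W).subset ?_) ?_ (bad_le_rel _ _)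
      (rel_anti _ (Finset.subset_insert _ _))
    · exact Finset.sdiff_subset_sdiff le_rfl (Finset.subset_insert _ _)
    · have := ih (W.erase i)
      rw [← rel_sup_bad] at this
      have h2 := this.of_sup
      rw [rel_inf_bad] at h2
      refine h2.subset fun j hj => ?_
      simp only [Finset.mem_sdiff, Finset.mem_insert, not_or, Finset.mem_erase] at hj ⊢
      exact ⟨⟨hj.2.1, hj.1⟩, hj.2.2⟩

variable [Fintype V] [Fintype ι] (a : V → ι → k)

/-- The linear form `∑ v, a v i • X v` raises supports by `i`. -/
def Compatible (C : SuppComplex V ι) (a : V → ι → k) : Prop :=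
  ∀ v i s, a v i ≠ 0 → i ∈ C.supp (insert v s)

theorem linForm_mul_rel_le {a : V → ι → k} (ha : C.Compatible a) (Q : Finset ι) (p : ι) :
    Ideal.span {linForm a p} * C.rel k Finset.univ (Q.erase p) ≤ C.rel k Finset.univ Q := by
  refine linForm_mul_mem_monoIdeal fun v s hv h h1 _ => ?_
  have h2 := (h (C.mem_of_subset (Finset.subset_insert _ _) h1) (Finset.subset_univ _)).trans
    (C.supp_mono (Finset.subset_insert v s))
  intro q hq
  by_cases hqp : q = p
  · subst hqp; exact ha v q s hv
  · exact h2 (Finset.mem_erase.2 ⟨hqp, hq⟩)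

/-- The ideal of relations defining the local module indexed by `Q` and `P`. -/
def relSub (C : SuppComplex V ι) (a : V → ι → k) (Q P : Finset ι) : Ideal (MvPolynomial V k) :=
  relIdeal (linForm a) (C.rel k Finset.univ) (C.bad k Finset.univ) Q P

theorem relSub_le {a : V → ι → k} (ha : C.Compatible a) {Q P : Finset ι} (hPQ : P ⊆ Q) :
    C.relSub a Q P ≤ C.rel k Finset.univ Q :=
  relIdeal_le (bad_le_rel _) (fun Q p _ => linForm_mul_rel_le ha Q p) hPQ

theorem mem_relSub_of_mul_mem {a : V → ι → k} (ha : C.Compatible a)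
    (hreg : ∀ W, RegOn (linForm a) ⊤ (C.bad k W) W) {P Q : Finset ι} (hPQ : P ⊆ Q) {p : ι}
    (hpP : p ∉ P) {f : MvPolynomial V k} (hf : f ∈ C.rel k Finset.univ (Q.erase p))
    (h : linForm a p * f ∈ C.relSub a Q P) : f ∈ C.relSub a (Q.erase p) P :=
  mem_relIdeal_of_mul_mem (fun _ _ => rel_anti _) (fun Q p _ => linForm_mul_rel_le ha Q p)
    (fun Q => by rw [Finset.compl_eq_univ_sdiff]; exact regOn_rel hreg Q _) hPQ hpP hf h

end SuppComplex

section GradedRank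

variable {V k : Type} [Field k]

/-- An ideal stable under taking homogeneous components. -/
def IsGradedIdeal (I : Ideal (MvPolynomial V k)) : Prop :=
  ∀ p ∈ I, ∀ d, MvPolynomial.homogeneousComponent d p ∈ I

/-- The degree `d` part of an ideal. -/
def degPart (I : Ideal (MvPolynomial V k)) (d : ℕ) : Submodule k (MvPolynomial V k) :=
  I.restrictScalars k ⊓ MvPolynomial.homogeneousSubmodule V k d

theorem mem_degPart {I : Ideal (MvPolynomial V k)} {d : ℕ} {p : MvPolynomial V k} :
    p ∈ degPart I d ↔ p ∈ I ∧ p.IsHomogeneous d := Iff.rfl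

theorem degPart_mono {I J : Ideal (MvPolynomial V k)} (h : I ≤ J) (d : ℕ) :
    degPart I d ≤ degPart J d := fun _ hp => ⟨h hp.1, hp.2⟩

theorem finite_degPart [Finite V] (I : Ideal (MvPolynomial V k)) (d : ℕ) :
    FiniteDimensional k (degPart I d) := by
  have : FiniteDimensional k (MvPolynomial.homogeneousSubmodule V k d) :=
    Module.Finite.iff_fg.2 (MvPolynomial.homogeneousSubmodule_fg V k d)
  exact Submodule.finiteDimensional_of_le (inf_le_right :
    degPart I d ≤ MvPolynomial.homogeneousSubmodule V k d)

theorem homogeneousComponent_mul_of_isHomogeneous {θ : MvPolynomial V k} {e : ℕ}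
    (hθ : θ.IsHomogeneous e) (p : MvPolynomial V k) (d : ℕ) :
    MvPolynomial.homogeneousComponent (e + d) (θ * p)
      = θ * MvPolynomial.homogeneousComponent d p := by
  conv_lhs => rw [← MvPolynomial.sum_homogeneousComponent p, Finset.mul_sum, map_sum]
  have h : ∀ i, MvPolynomial.homogeneousComponent (e + d)
      (θ * MvPolynomial.homogeneousComponent i p)
      = if d = i then θ * MvPolynomial.homogeneousComponent i p else 0 := by
    intro i
    rw [MvPolynomial.homogeneousComponent_of_mem
      (hθ.mul (MvPolynomial.homogeneousComponent_isHomogeneous i p))]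
    simp only [add_right_inj]
  simp only [h, Finset.sum_ite_eq, Finset.mem_range]
  split_ifs with hd
  · rfl
  · rw [MvPolynomial.homogeneousComponent_eq_zero d p (by omega), mul_zero]

theorem homogeneousComponent_zero_mul {θ : MvPolynomial V k}
    (hθ : θ.IsHomogeneous 1) (p : MvPolynomial V k) :
    MvPolynomial.homogeneousComponent 0 (θ * p) = 0 := by
  have h : MvPolynomial.coeff 0 θ = 0 := hθ.coeff_eq_zero (by simp)
  have h2 : MvPolynomial.coeff 0 (θ * p) = MvPolynomial.coeff 0 θ * MvPolynomial.coeff 0 p := by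
    simp [← MvPolynomial.constantCoeff_eq]
  rw [MvPolynomial.homogeneousComponent_zero, h2, h, zero_mul, map_zero]

theorem IsGradedIdeal.sup {I J : Ideal (MvPolynomial V k)} (hI : IsGradedIdeal I)
    (hJ : IsGradedIdeal J) : IsGradedIdeal (I ⊔ J) := by
  intro p hp d
  obtain ⟨x, hx, y, hy, rfl⟩ := Submodule.mem_sup.1 hp
  rw [map_add]
  exact Ideal.add_mem _ (Ideal.mem_sup_left (hI x hx d)) (Ideal.mem_sup_right (hJ y hy d))

theorem IsGradedIdeal.span_mul {I : Ideal (MvPolynomial V k)} (hI : IsGradedIdeal I)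
    {θ : MvPolynomial V k} (hθ : θ.IsHomogeneous 1) : IsGradedIdeal (Ideal.span {θ} * I) := by
  intro p hp d
  obtain ⟨x, hx, rfl⟩ := Ideal.mem_span_singleton_mul.1 hp
  rcases d with _ | d
  · rw [homogeneousComponent_zero_mul hθ]; exact zero_mem _
  · rw [add_comm, homogeneousComponent_mul_of_isHomogeneous hθ]
    exact Ideal.mem_span_singleton_mul.2 ⟨_, hI x hx d, rfl⟩

theorem isGradedIdeal_monoIdeal {Q : Finset V → Prop} {hQ : Monotone Q} :
    IsGradedIdeal (monoIdeal k Q hQ) := by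
  intro p hp d m hm
  rw [MvPolynomial.coeff_homogeneousComponent] at hm
  split_ifs at hm with h
  · exact hp m hm
  · exact absurd rfl hm

theorem isHomogeneous_linForm {ι : Type} [Fintype V] (a : V → ι → k) (i : ι) :
    (linForm a i).IsHomogeneous 1 :=
  MvPolynomial.IsHomogeneous.sum _ _ _ fun _ _ => MvPolynomial.isHomogeneous_C_mul_X _ _

/-- Rank count for adding a multiple of a linear form to an ideal. -/
theorem finrank_degPart_sup_span_mul [Finite V] {M N J : Ideal (MvPolynomial V k)}
    (hN : IsGradedIdeal N) (hJ : IsGradedIdeal J) (hMJ : M ≤ J) {θ : MvPolynomial V k}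
    (hθ : θ.IsHomogeneous 1) (h : ∀ f ∈ J, θ * f ∈ N ↔ f ∈ M) (d : ℕ) :
    Module.finrank k (degPart (N ⊔ Ideal.span {θ} * J) (d + 1)) + Module.finrank k (degPart M d)
      = Module.finrank k (degPart N (d + 1)) + Module.finrank k (degPart J d) := by
  have := fun I : Ideal (MvPolynomial V k) => finite_degPart I d
  have := fun I : Ideal (MvPolynomial V k) => finite_degPart I (d + 1)
  by_cases h0 : θ = 0
  · have hJM : M = J := le_antisymm hMJ fun f hf => (h f hf).1 (by simp [h0])
    subst hJM
    rw [h0, Ideal.span_singleton_zero, Ideal.bot_mul, sup_bot_eq]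
  have hinj : Function.Injective (LinearMap.mulLeft k θ) := mul_right_injective₀ h0
  have h1 : degPart (N ⊔ Ideal.span {θ} * J) (d + 1)
      = degPart N (d + 1) ⊔ (degPart J d).map (LinearMap.mulLeft k θ) := by
    apply le_antisymm
    · rintro p ⟨hp, hpd⟩
      obtain ⟨x, hx, z, hz, rfl⟩ := Submodule.mem_sup.1 hp
      obtain ⟨y, hy, rfl⟩ := Ideal.mem_span_singleton_mul.1 hz
      rw [← MvPolynomial.homogeneousComponent_eq_self hpd, map_add, add_comm d,
        homogeneousComponent_mul_of_isHomogeneous hθ]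
      refine Submodule.add_mem_sup ⟨hN x hx _, MvPolynomial.homogeneousComponent_isHomogeneous _ _⟩
        ⟨_, ⟨hJ y hy d, MvPolynomial.homogeneousComponent_isHomogeneous _ _⟩, rfl⟩
    · refine sup_le (degPart_mono le_sup_left _) ?_
      rintro _ ⟨y, hy, rfl⟩
      refine ⟨Ideal.mem_sup_right (Ideal.mem_span_singleton_mul.2 ⟨y, hy.1, rfl⟩), ?_⟩
      rw [add_comm d]
      exact hθ.mul hy.2
  have h2 : degPart N (d + 1) ⊓ (degPart J d).map (LinearMap.mulLeft k θ)
      = (degPart M d).map (LinearMap.mulLeft k θ) := by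
    apply le_antisymm
    · rintro _ ⟨hp, y, hy, rfl⟩
      exact ⟨y, ⟨(h y hy.1).1 hp.1, hy.2⟩, rfl⟩
    · rintro _ ⟨y, hy, rfl⟩
      refine ⟨⟨(h y (hMJ hy.1)).2 hy.1, ?_⟩, y, ⟨hMJ hy.1, hy.2⟩, rfl⟩
      rw [add_comm d]
      exact hθ.mul hy.2
  have h3 := Submodule.finrank_sup_add_finrank_inf_eq (degPart N (d + 1))
    ((degPart J d).map (LinearMap.mulLeft k θ))
  have h4 : ∀ K : Submodule k (MvPolynomial V k),
      Module.finrank k (K.map (LinearMap.mulLeft k θ)) = Module.finrank k K :=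
    fun K => (Submodule.equivMapOfInjective _ hinj K).finrank_eq.symm
  rwa [← h1, h2, h4, h4] at h3

theorem degPart_zero_sup_span_mul {N J : Ideal (MvPolynomial V k)}
    (hN : IsGradedIdeal N) {θ : MvPolynomial V k} (hθ : θ.IsHomogeneous 1) :
    degPart (N ⊔ Ideal.span {θ} * J) 0 = degPart N 0 := by
  refine le_antisymm ?_ (degPart_mono le_sup_left _)
  rintro p ⟨hp, hpd⟩
  refine ⟨?_, hpd⟩
  obtain ⟨x, hx, y, hy, rfl⟩ := Submodule.mem_sup.1 hp
  obtain ⟨y, hy, rfl⟩ := Ideal.mem_span_singleton_mul.1 hy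
  rw [← MvPolynomial.homogeneousComponent_eq_self hpd, map_add, homogeneousComponent_zero_mul hθ,
    add_zero]
  exact hN x hx _

theorem finrank_degPart_monoIdeal [Fintype V] {Q : Finset V → Prop} {hQ : Monotone Q} (d : ℕ) :
    Module.finrank k (degPart (monoIdeal k Q hQ) d)
      = {m ∈ Finset.finsuppAntidiag (Finset.univ : Finset V) d | Q m.support}.card := by
  have h : degPart (monoIdeal k Q hQ) d = MvPolynomial.restrictSupport k
      ({m ∈ Finset.finsuppAntidiag (Finset.univ : Finset V) d | Q m.support} :
        Finset (V →₀ ℕ)) := by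
    ext p
    have hdeg : ∀ m : V →₀ ℕ, m.degree = ∑ v, m v := fun m => Finsupp.degree_eq_sum m
    rw [mem_degPart, MvPolynomial.mem_restrictSupport_iff]
    constructor
    · rintro ⟨h1, h2⟩ m hm
      have hm' := MvPolynomial.mem_support_iff.1 hm
      simp only [Finset.coe_filter, Finset.mem_finsuppAntidiag, Set.mem_ofPred_eq]
      refine ⟨⟨?_, Finset.subset_univ _⟩, h1 m hm'⟩
      rw [← hdeg]
      by_contra hne
      exact hm' (h2.coeff_eq_zero hne)
    · intro hp
      refine ⟨fun m hm => ?_, fun m hm => ?_⟩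
      · have := hp (MvPolynomial.mem_support_iff.2 hm)
        simp only [Finset.coe_filter, Set.mem_ofPred_eq] at this
        exact this.2
      · have := hp (MvPolynomial.mem_support_iff.2 hm)
        simp only [Finset.coe_filter, Finset.mem_finsuppAntidiag, Set.mem_ofPred_eq] at this
        have h2 : m.degree = d := (hdeg m).trans this.1.1
        rwa [Finsupp.degree_eq_weight_one] at h2
  rw [h, Module.finrank_eq_card_basis (MvPolynomial.basisRestrictSupport k _)]
  simp

end GradedRank

section SquareFree

variable {V : Type} [Fintype V]

theorem coeff_X_mul_invOneSub (j : ℕ) :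
    PowerSeries.coeff j ((PowerSeries.X : PowerSeries ℤ) * PowerSeries.mk 1)
      = if j = 0 then 0 else 1 := by
  rcases j with _ | j
  · simp
  · rw [PowerSeries.coeff_succ_X_mul]; simp

theorem coeff_pow_card_eq_card_support (s : Finset V) (d : ℕ) :
    PowerSeries.coeff d (((PowerSeries.X : PowerSeries ℤ) * PowerSeries.mk 1) ^ s.card)
      = ({m ∈ Finset.finsuppAntidiag (Finset.univ : Finset V) d | m.support = s}.card : ℤ) := by
  rw [← Finset.prod_const, PowerSeries.coeff_prod]
  simp only [coeff_X_mul_invOneSub]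
  have h : ∀ l ∈ Finset.finsuppAntidiag s d, (∏ i ∈ s, if l i = 0 then (0 : ℤ) else 1)
      = if l.support = s then 1 else 0 := by
    intro l hl
    rw [Finset.mem_finsuppAntidiag] at hl
    split_ifs with h
    · refine Finset.prod_eq_one fun i hi => ?_
      rw [← h, Finsupp.mem_support_iff] at hi
      rw [if_neg hi]
    · obtain ⟨i, hi, hi'⟩ : ∃ i ∈ s, i ∉ l.support := by
        by_contra! hc
        exact h (hl.2.antisymm hc)
      exact Finset.prod_eq_zero hi (if_pos (Finsupp.notMem_support_iff.1 hi'))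
  rw [Finset.sum_congr rfl h, ← Finset.sum_filter, Finset.sum_const, nsmul_eq_mul, mul_one]
  congr 2
  ext l
  simp only [Finset.mem_filter, Finset.mem_finsuppAntidiag]
  constructor
  · rintro ⟨⟨h1, h2⟩, rfl⟩
    refine ⟨⟨?_, Finset.subset_univ _⟩, rfl⟩
    rw [← h1]
    exact (Finset.sum_subset (Finset.subset_univ _) fun i _ hi =>
      Finsupp.notMem_support_iff.1 hi).symm
  · rintro ⟨⟨h1, _⟩, rfl⟩
    refine ⟨⟨?_, subset_rfl⟩, rfl⟩
    rw [← h1]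
    exact Finset.sum_subset (Finset.subset_univ _) fun i _ hi => Finsupp.notMem_support_iff.1 hi

theorem card_filter_support (d : ℕ) (R : Finset V → Prop) :
    ({m ∈ Finset.finsuppAntidiag (Finset.univ : Finset V) d | R m.support}.card : ℤ)
      = PowerSeries.coeff d (∑ s with R s,
        ((PowerSeries.X : PowerSeries ℤ) * PowerSeries.mk 1) ^ s.card) := by
  rw [map_sum]
  simp only [coeff_pow_card_eq_card_support]
  rw [Finset.card_eq_sum_card_fiberwise (f := fun m : V →₀ ℕ => m.support)
    (t := Finset.univ.filter R)]
  · push_cast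
    refine Finset.sum_congr rfl fun s hs => ?_
    rw [Finset.filter_filter]
    congr 2
    ext m
    simp only [Finset.mem_filter, Finset.mem_univ, true_and] at hs ⊢
    constructor
    · exact fun h => ⟨h.1, h.2.2⟩
    · exact fun h => ⟨h.1, h.2 ▸ hs, h.2⟩
  · intro m hm
    simpa using (Finset.mem_filter.1 hm).2

end SquareFree

theorem sum_neg_pow_card_superset {ι : Type} [Fintype ι] {A : Type} [CommRing A] (x : A)
    (s : Finset ι) :
    ∑ T : Finset ι with Tᶜ ⊆ s, (-x) ^ T.card
      = (-x) ^ (Fintype.card ι - s.card) * (1 - x) ^ s.card := by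
  have h := Finset.sum_pow_mul_eq_add_pow (-x) 1 s
  simp only [one_pow, mul_one] at h
  rw [sub_eq_neg_add, ← h, Finset.mul_sum]
  symm
  refine Finset.sum_bij (fun r _ => sᶜ ∪ r) ?_ ?_ ?_ ?_
  · intro r hr
    simp only [Finset.mem_filter, Finset.mem_univ, true_and, Finset.compl_union, compl_compl]
    exact Finset.inter_subset_left
  · intro r hr r' hr' h
    have key : ∀ r ∈ s.powerset, s ∩ (sᶜ ∪ r) = r := by
      intro r hr
      rw [Finset.inter_union_distrib_left, Finset.inter_compl, Finset.empty_union]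
      exact Finset.inter_eq_right.2 (Finset.mem_powerset.1 hr)
    rw [← key r hr, ← key r' hr', h]
  · intro T hT
    simp only [Finset.mem_filter, Finset.mem_univ, true_and] at hT
    refine ⟨s ∩ T, by simp, ?_⟩
    rw [Finset.union_inter_distrib_left, Finset.union_comm sᶜ s, Finset.union_compl,
      Finset.univ_inter]
    exact Finset.union_eq_right.2 (by rwa [← compl_compl T, Finset.compl_subset_compl])
  · intro r hr
    rw [Finset.card_union_of_disjoint, pow_add, Finset.card_compl]
    exact disjoint_compl_left.mono_right (Finset.mem_powerset.1 hr)

namespace SuppComplex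

variable {V ι : Type} [Fintype V] [Fintype ι] {C : SuppComplex V ι} {k : Type} [Field k]
  {a : V → ι → k}

/-- The Hilbert series of the local module indexed by `Q` and `P`. -/
def hilb (C : SuppComplex V ι) (a : V → ι → k) (Q P : Finset ι) : PowerSeries ℤ :=
  PowerSeries.mk fun d => (Module.finrank k (degPart (C.rel k Finset.univ Q) d) : ℤ)
    - Module.finrank k (degPart (C.relSub a Q P) d)

theorem isGradedIdeal_relSub (Q P : Finset ι) : IsGradedIdeal (C.relSub a Q P) := by
  induction P using Finset.induction_on with
  | empty => rw [relSub, relIdeal_empty]; exact isGradedIdeal_monoIdeal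
  | insert p P hp ih =>
    rw [relSub, relIdeal_insert]
    exact ih.sup (isGradedIdeal_monoIdeal.span_mul (isHomogeneous_linForm a p))

theorem hilb_insert (ha : C.Compatible a)
    (hreg : ∀ W, RegOn (linForm a) ⊤ (C.bad k W) W) {P Q : Finset ι} (hPQ : P ⊆ Q) {p : ι}
    (hpQ : p ∈ Q) (hpP : p ∉ P) :
    C.hilb a Q (insert p P) = C.hilb a Q P - PowerSeries.X * C.hilb a (Q.erase p) P := by
  have hP : P ⊆ Q.erase p := fun q hq => Finset.mem_erase.2 ⟨fun h => hpP (h ▸ hq), hPQ hq⟩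
  have hins : C.relSub a Q (insert p P)
      = C.relSub a Q P ⊔ Ideal.span {linForm a p} * C.rel k Finset.univ (Q.erase p) := by
    rw [relSub, relIdeal_insert]; rfl
  ext d
  rw [map_sub]
  rcases d with _ | d
  · simp only [hilb, PowerSeries.coeff_mk, PowerSeries.coeff_zero_X_mul, sub_zero]
    rw [hins, degPart_zero_sup_span_mul (isGradedIdeal_relSub _ _) (isHomogeneous_linForm a p)]
  · rw [PowerSeries.coeff_succ_X_mul]
    simp only [hilb, PowerSeries.coeff_mk]
    have := finrank_degPart_sup_span_mul (M := C.relSub a (Q.erase p) P)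
      (N := C.relSub a Q P) (J := C.rel k Finset.univ (Q.erase p)) (isGradedIdeal_relSub _ _)
      isGradedIdeal_monoIdeal (relSub_le ha hP) (isHomogeneous_linForm a p) (fun f hf => ⟨fun h =>
        mem_relSub_of_mul_mem ha hreg hPQ hpP hf h, fun h => ?_⟩) d
    · rw [← hins] at this
      linarith
    · exact mul_relIdeal_erase_le (fun Q p _ => linForm_mul_rel_le ha Q p) hpQ hpP
        (Ideal.mem_span_singleton_mul.2 ⟨f, h, rfl⟩)

theorem hilb_eq_sum (ha : C.Compatible a)
    (hreg : ∀ W, RegOn (linForm a) ⊤ (C.bad k W) W) {P Q : Finset ι} (hPQ : P ⊆ Q) :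
    C.hilb a Q P = ∑ T ∈ P.powerset, (-PowerSeries.X) ^ T.card * C.hilb a (Q \ T) ∅ := by
  induction P using Finset.induction_on generalizing Q with
  | empty => simp
  | insert p P hp ih =>
    have hpQ := hPQ (Finset.mem_insert_self p P)
    have hPQ' := (Finset.subset_insert p P).trans hPQ
    have hP : P ⊆ Q.erase p := fun q hq => Finset.mem_erase.2 ⟨fun h => hp (h ▸ hq), hPQ' hq⟩
    rw [hilb_insert ha hreg hPQ' hpQ hp, ih hPQ', ih hP, Finset.sum_powerset_insert hp,
      sub_eq_add_neg, Finset.mul_sum, ← Finset.sum_neg_distrib]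
    congr 1
    refine Finset.sum_congr rfl fun T hT => ?_
    rw [Finset.card_insert_of_notMem fun h => hp (Finset.mem_powerset.1 hT h), pow_succ]
    have : Q.erase p \ T = Q \ insert p T := by
      ext q
      simp only [Finset.mem_sdiff, Finset.mem_erase, Finset.mem_insert]
      tauto
    rw [this]
    ring

theorem hilb_empty (Q : Finset ι) : C.hilb a Q ∅ = ∑ s with C.Mem s ∧ Q ⊆ C.supp s,
    ((PowerSeries.X : PowerSeries ℤ) * PowerSeries.mk 1) ^ s.card := by
  ext d
  refine Eq.trans ?_ ((card_filter_support d fun s => C.Mem s ∧ Q ⊆ C.supp s).trans (by congr))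
  have h1 := finrank_degPart_monoIdeal (k := k) (hQ := fun _ _ h h1 h2 h3 =>
      (h1 (C.mem_of_subset h h2) ((C.supp_mono h).trans h3)).trans (C.supp_mono h))
    (Q := fun s => C.Mem s → C.supp s ⊆ Finset.univ → Q ⊆ C.supp s) d
  have h2 := finrank_degPart_monoIdeal (k := k) (hQ := fun _ _ h h1 h2 =>
      h1 ⟨C.mem_of_subset h h2.1, (C.supp_mono h).trans h2.2⟩)
    (Q := fun s => ¬ (C.Mem s ∧ C.supp s ⊆ Finset.univ)) d
  rw [hilb, PowerSeries.coeff_mk, relSub, relIdeal_empty]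
  rw [rel, bad, h1, h2, sub_eq_iff_eq_add, ← Nat.cast_add, Nat.cast_inj]
  rw [← Finset.card_union_of_disjoint]
  · congr 1
    ext m
    simp only [Finset.mem_filter, Finset.mem_union, Finset.subset_univ]
    tauto
  · rw [Finset.disjoint_left]
    intro m h h'
    simp only [Finset.mem_filter, Finset.subset_univ] at h h'
    tauto

theorem hilb_univ (ha : C.Compatible a) (hreg : ∀ W, RegOn (linForm a) ⊤ (C.bad k W) W) :
    C.hilb a Finset.univ Finset.univ = ∑ s with C.Mem s,
      ((PowerSeries.X : PowerSeries ℤ) * PowerSeries.mk 1) ^ s.card *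
        ((-PowerSeries.X) ^ (Fintype.card ι - (C.supp s).card) *
          (1 - PowerSeries.X) ^ (C.supp s).card) := by
  rw [hilb_eq_sum ha hreg subset_rfl, Finset.powerset_univ]
  simp only [hilb_empty, Finset.mul_sum, ← sum_neg_pow_card_superset, Finset.sum_filter]
  rw [Finset.sum_comm]
  refine Finset.sum_congr rfl fun s _ => ?_
  by_cases hs : C.Mem s
  · simp only [hs, true_and, if_true]
    refine Finset.sum_congr rfl fun T _ => ?_
    rw [← Finset.compl_eq_univ_sdiff]
    split_ifs
    · ring
    · simp
  · simp [hs]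

/-- Vanishing of a coefficient of the Hilbert series kills the corresponding graded part. -/
theorem mem_relSub_of_coeff_hilb_eq_zero (ha : C.Compatible a) {d : ℕ}
    (h : PowerSeries.coeff d (C.hilb a Finset.univ Finset.univ) = 0) {f : MvPolynomial V k}
    (hf : f ∈ C.rel k Finset.univ Finset.univ) (hd : f.IsHomogeneous d) :
    f ∈ C.relSub a Finset.univ Finset.univ := by
  rw [hilb, PowerSeries.coeff_mk, sub_eq_zero, Nat.cast_inj] at h
  have := finite_degPart (C.rel k Finset.univ Finset.univ) d
  have h2 := Submodule.eq_of_le_of_finrank_eq (degPart_mono (relSub_le ha subset_rfl) d) h.symm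
  have h3 : f ∈ degPart (C.rel k Finset.univ Finset.univ) d := ⟨hf, hd⟩
  rw [← h2] at h3
  exact h3.1

end SuppComplex

theorem monoIdeal_mem_le_span_X {V k : Type} [Field k] (v : V) :
    monoIdeal k (fun s => v ∈ s) (fun _ _ h h' => h h') ≤ Ideal.span {MvPolynomial.X v} := by
  intro p hp
  rw [p.as_sum]
  refine Ideal.sum_mem _ fun m hm => ?_
  have hv : v ∈ m.support := hp m (MvPolynomial.mem_support_iff.1 hm)
  rw [Ideal.mem_span_singleton, MvPolynomial.X, MvPolynomial.monomial_dvd_monomial]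
  refine ⟨Or.inr ?_, one_dvd _⟩
  rw [Finsupp.single_le_iff]
  exact Nat.one_le_iff_ne_zero.2 (Finsupp.mem_support_iff.1 hv)

/-- A simplicial complex with vertices labelled by subsets of `ι`. -/
structure LabelledComplex (V ι : Type) where
  Face : Finset V → Prop
  label : V → Finset ι
  face_of_subset : ∀ {s t}, s ⊆ t → Face t → Face s

namespace LabelledComplex

variable {V ι k : Type} [Field k] (K : LabelledComplex V ι)

/-- The union of the labels of a set of vertices. -/
def labels (s : Finset V) : Finset ι := s.biUnion K.label

theorem labels_mono {s t : Finset V} (h : s ⊆ t) : K.labels s ⊆ K.labels t :=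
  Finset.biUnion_subset_biUnion_of_subset_left _ h

/-- The star of `E`. -/
def star (E : Finset V) : SuppComplex V ι where
  Mem G := K.Face (G ∪ E)
  supp G := K.labels (G ∪ E)
  mem_of_subset h := K.face_of_subset (Finset.union_subset_union_left h)
  supp_mono h := K.labels_mono (Finset.union_subset_union_left h)

/-- The subcomplex of the star of `E` of the faces not containing `v`. -/
def del (E : Finset V) (v : V) : SuppComplex V ι where
  Mem G := K.Face (G ∪ E) ∧ v ∉ G
  supp G := K.labels (G ∪ E)
  mem_of_subset h h' := ⟨K.face_of_subset (Finset.union_subset_union_left h) h'.1,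
    fun hv => h'.2 (h hv)⟩
  supp_mono h := K.labels_mono (Finset.union_subset_union_left h)

variable {K}

theorem insert_union_eq (v : V) (s E : Finset V) : s ∪ insert v E = insert v s ∪ E := by
  rw [Finset.union_insert, Finset.insert_union]

theorem labels_insert_union {v : V} {E : Finset V} (hv : K.label v ⊆ K.labels E)
    (s : Finset V) : K.labels (insert v s ∪ E) = K.labels (s ∪ E) := by
  refine subset_antisymm ?_ (K.labels_mono (Finset.union_subset_union_left
    (Finset.subset_insert _ _)))
  rw [Finset.insert_union, labels, Finset.biUnion_insert]
  exact Finset.union_subset (hv.trans (K.labels_mono Finset.subset_union_right)) subset_rfl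

/-- The square-free monomial of a set, as an exponent. -/
def expOf (s : Finset V) : V →₀ ℕ := ∑ v ∈ s, Finsupp.single v 1

theorem expOf_apply (s : Finset V) (v : V) : expOf s v = if v ∈ s then 1 else 0 := by
  simp [expOf, Finsupp.finsetSum_apply, Finsupp.single_apply]

theorem support_expOf (s : Finset V) : (expOf s).support = s := by
  ext v; simp [expOf_apply]

theorem support_expOf_tsub (s : Finset V) (v : V) :
    (expOf s - Finsupp.single v 1).support = s.erase v := by
  ext w
  by_cases hw : w = v
  · subst hw; by_cases h : w ∈ s <;> simp [expOf_apply, h]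
  · simp [expOf_apply, hw]

theorem prod_X_eq_monomial (s : Finset V) :
    (∏ v ∈ s, MvPolynomial.X v : MvPolynomial V k) = MvPolynomial.monomial (expOf s) 1 := by
  rw [expOf, MvPolynomial.monomial_sum_one]; rfl

variable {a : V → ι → k}

theorem compatible_star (ha : ∀ v i, a v i ≠ 0 → i ∈ K.label v) (E : Finset V) :
    (K.star E).Compatible a := by
  intro v i s h
  exact Finset.mem_biUnion.2 ⟨v, by simp, ha v i h⟩

theorem compatible_del (ha : ∀ v i, a v i ≠ 0 → i ∈ K.label v) (E : Finset V) (w : V) :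
    (K.del E w).Compatible a := by
  intro v i s h
  exact Finset.mem_biUnion.2 ⟨v, by simp, ha v i h⟩

variable [Fintype ι]

theorem rel_del_le (E : Finset V) (v : V) (Q : Finset ι) :
    (K.del E v).rel k Finset.univ Q
      ≤ (K.star E).rel k Finset.univ Q ⊔ Ideal.span {MvPolynomial.X v} := by
  have h : (K.del E v).rel k Finset.univ Q ≤ (K.star E).rel k Finset.univ Q ⊔
      monoIdeal k (fun s => v ∈ s) (fun _ _ h h' => h h') := by
    refine monoIdeal_le_sup fun s hs => ?_
    by_cases hv : v ∈ s
    · exact Or.inr hv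
    · exact Or.inl fun h1 h2 => hs ⟨h1, hv⟩ h2
  exact h.trans (sup_le_sup_left (monoIdeal_mem_le_span_X v) _)

theorem bad_del_le (E : Finset V) (v : V) :
    (K.del E v).bad k Finset.univ
      ≤ (K.star E).bad k Finset.univ ⊔ Ideal.span {MvPolynomial.X v} := by
  have h : (K.del E v).bad k Finset.univ ≤ (K.star E).bad k Finset.univ ⊔
      monoIdeal k (fun s => v ∈ s) (fun _ _ h h' => h h') := by
    refine monoIdeal_le_sup fun s hs => ?_
    by_cases hv : v ∈ s
    · exact Or.inr hv
    · exact Or.inl fun h1 => hs ⟨⟨h1.1, hv⟩, h1.2⟩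
  exact h.trans (sup_le_sup_left (monoIdeal_mem_le_span_X v) _)

theorem X_mem_bad_del (E : Finset V) (v : V) :
    (MvPolynomial.X v : MvPolynomial V k) ∈ (K.del E v).bad k Finset.univ := by
  refine monomial_mem_monoIdeal fun h => h.1.2 ?_
  simp

theorem star_rel_le_del (E : Finset V) (v : V) (Q : Finset ι) :
    (K.star E).rel k Finset.univ Q ≤ (K.del E v).rel k Finset.univ Q :=
  monoIdeal_mono fun _ h h1 h2 => h h1.1 h2

theorem mem_rel_star_of_X_mul_mem {E : Finset V} {v : V} (hv : K.label v ⊆ K.labels E)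
    {Q : Finset ι} {f : MvPolynomial V k}
    (h : MvPolynomial.X v * f ∈ (K.star E).rel k Finset.univ Q) :
    f ∈ (K.star (insert v E)).rel k Finset.univ Q := by
  refine mem_monoIdeal_of_X_mul_mem (fun s hs h1 h2 => ?_) h
  simp only [star, insert_union_eq, labels_insert_union hv] at hs h1 h2 ⊢
  exact hs h1 h2

variable [Fintype V]

theorem star_relSub_le_del (E : Finset V) (v : V) (Q P : Finset ι) :
    (K.star E).relSub a Q P ≤ (K.del E v).relSub a Q P :=
  relIdeal_mono (D := (K.star E).bad k Finset.univ) (D' := (K.del E v).bad k Finset.univ)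
    (star_rel_le_del E v) (monoIdeal_mono fun _ h h1 => h ⟨h1.1.1, h1.2⟩) Q P

theorem del_relSub_le (E : Finset V) (v : V) (Q P : Finset ι) :
    (K.del E v).relSub a Q P
      ≤ (K.star E).relSub a Q P ⊔ Ideal.span {MvPolynomial.X v} := by
  induction P using Finset.induction_on with
  | empty => simp only [SuppComplex.relSub, relIdeal_empty]; exact bad_del_le E v
  | insert p P hp ih =>
    simp only [SuppComplex.relSub, relIdeal_insert] at ih ⊢
    refine sup_le (ih.trans (sup_le_sup_right le_sup_left _)) ?_
    refine (Ideal.mul_mono_right (rel_del_le E v _)).trans ?_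
    rw [Ideal.mul_sup]
    exact sup_le (le_sup_of_le_left le_sup_right) (le_sup_of_le_right Ideal.mul_le_right)

/-- Multiplication by `X v` embeds the local module of the star of `insert v E` into that of the
star of `E` when the label of `v` is contained in the labels of `E`. -/
theorem mem_relSub_star_of_X_mul_mem (ha : ∀ v i, a v i ≠ 0 → i ∈ K.label v) {E : Finset V}
    {v : V} (hv : K.label v ⊆ K.labels E)
    (hreg : ∀ W, RegOn (linForm a) ⊤ ((K.del E v).bad k W) W) {Q P : Finset ι} (hPQ : P ⊆ Q)
    {f : MvPolynomial V k} (hf : f ∈ (K.star (insert v E)).rel k Finset.univ Q)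
    (h : MvPolynomial.X v * f ∈ (K.star E).relSub a Q P) :
    f ∈ (K.star (insert v E)).relSub a Q P := by
  induction P using Finset.induction_on generalizing f with
  | empty =>
    simp only [SuppComplex.relSub, relIdeal_empty] at h ⊢
    refine mem_monoIdeal_of_X_mul_mem (fun s hs h1 => hs ?_) h
    simpa only [star, insert_union_eq] using h1
  | insert p P hp ih =>
    have hpQ := hPQ (Finset.mem_insert_self p P)
    have hPQ' := (Finset.subset_insert p P).trans hPQ
    have hP : P ⊆ Q.erase p := fun q hq => Finset.mem_erase.2 ⟨fun h => hp (h ▸ hq), hPQ' hq⟩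
    rw [SuppComplex.relSub, relIdeal_insert] at h ⊢
    obtain ⟨m, hm, y, hy, hmy⟩ := Submodule.mem_sup.1 h
    obtain ⟨g, hg, rfl⟩ := Ideal.mem_span_singleton_mul.1 hy
    have h1 : linForm a p * g ∈ (K.del E v).relSub a Q P := by
      rw [← add_sub_cancel_left m (linForm a p * g), hmy]
      exact Ideal.sub_mem _ (Ideal.mem_sup_left (Ideal.mul_mem_right _ _ (X_mem_bad_del E v)))
        (star_relSub_le_del E v Q P hm)
    have h2 := del_relSub_le E v _ _ (SuppComplex.mem_relSub_of_mul_mem (compatible_del ha E v)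
      hreg hPQ' hp (star_rel_le_del E v _ hg) h1)
    obtain ⟨g', hg', z, hz, rfl⟩ := Submodule.mem_sup.1 h2
    obtain ⟨u, rfl⟩ := Ideal.mem_span_singleton.1 hz
    have hu : u ∈ (K.star (insert v E)).rel k Finset.univ (Q.erase p) :=
      mem_rel_star_of_X_mul_mem hv ((Submodule.add_mem_iff_right _
        (SuppComplex.relSub_le (compatible_star ha E) hP hg')).1 hg)
    have hθu : linForm a p * u ∈
        Ideal.span {linForm a p} * (K.star (insert v E)).rel k Finset.univ (Q.erase p) :=
      Ideal.mem_span_singleton_mul.2 ⟨u, hu, rfl⟩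
    have h3 := ih (f := f - linForm a p * u) hPQ' (Ideal.sub_mem _ hf
      (SuppComplex.linForm_mul_rel_le (compatible_star ha _) Q p hθu)) (by
        have : MvPolynomial.X v * (f - linForm a p * u) = m + linForm a p * g' := by
          linear_combination -hmy
        rw [this]
        refine Ideal.add_mem _ hm (mul_relIdeal_erase_le (fun Q p _ =>
          SuppComplex.linForm_mul_rel_le (compatible_star ha E) Q p) hpQ hp
          (Ideal.mem_span_singleton_mul.2 ⟨g', hg', rfl⟩)))
    rw [← sub_add_cancel f (linForm a p * u)]
    exact Ideal.add_mem _ (Ideal.mem_sup_left h3) (Ideal.mem_sup_right hθu)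

theorem mem_relSub_star_of_prod_mul_mem (ha : ∀ v i, a v i ≠ 0 → i ∈ K.label v)
    (hreg : ∀ E v, K.Face (insert v E) → v ∉ E → K.label v ⊆ K.labels E →
      ∀ W, RegOn (linForm a) ⊤ ((K.del E v).bad k W) W)
    {E B : Finset V} (hB : K.Face (B ∪ E)) (hd : Disjoint B E)
    (hl : ∀ v ∈ B, K.label v ⊆ K.labels E) {Q P : Finset ι} (hPQ : P ⊆ Q)
    {f : MvPolynomial V k} (hf : f ∈ (K.star (B ∪ E)).rel k Finset.univ Q)
    (h : (∏ v ∈ B, MvPolynomial.X v) * f ∈ (K.star E).relSub a Q P) :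
    f ∈ (K.star (B ∪ E)).relSub a Q P := by
  induction B using Finset.induction_on generalizing f with
  | empty => simpa using h
  | insert v B hv ih =>
    rw [Finset.disjoint_insert_left] at hd
    rw [Finset.prod_insert hv, mul_comm (MvPolynomial.X v), mul_assoc] at h
    rw [Finset.insert_union] at hf hB ⊢
    have hv' : K.label v ⊆ K.labels (B ∪ E) :=
      (hl v (Finset.mem_insert_self _ _)).trans (K.labels_mono Finset.subset_union_right)
    refine mem_relSub_star_of_X_mul_mem ha hv' (hreg _ _ hB ?_ hv') hPQ hf
      (ih (K.face_of_subset (Finset.subset_insert _ _) hB) hd.2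
        (fun w hw => hl w (Finset.mem_insert_of_mem hw)) ?_ h)
    · rw [Finset.mem_union, not_or]
      exact ⟨hv, hd.1⟩
    · refine X_mul_mem_monoIdeal (fun s hs h1 h2 => ?_) hf
      simp only [star, insert_union_eq] at hs h1 h2 ⊢
      exact hs h1 h2

theorem star_relSub_mono {E E' : Finset V} (h : E ⊆ E') (Q P : Finset ι) :
    (K.star E).relSub a Q P ≤ (K.star E').relSub a Q P := by
  refine relIdeal_mono (D := (K.star E).bad k Finset.univ) (D' := (K.star E').bad k Finset.univ)
    (J := (K.star E).rel k Finset.univ) (J' := (K.star E').rel k Finset.univ)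
    (fun Q => monoIdeal_mono fun s hs h1 _ => ?_)
    (monoIdeal_mono fun s hs h1 => hs ⟨?_, Finset.subset_univ _⟩) Q P
  · exact (hs (K.face_of_subset (Finset.union_subset_union_right h) h1)
      (Finset.subset_univ _)).trans (K.labels_mono (Finset.union_subset_union_right h))
  · exact K.face_of_subset (Finset.union_subset_union_right h) h1.1

theorem coeff_expOf_eq_zero {E B : Finset V} (hB : K.Face (B ∪ E))
    (hapex : ∀ v ∈ B, ∀ p, ∃ q, q ≠ p ∧ q ∉ K.labels (B.erase v ∪ E)) {P : Finset ι}
    {f : MvPolynomial V k} (hf : f ∈ (K.star E).relSub a Finset.univ P) :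
    MvPolynomial.coeff (expOf B) f = 0 := by
  induction P using Finset.induction_on generalizing f with
  | empty =>
    rw [SuppComplex.relSub, relIdeal_empty] at hf
    by_contra hne
    refine hf _ hne ⟨?_, Finset.subset_univ _⟩
    rwa [support_expOf]
  | insert p P hp ih =>
    rw [SuppComplex.relSub, relIdeal_insert] at hf
    obtain ⟨x, hx, y, hy, rfl⟩ := Submodule.mem_sup.1 hf
    obtain ⟨g, hg, rfl⟩ := Ideal.mem_span_singleton_mul.1 hy
    rw [MvPolynomial.coeff_add, ih hx, zero_add, linForm, Finset.sum_mul, MvPolynomial.coeff_sum]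
    refine Finset.sum_eq_zero fun v _ => ?_
    rw [mul_assoc, MvPolynomial.coeff_C_mul, MvPolynomial.coeff_X_mul', support_expOf]
    split_ifs with hv
    · suffices MvPolynomial.coeff (expOf B - Finsupp.single v 1) g = 0 by rw [this, mul_zero]
      by_contra hne
      obtain ⟨q, hqp, hq⟩ := hapex v hv p
      have := hg _ hne
      rw [support_expOf_tsub] at this
      refine hq (this ?_ (Finset.subset_univ _) (Finset.mem_erase.2 ⟨hqp, Finset.mem_univ _⟩))
      exact K.face_of_subset (Finset.union_subset_union_left (Finset.erase_subset _ _)) hB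
    · rw [mul_zero]

/-- If a face admits a full partition with blocks `F₁`, `F₂` and apices `B` none of which is
unique in its direction, then the corresponding coefficient of the Hilbert series of the local
module is nonzero. -/
theorem coeff_hilb_ne_zero (ha : ∀ v i, a v i ≠ 0 → i ∈ K.label v)
    (hreg : ∀ E v, K.Face (insert v E) → v ∉ E → K.label v ⊆ K.labels E →
      ∀ W, RegOn (linForm a) ⊤ ((K.del E v).bad k W) W)
    {E F₁ F₂ B : Finset V} (hface : K.Face (F₁ ∪ F₂ ∪ B ∪ E)) (hF₁ : Disjoint F₁ (F₂ ∪ E))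
    (hF₁B : Disjoint F₁ B) (hint : K.labels (F₁ ∪ B ∪ E) = Finset.univ)
    (hl : ∀ v ∈ F₁, K.label v ⊆ K.labels (F₂ ∪ E))
    (hapex : ∀ v ∈ B, ∀ p, ∃ q, q ≠ p ∧ q ∉ K.labels (B.erase v ∪ (F₁ ∪ (F₂ ∪ E)))) :
    PowerSeries.coeff (F₁.card + B.card)
      ((K.star E).hilb a Finset.univ Finset.univ) ≠ 0 := by
  intro h0
  have h1 : ((∏ v ∈ F₁, MvPolynomial.X v) * MvPolynomial.monomial (expOf B) 1
      : MvPolynomial V k) ∈ (K.star E).relSub a Finset.univ Finset.univ := by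
    rw [← prod_X_eq_monomial, ← Finset.prod_union hF₁B]
    refine SuppComplex.mem_relSub_of_coeff_hilb_eq_zero (compatible_star ha E) h0 ?_ ?_
    · rw [prod_X_eq_monomial]
      refine monomial_mem_monoIdeal fun _ _ => ?_
      rw [support_expOf]
      exact hint.symm.subset
    · rw [← Finset.card_union_of_disjoint hF₁B, Finset.card_eq_sum_ones]
      exact MvPolynomial.IsHomogeneous.prod _ _ _ fun v _ => MvPolynomial.isHomogeneous_X _ v
  have h2 := star_relSub_mono (Finset.subset_union_right : E ⊆ F₂ ∪ E) _ _ h1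
  have hsub : F₁ ∪ (F₂ ∪ E) ⊆ F₁ ∪ F₂ ∪ B ∪ E := by
    intro v; simp only [Finset.mem_union]; tauto
  have h3 := mem_relSub_star_of_prod_mul_mem ha hreg (K.face_of_subset hsub hface) hF₁ hl
    subset_rfl (monomial_mem_monoIdeal fun _ _ => ?_) h2
  · have h4 := coeff_expOf_eq_zero (K.face_of_subset ?_ hface) hapex h3
    · rw [MvPolynomial.coeff_monomial, if_pos rfl] at h4
      exact one_ne_zero h4
    · intro v; simp only [Finset.mem_union]; tauto
  · rw [support_expOf, ← hint]
    refine K.labels_mono ?_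
    intro v; simp only [Finset.mem_union]; tauto

end LabelledComplex

section Homology

variable {X k : Type} [Field k] {d : (X → k) →ₗ[k] (X → k)}

/-- The values of `d c` on `U` depend only on the values of `c` on `U`. -/
def ClosedOn (d : (X → k) →ₗ[k] (X → k)) (U : Set X) : Prop :=
  ∀ c, (∀ x ∈ U, c x = 0) → ∀ x ∈ U, d c x = 0

/-- The homology of the restriction of `d` to `U` is at most one-dimensional. -/
def HomologyLeOne (d : (X → k) →ₗ[k] (X → k)) (U : Set X) : Prop :=
  ∃ z, (∀ x ∈ U, d z x = 0) ∧
    ∀ c, (∀ x ∈ U, d c x = 0) → ∃ (a : k) (b : X → k), ∀ x ∈ U, c x = a * z x + d b x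

theorem ClosedOn.congr {U : Set X} (hU : ClosedOn d U) {c c' : X → k} (h : ∀ x ∈ U, c x = c' x)
    {x : X} (hx : x ∈ U) : d c x = d c' x := by
  have := hU (c - c') (fun x hx => by simp [h x hx]) x hx
  rwa [map_sub, Pi.sub_apply, sub_eq_zero] at this

theorem AcyclicOn.union (hd : ∀ c, d (d c) = 0) {U₁ U₂ : Set X} (h₁ : ClosedOn d U₁)
    (h₂ : ClosedOn d U₂) (a₁ : AcyclicOn d U₁) (a₂ : AcyclicOn d U₂)
    (a₀ : AcyclicOn d (U₁ ∩ U₂)) : AcyclicOn d (U₁ ∪ U₂) := by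
  intro c hc
  obtain ⟨b₁, hb₁⟩ := a₁ c fun x hx => hc x (Or.inl hx)
  obtain ⟨b₂, hb₂⟩ := a₂ c fun x hx => hc x (Or.inr hx)
  obtain ⟨e, he⟩ := a₀ (b₁ - b₂) fun x hx => by
    rw [map_sub, Pi.sub_apply, ← hb₁ x hx.1, ← hb₂ x hx.2, sub_self]
  refine ⟨fun x => if x ∈ U₁ then b₁ x else b₂ x + d e x, ?_⟩
  rintro x (hx | hx)
  · rw [hb₁ x hx]
    exact h₁.congr (fun y hy => by simp [hy]) hx
  · have : d (b₂ + d e) x = c x := by rw [map_add, hd, add_zero, hb₂ x hx]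
    rw [← this]
    refine h₂.congr (fun y hy => ?_) hx
    by_cases hy1 : y ∈ U₁
    · have := he y ⟨hy1, hy⟩
      simp only [Pi.sub_apply] at this
      simp only [hy1, if_true, Pi.add_apply]
      linear_combination -this
    · simp [hy1]

theorem HomologyLeOne.union (hd : ∀ c, d (d c) = 0) {U₁ U₂ : Set X} (h₁ : ClosedOn d U₁)
    (h₂ : ClosedOn d U₂) (a₁ : AcyclicOn d U₁) (a₂ : AcyclicOn d U₂)
    (a₀ : HomologyLeOne d (U₁ ∩ U₂)) : HomologyLeOne d (U₁ ∪ U₂) := by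
  obtain ⟨z₀, hz₀, H⟩ := a₀
  have hz : ∀ x ∈ U₂, (if x ∈ U₁ then 0 else d z₀ x) = d z₀ x := by
    intro x hx
    split_ifs with h
    · exact (hz₀ x ⟨h, hx⟩).symm
    · rfl
  refine ⟨fun x => if x ∈ U₁ then 0 else d z₀ x, ?_, fun c hc => ?_⟩
  · rintro x (hx | hx)
    · exact h₁ _ (fun y hy => if_pos hy) x hx
    · rw [h₂.congr (c' := d z₀) hz hx, hd]; rfl
  obtain ⟨b₁, hb₁⟩ := a₁ c fun x hx => hc x (Or.inl hx)
  obtain ⟨b₂, hb₂⟩ := a₂ c fun x hx => hc x (Or.inr hx)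
  obtain ⟨a, e, he⟩ := H (b₁ - b₂) fun x hx => by
    rw [map_sub, Pi.sub_apply, ← hb₁ x hx.1, ← hb₂ x hx.2, sub_self]
  refine ⟨-a, fun x => if x ∈ U₁ then b₁ x else b₂ x + d e x + a * z₀ x, ?_⟩
  rintro x (hx | hx)
  · dsimp only
    rw [hb₁ x hx, if_pos hx, mul_zero, zero_add]
    exact h₁.congr (fun y hy => by simp [hy]) hx
  · have h3 : d (b₂ + d e + a • z₀) x = c x + a * d z₀ x := by
      rw [map_add, map_add, hd, add_zero, map_smul, hb₂ x hx]; rfl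
    have h4 : d (fun x => if x ∈ U₁ then b₁ x else b₂ x + d e x + a * z₀ x) x
        = d (b₂ + d e + a • z₀) x := by
      refine h₂.congr (fun y hy => ?_) hx
      by_cases hy1 : y ∈ U₁
      · have := he y ⟨hy1, hy⟩
        simp only [Pi.sub_apply] at this
        simp only [hy1, if_true, Pi.add_apply, Pi.smul_apply, smul_eq_mul]
        linear_combination this
      · simp [hy1]
    dsimp only
    rw [h4, h3, hz x hx]
    ring

theorem AcyclicOn.of_homologyLeOne (hd : ∀ c, d (d c) = 0) {Q : Set X} {y : X}
    (hy : ∀ c, (∀ x ∈ Q, c x = 0) → d c y = 0) (hQ : HomologyLeOne d Q)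
    {t : X → k} (ht : ∀ x ∈ Q, d t x = 0) (hty : d t y = 1) : AcyclicOn d (insert y Q) := by
  have hy' : ∀ c c' : X → k, (∀ x ∈ Q, c x = c' x) → d c y = d c' y := by
    intro c c' h
    have := hy (c - c') fun x hx => by simp [h x hx]
    rwa [map_sub, Pi.sub_apply, sub_eq_zero] at this
  obtain ⟨z, hz, H⟩ := hQ
  have key : ∀ (c : X → k) (a : k) (b : X → k), (∀ x ∈ Q, c x = a * z x + d b x) →
      d c y = a * d z y := by
    intro c a b h
    rw [hy' c (a • z + d b) h, map_add, hd, add_zero, map_smul]; rfl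
  obtain ⟨a', b', h'⟩ := H t ht
  have hzy : d z y ≠ 0 := by
    intro h0
    have := key t a' b' h'
    rw [hty, h0, mul_zero] at this
    exact one_ne_zero this
  intro c hc
  obtain ⟨a, b, h⟩ := H c fun x hx => hc x (Set.mem_insert_of_mem _ hx)
  have ha : a = 0 := by
    have := key c a b h
    rw [hc y (Set.mem_insert _ _)] at this
    exact (mul_eq_zero.1 this.symm).resolve_right hzy
  subst ha
  refine ⟨b + (c y - d b y) • t, ?_⟩
  rintro x (rfl | hx)
  · simp [hty]
  · simp [ht x hx, h x hx]

theorem AcyclicOn.of_sub (hd : ∀ c, d (d c) = 0) {U U₁ : Set X} (h₁ : U₁ ⊆ U)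
    (a : AcyclicOn d U)
    (hk : ∀ c, (∀ x ∈ U₁, c x = 0) → (∀ x ∈ U, d c x = 0) →
      ∃ b : X → k, (∀ x ∈ U₁, b x = 0) ∧ ∀ x ∈ U, d b x = c x) : AcyclicOn d U₁ := by
  intro c hc
  obtain ⟨b, hb, hb'⟩ := hk (d c) hc fun x _ => by rw [hd]; rfl
  obtain ⟨e, he⟩ := a (c - b) fun x hx => by
    rw [map_sub, Pi.sub_apply, hb' x hx, sub_self]
  refine ⟨e, fun x hx => ?_⟩
  rw [← he x (h₁ hx), Pi.sub_apply, hb x hx, sub_zero]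

end Homology

section Hitting

variable {P ι k : Type} [Field k] {d : (Option P → k) →ₗ[k] (Option P → k)}
  {C : P → Set (ι → ℝ)}

/-- The indices of the sets `C p` that meet `A`, together with `none`. -/
def hitting (C : P → Set (ι → ℝ)) (A : Set (ι → ℝ)) : Set (Option P) :=
  {x | ∀ p, x = some p → (C p ∩ A).Nonempty}

theorem none_mem_hitting (C : P → Set (ι → ℝ)) (A : Set (ι → ℝ)) : none ∈ hitting C A :=
  fun _ h => by simp at h

theorem some_mem_hitting {A : Set (ι → ℝ)} {p : P} :
    some p ∈ hitting C A ↔ (C p ∩ A).Nonempty := by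
  simp [hitting]

theorem hitting_mono {A B : Set (ι → ℝ)} (h : A ⊆ B) : hitting C A ⊆ hitting C B :=
  fun _ hx p hp => (hx p hp).mono (Set.inter_subset_inter_right _ h)

/-- `d` only involves the values at `none` and at the indices of larger sets. -/
structure IsLocal (d : (Option P → k) →ₗ[k] (Option P → k)) (C : P → Set (ι → ℝ)) : Prop where
  sq : ∀ c, d (d c) = 0
  at_none : ∀ c, d c none = 0
  at_some : ∀ c p, c none = 0 → (∀ q, C p ⊆ C q → c (some q) = 0) → d c (some p) = 0

theorem IsLocal.closedOn (h : IsLocal d C) (A : Set (ι → ℝ)) : ClosedOn d (hitting C A) := by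
  rintro c hc (_ | p) hp
  · exact h.at_none c
  · refine h.at_some c p (hc _ (none_mem_hitting C A)) fun q hq => hc _ ?_
    rw [some_mem_hitting] at hp ⊢
    exact hp.mono (Set.inter_subset_inter_left _ hq)

theorem Convex.exists_apply_eq {A : Set (ι → ℝ)} (hA : Convex ℝ A) {a b : ι → ℝ} (ha : a ∈ A)
    (hb : b ∈ A) {i : ι} {r : ℝ} (hai : a i ≤ r) (hbi : r ≤ b i) : ∃ z ∈ A, z i = r :=
  hA.isPreconnected.intermediate_value ha hb (continuous_apply i).continuousOn ⟨hai, hbi⟩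

theorem exists_mem_chain_hitting_eq [Finite P] (hcl : ∀ p, IsClosed (C p))
    {c : Set (Set (ι → ℝ))} (hc : IsChain (· ⊆ ·) c) (hne : c.Nonempty)
    (hcpt : ∀ K ∈ c, IsCompact K) : ∃ K ∈ c, hitting C K = hitting C (⋂₀ c) := by
  have h1 : ∀ p, ∃ K ∈ c, (C p ∩ K).Nonempty → (C p ∩ ⋂₀ c).Nonempty := by
    intro p
    by_contra! hcon
    obtain ⟨K₀, hK₀⟩ := hne
    have hdir : DirectedOn (· ⊇ ·) ((C p ∩ ·) '' c) := by
      rintro _ ⟨K, hK, rfl⟩ _ ⟨L, hL, rfl⟩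
      rcases hc.total hK hL with h | h
      · exact ⟨_, ⟨K, hK, rfl⟩, subset_rfl, Set.inter_subset_inter_right _ h⟩
      · exact ⟨_, ⟨L, hL, rfl⟩, Set.inter_subset_inter_right _ h, subset_rfl⟩
    have := IsCompact.nonempty_sInter_of_directed_nonempty_isCompact_isClosed
      (S := (C p ∩ ·) '' c) (hS := ⟨⟨_, K₀, hK₀, rfl⟩⟩) hdir
      (by rintro _ ⟨K, hK, rfl⟩; exact (hcon K hK).1)
      (by rintro _ ⟨K, hK, rfl⟩; exact (hcpt K hK).inter_left (hcl p))
      (by rintro _ ⟨K, hK, rfl⟩; exact (hcl p).inter (hcpt K hK).isClosed)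
    obtain ⟨x, hx⟩ := this
    have : x ∈ C p ∩ ⋂₀ c := ⟨(hx _ ⟨K₀, hK₀, rfl⟩).1, fun K hK => (hx _ ⟨K, hK, rfl⟩).2⟩
    rw [(hcon K₀ hK₀).2] at this
    exact this
  choose f hf hf' using h1
  have h2 : ∃ K ∈ c, ∀ p, K ⊆ f p := by
    have : ∀ s : Set P, s.Finite → ∃ K ∈ c, ∀ p ∈ s, K ⊆ f p := by
      intro s hs
      induction s, hs using Set.Finite.induction_on with
      | empty => exact hne.imp fun K hK => ⟨hK, by simp⟩
      | @insert a s _ _ ih =>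
        obtain ⟨K, hK, h⟩ := ih
        rcases hc.total hK (hf a) with h' | h'
        · exact ⟨K, hK, by rintro p (rfl | hp); exacts [h', h p hp]⟩
        · exact ⟨f a, hf a, by rintro p (rfl | hp); exacts [subset_rfl, h'.trans (h p hp)]⟩
    obtain ⟨K, hK, h⟩ := this Set.univ Set.finite_univ
    exact ⟨K, hK, fun p => h p trivial⟩
  obtain ⟨K, hK, h⟩ := h2
  refine ⟨K, hK, subset_antisymm ?_ (hitting_mono (Set.sInter_subset_of_mem hK))⟩
  rintro (_ | p) hp
  · exact none_mem_hitting _ _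
  · rw [some_mem_hitting] at hp ⊢
    exact hf' p (hp.mono (Set.inter_subset_inter_right _ (h p)))

theorem AcyclicOn.hitting_of_convex [Finite P] (hd : IsLocal d C) (hcl : ∀ p, IsClosed (C p))
    (hcv : ∀ p, Convex ℝ (C p)) {K : Set (ι → ℝ)} (hK : IsCompact K) (hKc : Convex ℝ K)
    (hne : K.Nonempty) (h : ∀ x ∈ K, AcyclicOn d (hitting C {x})) :
    AcyclicOn d (hitting C K) := by
  by_contra hcon
  obtain ⟨m, ⟨hmK, hm, hmc, hmn, hma⟩, hmin⟩ := zorn_superset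
    {L | L ⊆ K ∧ IsCompact L ∧ Convex ℝ L ∧ L.Nonempty ∧ ¬AcyclicOn d (hitting C L)} (by
      intro c hc hchain
      rcases c.eq_empty_or_nonempty with rfl | hcn
      · exact ⟨K, ⟨subset_rfl, hK, hKc, hne, hcon⟩, by simp⟩
      obtain ⟨L, hL, hLc⟩ := exists_mem_chain_hitting_eq (C := C) hcl hchain hcn
        fun L hL => (hc hL).2.1
      have hdir : DirectedOn (· ⊇ ·) c := fun A hA B hB => by
        rcases hchain.total hA hB with h | h
        exacts [⟨A, hA, subset_rfl, h⟩, ⟨B, hB, h, subset_rfl⟩]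
      have : Nonempty c := hcn.to_subtype
      refine ⟨⋂₀ c, ⟨(Set.sInter_subset_of_mem hL).trans (hc hL).1, ?_, ?_, ?_, ?_⟩,
        fun A hA => Set.sInter_subset_of_mem hA⟩
      · exact (hc hL).2.1.of_isClosed_subset
          (isClosed_sInter fun A hA => (hc hA).2.1.isClosed) (Set.sInter_subset_of_mem hL)
      · exact convex_sInter fun A hA => (hc hA).2.2.1
      · exact IsCompact.nonempty_sInter_of_directed_nonempty_isCompact_isClosed hdir
          (fun A hA => (hc hA).2.2.2.1) (fun A hA => (hc hA).2.1)
          (fun A hA => (hc hA).2.1.isClosed)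
      · rw [← hLc]
        exact (hc hL).2.2.2.2)
  have hsub : ∀ L ⊆ m, IsCompact L → Convex ℝ L → L.Nonempty → L ≠ m →
      AcyclicOn d (hitting C L) := fun L hLm h1 h2 h3 h4 => by
    by_contra h5
    exact h4 (hLm.antisymm (hmin ⟨hLm.trans hmK, h1, h2, h3, h5⟩ hLm))
  obtain ⟨x, hx⟩ := hmn
  have hxy : ∃ y ∈ m, ∃ i, x i < y i ∨ y i < x i := by
    by_contra! hxy
    have : m = {x} := Set.eq_singleton_iff_unique_mem.2
      ⟨hx, fun y hy => funext fun i => le_antisymm (hxy y hy i).1 (hxy y hy i).2⟩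
    exact hma (this ▸ h x (hmK hx))
  obtain ⟨a, ha, b, hb, i, hab⟩ : ∃ a ∈ m, ∃ b ∈ m, ∃ i, a i < b i := by
    obtain ⟨y, hy, i, hi | hi⟩ := hxy
    exacts [⟨x, hx, y, hy, i, hi⟩, ⟨y, hy, x, hx, i, hi⟩]
  have hlin : IsLinearMap ℝ fun z : ι → ℝ => z i := ⟨fun _ _ => rfl, fun _ _ => rfl⟩
  set r := (a i + b i) / 2 with hr
  have har : a i < r := by rw [hr]; linarith
  have hrb : r < b i := by rw [hr]; linarith
  have hc1 : IsClosed {z : ι → ℝ | z i ≤ r} := isClosed_le (continuous_apply i) continuous_const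
  have hc2 : IsClosed {z : ι → ℝ | r ≤ z i} := isClosed_le continuous_const (continuous_apply i)
  have hv1 : Convex ℝ {z : ι → ℝ | z i ≤ r} := convex_halfSpace_le hlin r
  have hv2 : Convex ℝ {z : ι → ℝ | r ≤ z i} := convex_halfSpace_ge hlin r
  obtain ⟨e, he, her⟩ := hmc.exists_apply_eq ha hb har.le hrb.le
  have a1 := hsub (m ∩ {z | z i ≤ r}) Set.inter_subset_left (hm.inter_right hc1)
    (hmc.inter hv1) ⟨a, ha, har.le⟩ fun h => (h.symm ▸ hb : b ∈ m ∩ {z | z i ≤ r}).2.not_gt hrb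
  have a2 := hsub (m ∩ {z | r ≤ z i}) Set.inter_subset_left (hm.inter_right hc2)
    (hmc.inter hv2) ⟨b, hb, hrb.le⟩ fun h => (h.symm ▸ ha : a ∈ m ∩ {z | r ≤ z i}).2.not_gt har
  have a0 := hsub (m ∩ ({z | z i ≤ r} ∩ {z | r ≤ z i})) Set.inter_subset_left
    (hm.inter_right (hc1.inter hc2)) (hmc.inter (hv1.inter hv2)) ⟨e, he, her.le, her.ge⟩
    fun h => (h.symm ▸ hb : b ∈ m ∩ ({z | z i ≤ r} ∩ {z | r ≤ z i})).2.1.not_gt hrb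
  have e0 : hitting C (m ∩ {z | z i ≤ r}) ∩ hitting C (m ∩ {z | r ≤ z i})
      = hitting C (m ∩ ({z | z i ≤ r} ∩ {z | r ≤ z i})) := by
    refine subset_antisymm ?_ (Set.subset_inter (hitting_mono fun z hz => ⟨hz.1, hz.2.1⟩)
      (hitting_mono fun z hz => ⟨hz.1, hz.2.2⟩))
    rintro (_ | p) ⟨h1, h2⟩
    · exact none_mem_hitting _ _
    rw [some_mem_hitting] at h1 h2 ⊢
    obtain ⟨u, hu, hu', hu''⟩ := h1
    obtain ⟨v, hv, hv', hv''⟩ := h2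
    obtain ⟨z, hz, hzr⟩ := ((hcv p).inter hmc).exists_apply_eq ⟨hu, hu'⟩ ⟨hv, hv'⟩ hu'' hv''
    exact ⟨z, hz.1, hz.2, hzr.le, hzr.ge⟩
  have e1 : hitting C (m ∩ {z | z i ≤ r}) ∪ hitting C (m ∩ {z | r ≤ z i}) = hitting C m := by
    refine subset_antisymm (Set.union_subset (hitting_mono Set.inter_subset_left)
      (hitting_mono Set.inter_subset_left)) ?_
    rintro (_ | p) hp
    · exact Or.inl (none_mem_hitting _ _)
    rw [some_mem_hitting] at hp
    obtain ⟨z, hz, hz'⟩ := hp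
    rcases le_total (z i) r with h | h
    · exact Or.inl (some_mem_hitting.2 ⟨z, hz, hz', h⟩)
    · exact Or.inr (some_mem_hitting.2 ⟨z, hz, hz', h⟩)
  exact hma (e1 ▸ AcyclicOn.union hd.sq (hd.closedOn _) (hd.closedOn _) a1 a2 (e0 ▸ a0))

open MeasureTheory in
theorem exists_generic_dotProduct [Fintype ι] {𝒜 : Set (Set (ι → ℝ))} (h𝒜 : 𝒜.Finite) :
    ∃ z : ι → ℝ, ∀ A ∈ 𝒜, (∀ y ∈ A, 0 ≤ z ⬝ᵥ y) → ∀ y ∈ A, z ⬝ᵥ y = 0 → y = 0 := by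
  set D : Set (ι → ℝ) → Set (ι → ℝ) := fun A => {z | ∀ y ∈ A, 0 ≤ z ⬝ᵥ y} with hD
  have hDc : ∀ A, Convex ℝ (D A) := fun A x hx y hy a b ha hb _ w hw => by
    rw [add_dotProduct, smul_dotProduct, smul_dotProduct]
    exact add_nonneg (mul_nonneg ha (hx w hw)) (mul_nonneg hb (hy w hw))
  have hnull : volume (⋃ A ∈ 𝒜, frontier (D A)) = 0 :=
    (measure_biUnion_null_iff h𝒜.countable).2 fun A _ => (hDc A).addHaar_frontier volume
  obtain ⟨z, hz⟩ : ∃ z, z ∉ ⋃ A ∈ 𝒜, frontier (D A) := by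
    by_contra! h
    rw [Set.eq_univ_of_forall h] at hnull
    exact NeZero.ne _ hnull
  refine ⟨z, fun A hA hzA y hy hzy => ?_⟩
  by_contra hy0
  refine hz (Set.mem_biUnion hA ⟨subset_closure hzA, fun hint => ?_⟩)
  have ht : Filter.Tendsto (fun ε : ℝ => z - ε • y) (nhdsWithin 0 (Set.Ioi 0)) (nhds z) := by
    have : Continuous fun ε : ℝ => z - ε • y := by fun_prop
    simpa using (this.tendsto 0).mono_left nhdsWithin_le_nhds
  obtain ⟨ε, hε, hε0⟩ := ((ht.eventually (mem_interior_iff_mem_nhds.1 hint)).and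
    self_mem_nhdsWithin).exists
  have h1 := hε y hy
  rw [sub_dotProduct, hzy, smul_dotProduct, smul_eq_mul, zero_sub] at h1
  have h2 : 0 < y ⬝ᵥ y := by
    rw [dotProduct]
    obtain ⟨i, hi⟩ := Function.ne_iff.1 hy0
    exact Finset.sum_pos' (fun j _ => mul_self_nonneg _) ⟨i, Finset.mem_univ _,
      mul_self_pos.2 hi⟩
  nlinarith [mul_pos (Set.mem_Ioi.1 hε0) h2]

end Hitting

section Sphere

variable {P ι k : Type} [Field k] [Finite P] [Fintype ι]
  {d : (Option P → k) →ₗ[k] (Option P → k)} {C : P → Set (ι → ℝ)}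

theorem AcyclicOn.hitting_halfSpace {Y : Submodule ℝ (ι → ℝ)}
    (h : ∀ K : Set (ι → ℝ), K ⊆ Y → (0 : ι → ℝ) ∉ K → IsCompact K → Convex ℝ K → K.Nonempty →
      AcyclicOn d (hitting C K)) {z y₀ : ι → ℝ} (hy₀ : y₀ ∈ Y) (hz : 0 < z ⬝ᵥ y₀) :
    AcyclicOn d (hitting C {y | y ∈ Y ∧ 0 < z ⬝ᵥ y}) := by
  set A : Set (ι → ℝ) := {y | y ∈ Y ∧ 0 < z ⬝ᵥ y} with hA
  have hAc : Convex ℝ A := by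
    refine Y.convex.inter
      (convex_halfSpace_gt (f := fun y => z ⬝ᵥ y) ⟨fun x y => ?_, fun c x => ?_⟩ 0)
    · exact dotProduct_add _ _ _
    · exact dotProduct_smul _ _ _
  have hf : ∀ p : P, ∃ y ∈ A, (C p ∩ A).Nonempty → y ∈ C p := fun p => by
    by_cases hp : (C p ∩ A).Nonempty
    · obtain ⟨y, hy, hy'⟩ := hp
      exact ⟨y, hy', fun _ => hy⟩
    · exact ⟨y₀, ⟨hy₀, hz⟩, fun h => absurd h hp⟩
  choose f hfA hf using hf
  set K := convexHull ℝ (insert y₀ (Set.range f)) with hK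
  have hKA : K ⊆ A := convexHull_min (Set.insert_subset ⟨hy₀, hz⟩ (Set.range_subset_iff.2 hfA)) hAc
  have e : hitting C K = hitting C A := by
    refine subset_antisymm (hitting_mono hKA) ?_
    rintro (_ | p) hp
    · exact none_mem_hitting _ _
    · rw [some_mem_hitting] at hp ⊢
      exact ⟨f p, hf p hp, subset_convexHull ℝ _ (Or.inr ⟨p, rfl⟩)⟩
  rw [← e]
  refine h K (fun y hy => (hKA hy).1) (fun h0 => ?_)
    (((Set.finite_range f).insert y₀).isCompact_convexHull ℝ) (convex_convexHull ℝ _)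
    ⟨y₀, subset_convexHull ℝ _ (Or.inl rfl)⟩
  have := (hKA h0).2
  simp at this

theorem HomologyLeOne.hitting_sphere (hd : IsLocal d C) (hcv : ∀ p, Convex ℝ (C p))
    (hsc : ∀ p, ∀ y ∈ C p, ∀ r : ℝ, 0 < r → r • y ∈ C p) (Y : Submodule ℝ (ι → ℝ))
    (hsal : ∀ p, ∀ y ∈ C p, -y ∈ C p → y ∈ Y → y = 0)
    (h : ∀ K : Set (ι → ℝ), K ⊆ Y → (0 : ι → ℝ) ∉ K → IsCompact K → Convex ℝ K → K.Nonempty →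
      AcyclicOn d (hitting C K)) :
    HomologyLeOne d (hitting C {y | y ∈ Y ∧ y ≠ 0}) := by
  induction Y using WellFoundedLT.induction with
  | ind Y ih =>
  by_cases hY : Y = ⊥
  · subst hY
    have hU : ∀ x ∈ hitting C {y | y ∈ (⊥ : Submodule ℝ (ι → ℝ)) ∧ y ≠ 0}, x = none := by
      rintro (_ | p) hp
      · rfl
      · obtain ⟨y, -, hy, hy'⟩ := some_mem_hitting.1 hp
        exact absurd ((Submodule.mem_bot ℝ).1 hy) hy'
    refine ⟨fun _ => 1, fun x hx => ?_, fun c _ => ⟨c none, 0, fun x hx => ?_⟩⟩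
    · rw [hU x hx, hd.at_none]
    · rw [hU x hx, map_zero]; simp
  obtain ⟨y₀, hy₀, hy₀'⟩ := Submodule.exists_mem_ne_zero_of_ne_bot hY
  obtain ⟨z, hz⟩ := exists_generic_dotProduct (𝒜 := insert {y₀, -y₀}
    (Set.range (fun p => C p ∩ Y) ∪ Set.range (fun p => -(C p ∩ Y))))
    (((Set.finite_range _).union (Set.finite_range _)).insert _)
  have hzy : z ⬝ᵥ y₀ ≠ 0 := fun h0 => hy₀' <| hz _ (Set.mem_insert _ _) (by simp [h0]) _
    (Set.mem_insert _ _) h0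
  have hpos : ∀ p, ∀ y ∈ C p, y ∈ Y → y ≠ 0 → z ⬝ᵥ y = 0 → ∃ v ∈ C p, v ∈ Y ∧ z ⬝ᵥ v < 0 := by
    intro p y hy hyY hy0 hzy
    by_contra! hcon
    exact hy0 (hz (C p ∩ Y) (Or.inr (Or.inl ⟨p, rfl⟩)) (fun v hv => hcon v hv.1 hv.2) y
      ⟨hy, hyY⟩ hzy)
  have hneg : ∀ p, ∀ y ∈ C p, y ∈ Y → y ≠ 0 → z ⬝ᵥ y = 0 → ∃ v ∈ C p, v ∈ Y ∧ 0 < z ⬝ᵥ v := by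
    intro p y hy hyY hy0 hzy
    by_contra! hcon
    refine hy0 (neg_eq_zero.1 (hz (-(C p ∩ Y)) (Or.inr (Or.inr ⟨p, rfl⟩)) (fun v hv => ?_) (-y)
      (by simpa using ⟨hy, hyY⟩) (by simpa using hzy)))
    have := hcon (-v) hv.1 hv.2
    simpa using this
  let ℓ : (ι → ℝ) →ₗ[ℝ] ℝ :=
    { toFun := fun y => z ⬝ᵥ y
      map_add' := dotProduct_add z
      map_smul' := fun r y => dotProduct_smul r z y }
  have hℓ : ∀ y, y ∈ LinearMap.ker ℓ ↔ z ⬝ᵥ y = 0 := fun y => LinearMap.mem_ker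
  have hlt : Y ⊓ LinearMap.ker ℓ < Y :=
    inf_le_left.lt_of_ne fun he => hzy ((hℓ _).1 (he.symm ▸ hy₀ : y₀ ∈ Y ⊓ _).2)
  have a0 := ih _ hlt (fun p y hy hy' hyY => hsal p y hy hy' hyY.1)
    fun K hK => h K fun y hy => (hK hy).1
  obtain ⟨y₁, hy₁, hzy₁⟩ : ∃ y₁ ∈ Y, 0 < z ⬝ᵥ y₁ := by
    rcases lt_or_gt_of_ne hzy with h0 | h0
    exacts [⟨-y₀, Y.neg_mem hy₀, by simpa using h0⟩, ⟨y₀, hy₀, h0⟩]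
  have a1 := AcyclicOn.hitting_halfSpace h hy₁ hzy₁
  have a2 := AcyclicOn.hitting_halfSpace h (z := -z) (Y.neg_mem hy₁) (by simpa using hzy₁)
  simp only [neg_dotProduct, Left.neg_pos_iff] at a2
  have e0 : hitting C {y | y ∈ Y ∧ 0 < z ⬝ᵥ y} ∩ hitting C {y | y ∈ Y ∧ z ⬝ᵥ y < 0}
      = hitting C {y | y ∈ Y ⊓ LinearMap.ker ℓ ∧ y ≠ 0} := by
    ext (_ | p)
    · simp [none_mem_hitting]
    rw [Set.mem_inter_iff, some_mem_hitting, some_mem_hitting, some_mem_hitting]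
    constructor
    · rintro ⟨⟨u, hu, huY, hzu⟩, v, hv, hvY, hzv⟩
      have hu' := hsc p u hu _ (neg_pos.2 hzv)
      have hv' := hsc p v hv _ hzu
      refine ⟨(2⁻¹ : ℝ) • (-(z ⬝ᵥ v)) • u + (2⁻¹ : ℝ) • (z ⬝ᵥ u) • v,
        hcv p hu' hv' (by norm_num) (by norm_num) (by norm_num),
        ⟨Y.add_mem (Y.smul_mem _ (Y.smul_mem _ huY)) (Y.smul_mem _ (Y.smul_mem _ hvY)), ?_⟩,
        fun h0 => ?_⟩
      · show _ ∈ LinearMap.ker ℓ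
        rw [hℓ]
        simp only [dotProduct_add, dotProduct_smul, smul_eq_mul]
        ring
      · rw [← smul_add, smul_eq_zero_iff_right (by norm_num), add_eq_zero_iff_neg_eq] at h0
        have := hsal p _ hu' (h0 ▸ hv') (Y.smul_mem _ huY)
        rw [smul_eq_zero_iff_right (by linarith)] at this
        simp [this] at hzu
    · rintro ⟨y, hy, ⟨hyY, hyz⟩, hy0⟩
      have hyz' := (hℓ y).1 hyz
      exact ⟨hneg p y hy hyY hy0 hyz', hpos p y hy hyY hy0 hyz'⟩
  have e1 : hitting C {y | y ∈ Y ∧ 0 < z ⬝ᵥ y} ∪ hitting C {y | y ∈ Y ∧ z ⬝ᵥ y < 0}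
      = hitting C {y | y ∈ Y ∧ y ≠ 0} := by
    refine subset_antisymm (Set.union_subset (hitting_mono ?_) (hitting_mono ?_)) ?_
    · rintro y ⟨hy, hy'⟩
      exact ⟨hy, fun h0 => by simp [h0] at hy'⟩
    · rintro y ⟨hy, hy'⟩
      exact ⟨hy, fun h0 => by simp [h0] at hy'⟩
    rintro (_ | p) hp
    · exact Or.inl (none_mem_hitting _ _)
    obtain ⟨y, hy, hyY, hy0⟩ := some_mem_hitting.1 hp
    rcases lt_trichotomy (z ⬝ᵥ y) 0 with h0 | h0 | h0
    · exact Or.inr (some_mem_hitting.2 ⟨y, hy, hyY, h0⟩)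
    · exact Or.inl (some_mem_hitting.2 (hneg p y hy hyY hy0 h0))
    · exact Or.inl (some_mem_hitting.2 ⟨y, hy, hyY, h0⟩)
  exact e1 ▸ HomologyLeOne.union hd.sq (hd.closedOn _) (hd.closedOn _) a1 a2 (e0 ▸ a0)

end Sphere

/-- A simplicial fan supported on the nonnegative orthant, with an abstract vertex set. -/
structure GeomFan (V ι : Type) extends LabelledComplex V ι where
  pos : V → ι → ℝ
  pos_nonneg : ∀ v i, 0 ≤ pos v i
  mem_label : ∀ {v i}, i ∈ label v ↔ pos v i ≠ 0
  indep : ∀ {s}, Face s → LinearIndependent ℝ fun v : s => pos v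
  covers : ∀ x : ι → ℝ, (∀ i, 0 ≤ x i) → ∃ s, Face s ∧ ∃ lam : V → ℝ, (∀ v ∈ s, 0 ≤ lam v) ∧
    x = ∑ v ∈ s, lam v • pos v
  inter : ∀ {s t} {lam mu : V → ℝ}, Face s → Face t → (∀ v ∈ s, 0 ≤ lam v) →
    (∀ v ∈ t, 0 ≤ mu v) → ∑ v ∈ s, lam v • pos v = ∑ v ∈ t, mu v • pos v →
    ∃ nu : V → ℝ, ∑ v ∈ s, lam v • pos v = ∑ v ∈ s ∩ t, nu v • pos v

namespace GeomFan

variable {V ι : Type} (M : GeomFan V ι)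

/-- The linear combination of the vertices of `s` with coefficients `lam`. -/
def comb (s : Finset V) (lam : V → ℝ) : ι → ℝ := ∑ v ∈ s, lam v • M.pos v

theorem comb_apply (s : Finset V) (lam : V → ℝ) (i : ι) :
    M.comb s lam i = ∑ v ∈ s, lam v * M.pos v i := by simp [comb]

theorem comb_add (s : Finset V) (lam mu : V → ℝ) :
    M.comb s (fun v => lam v + mu v) = M.comb s lam + M.comb s mu := by
  simp only [comb, add_smul, Finset.sum_add_distrib]

theorem comb_smul (s : Finset V) (r : ℝ) (lam : V → ℝ) :
    M.comb s (fun v => r * lam v) = r • M.comb s lam := by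
  simp only [comb, mul_smul, Finset.smul_sum]

theorem comb_extend {s t : Finset V} (hst : s ⊆ t) (lam : V → ℝ) :
    M.comb t (fun v => if v ∈ s then lam v else 0) = M.comb s lam := by
  simp only [comb, ite_smul, zero_smul]
  rw [← Finset.sum_filter, Finset.filter_mem_eq_inter, Finset.inter_eq_right.2 hst]

theorem comb_congr {s : Finset V} {lam mu : V → ℝ} (h : ∀ v ∈ s, lam v = mu v) :
    M.comb s lam = M.comb s mu := Finset.sum_congr rfl fun v hv => by rw [h v hv]

theorem exists_comb_eq {s : Finset V} (c : s → ℝ) :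
    ∃ lam : V → ℝ, (∀ v : s, lam v = c v) ∧ M.comb s lam = ∑ v, c v • M.pos v := by
  have h : ∀ v : s, (if h : (v : V) ∈ s then c ⟨v, h⟩ else 0) = c v := fun v => dif_pos v.2
  refine ⟨fun v => if h : v ∈ s then c ⟨v, h⟩ else 0, h, ?_⟩
  exact (Finset.sum_coe_sort s _).symm.trans (Finset.sum_congr rfl fun v _ => by dsimp only; rw [h])

variable {M}

theorem eq_of_comb_eq {s : Finset V} (hs : M.Face s) {lam mu : V → ℝ}
    (h : M.comb s lam = M.comb s mu) : ∀ v ∈ s, lam v = mu v := by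
  intro v hv
  have := Fintype.linearIndependent_iff.1 (M.indep hs) (fun v => lam v - mu v) (by
    simp only [sub_smul, Finset.sum_sub_distrib]
    rw [Finset.sum_coe_sort s fun v => lam v • M.pos v,
      Finset.sum_coe_sort s fun v => mu v • M.pos v]
    exact sub_eq_zero.2 h) ⟨v, hv⟩
  exact sub_eq_zero.1 this

theorem mem_span_iff {s : Finset V} {x : ι → ℝ} :
    x ∈ Submodule.span ℝ (Set.range fun v : s => M.pos v) ↔ ∃ lam, x = M.comb s lam := by
  rw [Submodule.mem_span_range_iff_exists_fun]
  constructor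
  · rintro ⟨c, rfl⟩
    obtain ⟨lam, -, h⟩ := M.exists_comb_eq c
    exact ⟨lam, h.symm⟩
  · rintro ⟨lam, rfl⟩
    exact ⟨fun v => lam v, Finset.sum_coe_sort s fun v => lam v • M.pos v⟩

variable (M) in
/-- The combinations of the vertices of `s` in which the vertices outside of `r` have nonnegative
coefficients. -/
def coneRel (s r : Finset V) : Set (ι → ℝ) :=
  {x | ∃ lam : V → ℝ, (∀ v ∈ s, v ∉ r → 0 ≤ lam v) ∧ x = M.comb s lam}

theorem mem_coneRel_empty {s : Finset V} {x : ι → ℝ} : x ∈ M.coneRel s ∅ ↔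
    ∃ lam : V → ℝ, (∀ v ∈ s, 0 ≤ lam v) ∧ x = M.comb s lam := by
  simp [coneRel]

theorem coneRel_mono {s t : Finset V} (h : s ⊆ t) (r : Finset V) :
    M.coneRel s r ⊆ M.coneRel t r := by
  rintro _ ⟨lam, hlam, rfl⟩
  refine ⟨_, fun v _ hv => ?_, (M.comb_extend h lam).symm⟩
  split_ifs with hvs
  exacts [hlam v hvs hv, le_rfl]

theorem convex_coneRel (s r : Finset V) : Convex ℝ (M.coneRel s r) := by
  rintro _ ⟨lam, hlam, rfl⟩ _ ⟨mu, hmu, rfl⟩ a b ha hb _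
  refine ⟨fun v => a * lam v + b * mu v, fun v hv hvr => ?_, ?_⟩
  · exact add_nonneg (mul_nonneg ha (hlam v hv hvr)) (mul_nonneg hb (hmu v hv hvr))
  · rw [comb_add, comb_smul, comb_smul]

theorem smul_mem_coneRel {s r : Finset V} {y : ι → ℝ} (hy : y ∈ M.coneRel s r) {c : ℝ}
    (hc : 0 < c) : c • y ∈ M.coneRel s r := by
  obtain ⟨lam, hlam, rfl⟩ := hy
  exact ⟨fun v => c * lam v, fun v hv hvr => mul_nonneg hc.le (hlam v hv hvr),
    (M.comb_smul s c lam).symm⟩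

theorem mem_span_of_neg_mem_coneRel {s r : Finset V} (hs : M.Face s) (hrs : r ⊆ s) {y : ι → ℝ}
    (hy : y ∈ M.coneRel s r) (hy' : -y ∈ M.coneRel s r) :
    y ∈ Submodule.span ℝ (Set.range fun v : r => M.pos v) := by
  obtain ⟨lam, hlam, rfl⟩ := hy
  obtain ⟨mu, hmu, h⟩ := hy'
  have h1 : M.comb s mu = M.comb s fun v => (-1) * lam v := by rw [comb_smul, ← h]; simp
  have h2 := eq_of_comb_eq hs h1
  refine mem_span_iff.2 ⟨lam, ?_⟩
  rw [← M.comb_extend hrs]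
  refine M.comb_congr fun v hv => ?_
  split_ifs with hvr
  · rfl
  · have := hlam v hv hvr
    have := hmu v hv hvr
    have := h2 v hv
    linarith

theorem isClosed_coneRel [Finite ι] {s : Finset V} (hs : M.Face s) (r : Finset V) :
    IsClosed (M.coneRel s r) := by
  let L : (s → ℝ) →ₗ[ℝ] (ι → ℝ) := Fintype.linearCombination ℝ fun v : s => M.pos v
  have hL : LinearMap.ker L = ⊥ := by
    rw [LinearMap.ker_eq_bot']
    intro c hc
    exact funext (Fintype.linearIndependent_iff.1 (M.indep hs) c
      (by rwa [Fintype.linearCombination_apply] at hc))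
  have hcl := LinearMap.isClosedEmbedding_of_injective hL
  have h1 : IsClosed {c : s → ℝ | ∀ v : s, (v : V) ∉ r → 0 ≤ c v} := by
    simp only [Set.ofPred_forall]
    exact isClosed_iInter fun v => isClosed_iInter fun _ =>
      isClosed_le continuous_const (continuous_apply v)
  convert hcl.isClosedMap _ h1
  ext x
  constructor
  · rintro ⟨lam, hlam, rfl⟩
    refine ⟨fun v => lam v, fun v => hlam v v.2, ?_⟩
    rw [Fintype.linearCombination_apply]
    exact Finset.sum_coe_sort s fun v => lam v • M.pos v
  · rintro ⟨c, hc, rfl⟩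
    obtain ⟨lam, hlam, h⟩ := M.exists_comb_eq c
    refine ⟨lam, fun v hv hvr => ?_, ?_⟩
    · rw [hlam ⟨v, hv⟩]
      exact hc ⟨v, hv⟩ hvr
    · rw [Fintype.linearCombination_apply, h]

variable (M) in
/-- `x` lies in the relative interior of the cone over the face `r`. -/
def IsCarrier (r : Finset V) (x : ι → ℝ) : Prop :=
  M.Face r ∧ ∃ lam : V → ℝ, (∀ v ∈ r, 0 < lam v) ∧ x = M.comb r lam

theorem exists_isCarrier {x : ι → ℝ} (hx : ∀ i, 0 ≤ x i) : ∃ r, M.IsCarrier r x := by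
  obtain ⟨s, hs, lam, hlam, rfl⟩ := M.covers x hx
  refine ⟨{v ∈ s | 0 < lam v}, M.face_of_subset (Finset.filter_subset _ _) hs, lam,
    fun v hv => (Finset.mem_filter.1 hv).2, ?_⟩
  rw [← M.comb_extend (Finset.filter_subset _ s)]
  refine M.comb_congr fun v hv => ?_
  split_ifs with h
  · rfl
  · exact le_antisymm (not_lt.1 fun h' => h (Finset.mem_filter.2 ⟨hv, h'⟩)) (hlam v hv)

theorem IsCarrier.mem_coneRel_iff {r : Finset V} {x : ι → ℝ} (h : M.IsCarrier r x) {t : Finset V}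
    (ht : M.Face t) : x ∈ M.coneRel t ∅ ↔ r ⊆ t := by
  obtain ⟨hr, lam, hlam, rfl⟩ := h
  constructor
  · intro hx v hv
    obtain ⟨mu, hmu, he⟩ := mem_coneRel_empty.1 hx
    obtain ⟨nu, hnu⟩ := M.inter hr ht (fun v hv => (hlam v hv).le) hmu he
    change M.comb r lam = M.comb (r ∩ t) nu at hnu
    rw [← M.comb_extend Finset.inter_subset_left] at hnu
    have h1 := eq_of_comb_eq hr hnu v hv
    by_contra hvt
    rw [if_neg fun h => hvt (Finset.mem_inter.1 h).2] at h1
    exact (hlam v hv).ne' h1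
  · intro hrt
    exact coneRel_mono hrt _ (mem_coneRel_empty.2 ⟨lam, fun v hv => (hlam v hv).le, rfl⟩)

theorem IsCarrier.mem_labels_iff {r : Finset V} {x : ι → ℝ} (h : M.IsCarrier r x) {i : ι} :
    i ∈ M.labels r ↔ x i ≠ 0 := by
  obtain ⟨hr, lam, hlam, rfl⟩ := h
  rw [comb_apply, Ne, Finset.sum_eq_zero_iff_of_nonneg
    fun v hv => mul_nonneg (hlam v hv).le (M.pos_nonneg v i)]
  simp only [LabelledComplex.labels, Finset.mem_biUnion, M.mem_label, mul_eq_zero]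
  push Not
  exact exists_congr fun v => and_congr_right fun hv => by simp [(hlam v hv).ne']

theorem isCarrier_comb_one {r : Finset V} (hr : M.Face r) : M.IsCarrier r (M.comb r fun _ => 1) :=
  ⟨hr, _, fun _ _ => one_pos, rfl⟩

theorem comb_eq_zero_off {s : Finset V} {W : Finset ι} (h : M.labels s ⊆ W) (lam : V → ℝ) {i : ι}
    (hi : i ∉ W) : M.comb s lam i = 0 := by
  rw [comb_apply]
  refine Finset.sum_eq_zero fun v hv => ?_
  have : ¬M.pos v i ≠ 0 := fun h0 => hi (h (Finset.mem_biUnion.2 ⟨v, hv, M.mem_label.2 h0⟩))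
  rw [not_not.1 this, mul_zero]

end GeomFan

/-- The vectors that vanish off `W`. -/
def vanishOff {ι : Type} (W : Finset ι) : Submodule ℝ (ι → ℝ) where
  carrier := {y | ∀ i ∉ W, y i = 0}
  zero_mem' _ _ := rfl
  add_mem' ha hb i hi := by rw [Pi.add_apply, ha i hi, hb i hi, add_zero]
  smul_mem' c x hx i hi := by rw [Pi.smul_apply, hx i hi, smul_zero]

theorem finrank_vanishOff {ι : Type} (W : Finset ι) :
    Module.finrank ℝ (vanishOff W) = W.card := by
  let e : vanishOff W ≃ₗ[ℝ] (W → ℝ) :=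
    { toFun := fun y i => y.1 i
      map_add' := fun _ _ => rfl
      map_smul' := fun _ _ => rfl
      invFun := fun f => ⟨fun i => if h : i ∈ W then f ⟨i, h⟩ else 0, fun i hi => dif_neg hi⟩
      left_inv := fun y => Subtype.ext <| funext fun i => by
        by_cases hi : i ∈ W
        · simp [hi]
        · simp [hi, y.2 i hi]
      right_inv := fun f => funext fun i => by simp }
  rw [e.finrank_eq, Module.finrank_fintype_fun_eq_card, Fintype.card_coe]

namespace GeomFan

open Filter Topology

variable {V ι : Type} {M : GeomFan V ι} {W : Finset ι}

theorem span_le {s : Finset V} (h : M.labels s ⊆ W) :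
    Submodule.span ℝ (Set.range fun v : s => M.pos v) ≤ vanishOff W := by
  intro x hx
  obtain ⟨lam, rfl⟩ := mem_span_iff.1 hx
  exact fun i hi => comb_eq_zero_off h lam hi

theorem finrank_span {s : Finset V} (hs : M.Face s) :
    Module.finrank ℝ (Submodule.span ℝ (Set.range fun v : s => M.pos v)) = s.card := by
  rw [finrank_span_eq_card (M.indep hs), Fintype.card_coe]

theorem mem_coneRel_of_add {r τ : Finset V} (hrτ : r ⊆ τ) {y : ι → ℝ} {ε : ℝ} (hε : 0 < ε)
    (h : M.comb r (fun _ => 1) + ε • y ∈ M.coneRel τ ∅) : y ∈ M.coneRel τ r := by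
  obtain ⟨lam, hlam, he⟩ := mem_coneRel_empty.1 h
  refine ⟨fun v => ε⁻¹ * (lam v + (-1) * (if v ∈ r then 1 else 0)), fun v hv hvr => ?_, ?_⟩
  · simp only [hvr, if_false, mul_zero, add_zero]
    exact mul_nonneg (inv_nonneg.2 hε.le) (hlam v hv)
  · rw [comb_smul, comb_add, comb_smul, M.comb_extend hrτ, ← he, add_comm, neg_one_smul,
      neg_add_cancel_left, inv_smul_smul₀ hε.ne']

theorem comb_one_pos {r : Finset V} (hr : M.Face r) {i : ι} (hi : i ∈ M.labels r) :
    0 < M.comb r (fun _ => 1) i := by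
  refine lt_of_le_of_ne ?_ (Ne.symm ((isCarrier_comb_one hr).mem_labels_iff.1 hi))
  rw [comb_apply]
  exact Finset.sum_nonneg fun v _ => mul_nonneg zero_le_one (M.pos_nonneg v i)

theorem coneRel_self (r : Finset V) :
    M.coneRel r r = Submodule.span ℝ (Set.range fun v : r => M.pos v) := by
  ext x
  rw [SetLike.mem_coe, mem_span_iff]
  exact ⟨fun ⟨lam, _, h⟩ => ⟨lam, h⟩, fun ⟨lam, h⟩ => ⟨lam, fun v hv hv' => absurd hv hv', h⟩⟩

theorem exists_notMem_span {s : Finset V} (hs : M.Face s) (h : M.labels s ⊆ W)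
    (hc : s.card < W.card) :
    ∃ y ∈ vanishOff W, y ∉ Submodule.span ℝ (Set.range fun v : s => M.pos v) := by
  refine SetLike.exists_of_lt ((span_le h).lt_of_ne fun he => hc.ne ?_)
  rw [← finrank_span hs, he, finrank_vanishOff]

section

variable [Fintype ι]

theorem card_le {s : Finset V} (hs : M.Face s) (h : M.labels s ⊆ W) : s.card ≤ W.card := by
  rw [← finrank_span hs, ← finrank_vanishOff]
  exact Submodule.finrank_mono (span_le h)

theorem span_eq {s : Finset V} (hs : M.Face s) (h : M.labels s ⊆ W) (hc : s.card = W.card) :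
    Submodule.span ℝ (Set.range fun v : s => M.pos v) = vanishOff W :=
  Submodule.eq_of_le_of_finrank_le (span_le h) (by rw [finrank_span hs, finrank_vanishOff, hc])

end

variable [Fintype V]

variable (M W) in
/-- The faces with set of labels `W`. -/
def cells : Finset (Finset V) := {τ | M.Face τ ∧ M.labels τ = W}

theorem mem_cells {τ : Finset V} : τ ∈ M.cells W ↔ M.Face τ ∧ M.labels τ = W := by
  simp [cells]

theorem eventually_mem_coneRel {r τ : Finset V} (hrτ : r ⊆ τ) {y : ι → ℝ}
    (hy : y ∈ M.coneRel τ r) :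
    ∀ᶠ ε in 𝓝[>] (0 : ℝ), M.comb r (fun _ => 1) + ε • y ∈ M.coneRel τ ∅ := by
  obtain ⟨mu, hmu, rfl⟩ := hy
  have h1 : ∀ᶠ ε in 𝓝[>] (0 : ℝ), ∀ v : V, 0 < 1 + ε * mu v := by
    refine eventually_all.2 fun v => ?_
    have : Continuous fun ε : ℝ => 1 + ε * mu v := by fun_prop
    exact nhdsWithin_le_nhds ((this.tendsto 0).eventually_const_lt (by simp))
  filter_upwards [h1, self_mem_nhdsWithin] with ε hε hε0
  refine mem_coneRel_empty.2 ⟨fun v => (if v ∈ r then 1 else 0) + ε * mu v, fun v hv => ?_, ?_⟩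
  · dsimp only
    split_ifs with hvr
    · exact (hε v).le
    · rw [zero_add]
      exact mul_nonneg (le_of_lt hε0) (hmu v hv hvr)
  · rw [comb_add, comb_smul, M.comb_extend hrτ]

theorem exists_isCarrier_of_pos {x : ι → ℝ} (h : ∀ i ∈ W, 0 < x i) (h' : ∀ i ∉ W, x i = 0) :
    ∃ r ∈ M.cells W, M.IsCarrier r x := by
  obtain ⟨r, hr⟩ := exists_isCarrier (M := M) (x := x) fun i => by
    by_cases hi : i ∈ W
    exacts [(h i hi).le, (h' i hi).ge]
  refine ⟨r, mem_cells.2 ⟨hr.1, Finset.ext fun i => ?_⟩, hr⟩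
  rw [hr.mem_labels_iff]
  by_cases hi : i ∈ W
  · simp [hi, (h i hi).ne']
  · simp [hi, h' i hi]

theorem mem_cells_of_between {r s t : Finset V} (hr : r ∈ M.cells W) (ht : t ∈ M.cells W)
    (hrs : r ⊆ s) (hst : s ⊆ t) : s ∈ M.cells W := by
  rw [mem_cells] at hr ht ⊢
  refine ⟨M.face_of_subset hst ht.1, ?_⟩
  exact ((M.labels_mono hst).trans ht.2.subset).antisymm
    (hr.2.symm.subset.trans (M.labels_mono hrs))

variable [Fintype ι]

theorem eventually_subset {r : Finset V} (hr : M.Face r) :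
    ∀ᶠ x in 𝓝 (M.comb r fun _ => 1), ∀ τ, M.Face τ → x ∈ M.coneRel τ ∅ → r ⊆ τ := by
  refine eventually_all.2 fun τ => ?_
  by_cases hτ : M.Face τ
  · by_cases h : r ⊆ τ
    · exact Eventually.of_forall fun _ _ _ => h
    · have := (isClosed_coneRel hτ ∅).isOpen_compl.mem_nhds
        (fun h' => h (((isCarrier_comb_one hr).mem_coneRel_iff hτ).1 h'))
      filter_upwards [this] with x hx _ hx'
      exact absurd hx' hx
  · exact Eventually.of_forall fun _ h => absurd h hτ

theorem exists_cell_mem_coneRel_iff {r : Finset V} (hr : r ∈ M.cells W) {y : ι → ℝ}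
    (hy : y ∈ vanishOff W) : ∃ r' ∈ M.cells W, r ⊆ r' ∧
      ∀ τ, M.Face τ → r ⊆ τ → (y ∈ M.coneRel τ r ↔ r' ⊆ τ) := by
  obtain ⟨hrF, hrW⟩ := mem_cells.1 hr
  set x₀ := M.comb r fun _ => 1 with hx₀
  have hcont : Continuous fun ε : ℝ => x₀ + ε • y := by fun_prop
  have ht : Tendsto (fun ε : ℝ => x₀ + ε • y) (𝓝[>] 0) (𝓝 x₀) := by
    simpa using (hcont.tendsto 0).mono_left nhdsWithin_le_nhds
  have h1 := ht.eventually (eventually_subset hrF)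
  have h2 : ∀ᶠ ε in 𝓝[>] (0 : ℝ), ∀ i, i ∈ W → 0 < (x₀ + ε • y) i := by
    refine eventually_all.2 fun i => ?_
    by_cases hi : i ∈ W
    · filter_upwards [((continuous_apply i).tendsto x₀).comp ht |>.eventually_const_lt
        (comb_one_pos hrF (hrW ▸ hi))] with ε hε _ using hε
    · exact Eventually.of_forall fun _ h => absurd h hi
  have h3 : ∀ᶠ ε in 𝓝[>] (0 : ℝ), ∀ τ, r ⊆ τ → y ∈ M.coneRel τ r →
      x₀ + ε • y ∈ M.coneRel τ ∅ := by
    refine eventually_all.2 fun τ => ?_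
    by_cases hτ : r ⊆ τ
    · by_cases hyτ : y ∈ M.coneRel τ r
      · filter_upwards [eventually_mem_coneRel hτ hyτ] with ε hε _ _ using hε
      · exact Eventually.of_forall fun _ _ h => absurd h hyτ
    · exact Eventually.of_forall fun _ h => absurd h hτ
  obtain ⟨ε, ⟨⟨h1, h2⟩, h3⟩, hε⟩ := (((h1.and h2).and h3).and self_mem_nhdsWithin).exists
  obtain ⟨r', hr', hc⟩ := exists_isCarrier_of_pos (M := M) h2 fun i hi => by
    rw [Pi.add_apply, Pi.smul_apply, hy i hi, hx₀, comb_eq_zero_off hrW.subset _ hi, smul_zero,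
      add_zero]
  have hself := (hc.mem_coneRel_iff hc.1).2 subset_rfl
  refine ⟨r', hr', h1 _ hc.1 hself, fun τ hτ hrτ => ?_⟩
  rw [← hc.mem_coneRel_iff hτ]
  exact ⟨h3 τ hrτ, mem_coneRel_of_add hrτ hε⟩

/-- The number of cells of maximal dimension around a cell of codimension one is even. -/
theorem even_card_covers {r : Finset V} (hr : r ∈ M.cells W) (hc : r.card + 1 = W.card) :
    Even (Finset.card {τ ∈ M.cells W | r ⊂ τ ∧ τ.card = r.card + 1}) := by
  obtain ⟨hrF, hrW⟩ := mem_cells.1 hr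
  obtain ⟨y, hyW, hy⟩ := exists_notMem_span hrF hrW.subset (by omega)
  have key : ∀ y ∈ vanishOff W, y ∉ Submodule.span ℝ (Set.range fun v : r => M.pos v) →
      ∃ r' ∈ M.cells W, r ⊂ r' ∧ r'.card = r.card + 1 ∧ ∀ τ ∈ M.cells W, r ⊂ τ →
        τ.card = r.card + 1 → (y ∈ M.coneRel τ r ↔ τ = r') := by
    intro y hyW hy
    obtain ⟨r', hr', hrr', h⟩ := exists_cell_mem_coneRel_iff hr hyW
    have hne : r ⊂ r' := by
      refine hrr'.ssubset_of_ne fun he => hy ?_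
      rw [← SetLike.mem_coe, ← coneRel_self]
      exact (h r hrF subset_rfl).2 he.symm.subset
    have hcr : r'.card = r.card + 1 := by
      have h1 := card_le (mem_cells.1 hr').1 (mem_cells.1 hr').2.subset
      have h2 := Finset.card_lt_card hne
      omega
    refine ⟨r', hr', hne, hcr, fun τ hτ hrτ hτc => ?_⟩
    rw [h τ (mem_cells.1 hτ).1 hrτ.subset]
    exact ⟨fun h => (Finset.eq_of_subset_of_card_le h (by omega)).symm, fun h => h.symm.subset⟩
  obtain ⟨r₁, hr₁, hl₁, hc₁, h₁⟩ := key y hyW hy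
  obtain ⟨r₂, hr₂, hl₂, hc₂, h₂⟩ := key (-y) (neg_mem hyW) fun h => hy (neg_mem_iff.1 h)
  have hne : r₁ ≠ r₂ := fun he => hy (mem_span_of_neg_mem_coneRel (mem_cells.1 hr₁).1 hl₁.subset
    ((h₁ _ hr₁ hl₁ hc₁).2 rfl) ((h₂ _ hr₁ hl₁ hc₁).2 he))
  have he : ({τ ∈ M.cells W | r ⊂ τ ∧ τ.card = r.card + 1} : Finset (Finset V)) = {r₁, r₂} := by
    ext τ
    simp only [Finset.mem_filter, Finset.mem_insert, Finset.mem_singleton]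
    constructor
    · rintro ⟨hτ, hrτ, hτc⟩
      rw [← h₁ τ hτ hrτ hτc, ← h₂ τ hτ hrτ hτc]
      obtain ⟨hτF, hτW⟩ := mem_cells.1 hτ
      have hyτ : y ∈ Submodule.span ℝ (Set.range fun v : τ => M.pos v) := by
        rw [span_eq hτF hτW.subset (by omega)]
        exact hyW
      obtain ⟨lam, hlam⟩ := mem_span_iff.1 hyτ
      obtain ⟨w, hw⟩ := Finset.card_eq_one.1 (show (τ \ r).card = 1 by
        rw [Finset.card_sdiff_of_subset hrτ.subset]; omega)
      have hw' : ∀ v ∈ τ, v ∉ r → v = w := fun v hv hvr => by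
        simpa [hw] using Finset.mem_sdiff.2 ⟨hv, hvr⟩
      rcases le_total 0 (lam w) with h0 | h0
      · exact Or.inl ⟨lam, fun v hv hvr => hw' v hv hvr ▸ h0, hlam⟩
      · refine Or.inr ⟨fun v => (-1) * lam v, fun v hv hvr => ?_, by rw [comb_smul, ← hlam]; simp⟩
        rw [hw' v hv hvr]
        linarith
    · rintro (rfl | rfl)
      exacts [⟨hr₁, hl₁, hc₁⟩, ⟨hr₂, hl₂, hc₂⟩]
  rw [he, Finset.card_pair hne]
  exact even_two

end GeomFan

section CellBd

variable {V ι k : Type} [Field k] {T : Finset (Finset V)}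

theorem cellBd_of_notMem (N : ℕ) (c : Option (Finset V) → k) {ρ : Finset V} (hρ : ρ ∉ T) :
    cellBd T N c (some ρ) = 0 := if_neg hρ

theorem cellBd_cellBd [CharP k 2] {N : ℕ}
    (hbt : ∀ r ∈ T, ∀ t ∈ T, ∀ s, r ⊆ s → s ⊆ t → s ∈ T)
    (hev : ∀ r ∈ T, r.card + 1 = N → Even (Finset.card {τ ∈ T | r ⊂ τ ∧ τ.card = r.card + 1}))
    (c : Option (Finset V) → k) : cellBd T N (cellBd T N c) = 0 := by
  ext (_ | r)
  · rfl
  by_cases hr : r ∈ T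
  swap
  · exact cellBd_of_notMem N _ hr
  rw [cellBd_some N _ hr, cellBd_none, ite_self, add_zero, Pi.zero_apply,
    Finset.sum_congr rfl fun τ hτ => cellBd_some N c (Finset.mem_filter.1 hτ).1,
    Finset.sum_add_distrib, Finset.sum_comm' (s' := fun υ => {τ ∈ T | (r ⊂ τ ∧
      τ.card = r.card + 1) ∧ τ ⊂ υ ∧ υ.card = τ.card + 1}) (t' := T) (by
        intro τ υ
        simp only [Finset.mem_filter]
        tauto)]
  have h1 : ∀ υ ∈ T, ∑ τ ∈ T with (r ⊂ τ ∧ τ.card = r.card + 1) ∧ τ ⊂ υ ∧ υ.card = τ.card + 1,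
      c (some υ) = 0 := by
    intro υ hυ
    refine Finset.sum_involution (fun τ _ => r ∪ (υ \ τ)) (fun τ _ => CharTwo.add_self_eq_zero _)
      (fun τ hτ _ he => ?_) (fun τ hτ => ?_) (fun τ hτ => ?_)
    all_goals simp only [Finset.mem_filter] at hτ ⊢
    all_goals obtain ⟨hτT, ⟨hrτ, hc⟩, hτυ, hc'⟩ := hτ
    · obtain ⟨x, hx, hx'⟩ := Finset.exists_of_ssubset hτυ
      exact hx' (he ▸ Finset.mem_union_right _ (Finset.mem_sdiff.2 ⟨hx, hx'⟩))
    · have hcard : (r ∪ (υ \ τ)).card = r.card + 1 := by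
        rw [Finset.card_union_of_disjoint, Finset.card_sdiff_of_subset hτυ.subset]
        · omega
        · exact Finset.disjoint_of_subset_left hrτ.subset Finset.disjoint_sdiff
      have hsub : r ∪ (υ \ τ) ⊆ υ :=
        Finset.union_subset (hrτ.subset.trans hτυ.subset) Finset.sdiff_subset
      refine ⟨hbt r hr υ hυ _ Finset.subset_union_left hsub,
        ⟨Finset.subset_union_left.ssubset_of_ne fun he => ?_, hcard⟩,
        hsub.ssubset_of_ne fun he => ?_, by omega⟩
      · rw [← he] at hcard
        omega
      · rw [he] at hcard
        omega
    · ext x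
      have h1 : x ∈ r → x ∈ τ := fun h => hrτ.subset h
      have h2 : x ∈ τ → x ∈ υ := fun h => hτυ.subset h
      simp only [Finset.mem_union, Finset.mem_sdiff]
      tauto
  rw [Finset.sum_eq_zero h1, zero_add]
  by_cases hN : r.card + 1 = N
  · rw [Finset.sum_congr rfl fun τ hτ => if_pos ((Finset.mem_filter.1 hτ).2.2.trans hN),
      Finset.sum_const]
    obtain ⟨m, hm⟩ := hev r hr hN
    rw [hm, add_smul, CharTwo.add_self_eq_zero]
  · exact Finset.sum_eq_zero fun τ hτ => if_neg ((Finset.mem_filter.1 hτ).2.2 ▸ hN)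

theorem isLocal_cellBd {N : ℕ} (hsq : ∀ c : Option (Finset V) → k, cellBd T N (cellBd T N c) = 0)
    {C : Finset V → Set (ι → ℝ)} (hC : ∀ p ∈ T, ∀ q ∈ T, p ⊆ q → C p ⊆ C q) :
    IsLocal (cellBd (k := k) T N) C where
  sq := hsq
  at_none := cellBd_none T N
  at_some c p hc h := by
    by_cases hp : p ∈ T
    · rw [cellBd_some N c hp, hc, ite_self, add_zero]
      refine Finset.sum_eq_zero fun q hq => h q ?_
      rw [Finset.mem_filter] at hq
      exact hC p hp q hq.1 hq.2.1.subset
    · exact cellBd_of_notMem N c hp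

theorem some_mem_starCells {T : Finset (Finset V)} {G τ : Finset V} :
    some τ ∈ starCells T G ↔ τ ∈ T ∧ G ⊆ τ := by
  simp [starCells]

theorem none_mem_starCells {T : Finset (Finset V)} {G : Finset V} : none ∈ starCells T G :=
  fun _ h => by simp at h

end CellBd

namespace GeomFan

open Filter Topology

variable {V ι k : Type} [Fintype V] [Fintype ι] [Field k] [CharP k 2] {M : GeomFan V ι}
  {W : Finset ι}

theorem cellBd_cells_sq (c : Option (Finset V) → k) :
    cellBd (M.cells W) W.card (cellBd (M.cells W) W.card c) = 0 :=
  cellBd_cellBd (fun _ hr _ ht _ => mem_cells_of_between hr ht) (fun _ => even_card_covers) c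

theorem homologyLeOne_link {r : Finset V} (hr : r ∈ M.cells W)
    (ih : ∀ r' ∈ M.cells W, r ⊂ r' → AcyclicOn (cellBd (k := k) (M.cells W) W.card)
      (starCells (M.cells W) r')) :
    HomologyLeOne (cellBd (k := k) (M.cells W) W.card)
      {x | ∀ τ, x = some τ → τ ∈ M.cells W ∧ r ⊂ τ} := by
  obtain ⟨hrF, hrW⟩ := mem_cells.1 hr
  set S := Submodule.span ℝ (Set.range fun v : r => M.pos v) with hS
  obtain ⟨Q, hQ⟩ := Submodule.exists_isCompl S
  have hdisj : ∀ y ∈ S, y ∈ Q → y = 0 := fun y hy hy' =>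
    (Submodule.disjoint_def.1 hQ.disjoint) y hy hy'
  set C : Finset V → Set (ι → ℝ) := fun p => if p ∈ M.cells W ∧ r ⊆ p then M.coneRel p r else ∅
    with hC
  have hC' : ∀ p y, y ∈ C p ↔ (p ∈ M.cells W ∧ r ⊆ p) ∧ y ∈ M.coneRel p r := by
    intro p y
    rw [hC]
    dsimp only
    split_ifs with h
    · exact ⟨fun h' => ⟨h, h'⟩, fun h' => h'.2⟩
    · exact ⟨fun h' => h'.elim, fun h' => h h'.1⟩
  have hd : IsLocal (cellBd (k := k) (M.cells W) W.card) C :=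
    isLocal_cellBd cellBd_cells_sq fun p _ q hq hpq y hy => by
      rw [hC'] at hy ⊢
      exact ⟨⟨hq, hy.1.2.trans hpq⟩, coneRel_mono hpq r hy.2⟩
  have hcv : ∀ p, Convex ℝ (C p) := fun p => by
    rw [hC]
    dsimp only
    split_ifs
    exacts [convex_coneRel p r, convex_empty]
  have hcl : ∀ p, IsClosed (C p) := fun p => by
    rw [hC]
    dsimp only
    split_ifs with h
    exacts [isClosed_coneRel (mem_cells.1 h.1).1 r, isClosed_empty]
  have key := HomologyLeOne.hitting_sphere hd hcv
    (fun p y hy c hc => (hC' p _).2 ⟨((hC' p y).1 hy).1, smul_mem_coneRel ((hC' p y).1 hy).2 hc⟩)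
    (Q ⊓ vanishOff W)
    (fun p y hy hy' hyQ => by
      rw [hC'] at hy hy'
      exact hdisj y (mem_span_of_neg_mem_coneRel (mem_cells.1 hy.1.1).1 hy.1.2 hy.2 hy'.2) hyQ.1)
    (fun K hK h0 hKc hKv hKn => AcyclicOn.hitting_of_convex hd hcl hcv hKc hKv hKn fun x hx => by
      obtain ⟨r', hr', hrr', h⟩ := exists_cell_mem_coneRel_iff hr (hK hx).2
      have hne : r ⊂ r' := hrr'.ssubset_of_ne fun he => by
        have hxS : x ∈ S := by
          rw [← SetLike.mem_coe, hS, ← coneRel_self]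
          exact (h r hrF subset_rfl).2 he.symm.subset
        exact h0 (hdisj x hxS (hK hx).1 ▸ hx)
      convert ih r' hr' hne using 1
      ext (_ | p)
      · simp only [none_mem_hitting, none_mem_starCells]
      · rw [some_mem_hitting, some_mem_starCells, Set.inter_singleton_nonempty, hC']
        constructor
        · rintro ⟨⟨hp, hrp⟩, hxp⟩
          exact ⟨hp, (h p (mem_cells.1 hp).1 hrp).1 hxp⟩
        · rintro ⟨hp, hrp⟩
          have hrp' := hrr'.trans hrp
          exact ⟨⟨hp, hrp'⟩, (h p (mem_cells.1 hp).1 hrp').2 hrp⟩)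
  convert key using 1
  ext (_ | p)
  · simp [none_mem_hitting]
  rw [some_mem_hitting]
  simp only [Set.mem_ofPred_eq, Option.some.injEq, forall_eq']
  constructor
  · rintro ⟨hp, hrp⟩
    obtain ⟨v, hv, hvr⟩ := Finset.exists_of_ssubset hrp
    obtain ⟨hpF, hpW⟩ := mem_cells.1 hp
    obtain ⟨s, hs, y, hy, hsy⟩ := Submodule.mem_sup.1
      (hQ.sup_eq_top ▸ Submodule.mem_top : M.pos v ∈ S ⊔ Q)
    obtain ⟨lam, rfl⟩ := mem_span_iff.1 hs
    have hyv : y = M.comb p fun u => (if u = v then 1 else 0) + (-1) *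
        (if u ∈ r then lam u else 0) := by
      rw [comb_add, comb_smul, M.comb_extend hrp.subset, ← sub_eq_iff_eq_add'.2 hsy.symm]
      simp [comb, hv, sub_eq_add_neg]
    refine ⟨y, (hC' p y).2 ⟨⟨hp, hrp.subset⟩, _, fun u _ hur => ?_, hyv⟩, ⟨hy, ?_⟩, ?_⟩
    · simp only [hur, if_false, mul_zero, add_zero]
      split_ifs <;> norm_num
    · rw [hyv]
      exact fun i hi => comb_eq_zero_off hpW.subset _ hi
    · rintro rfl
      have h0 := eq_of_comb_eq hpF (mu := 0) (hyv.symm.trans (by simp [comb])) v hv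
      simp [hvr] at h0
  · rintro ⟨y, hy, hyQ, hy0⟩
    obtain ⟨⟨hp, hrp⟩, hyp⟩ := (hC' p y).1 hy
    refine ⟨hp, hrp.ssubset_of_ne ?_⟩
    rintro rfl
    rw [coneRel_self] at hyp
    exact hy0 (hdisj y hyp hyQ.1)

end GeomFan

theorem IsCompact.eventually_add_smul_mem {ι : Type} {x₀ : ι → ℝ} {D : Set (ι → ℝ)}
    (hD : IsCompact D) {U : Set (ι → ℝ)} (hU : U ∈ nhds x₀) :
    ∀ᶠ ε in nhdsWithin (0 : ℝ) (Set.Ioi 0), ∀ y ∈ D, x₀ + ε • y ∈ U := by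
  have hcont : Continuous fun p : ℝ × (ι → ℝ) => x₀ + p.1 • p.2 := by fun_prop
  have h := hD.eventually_forall_of_forall_eventually (x₀ := (0 : ℝ))
    (P := fun ε y => x₀ + ε • y ∈ U) fun y _ => by
      have := hcont.tendsto (0, y)
      simp only [zero_smul, add_zero] at this
      exact this hU
  exact nhdsWithin_le_nhds h

namespace GeomFan

open Filter Topology

variable {V ι k : Type} [Fintype V] [Fintype ι] [Field k] [CharP k 2] {M : GeomFan V ι}
  {W : Finset ι}

theorem exists_insert_mem_cells {r : Finset V} (hr : r ∈ M.cells W) (hc : r.card ≠ W.card) :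
    ∃ w ∉ r, insert w r ∈ M.cells W := by
  obtain ⟨hrF, hrW⟩ := mem_cells.1 hr
  obtain ⟨y, hyW, hy⟩ := exists_notMem_span hrF hrW.subset
    ((card_le hrF hrW.subset).lt_of_ne hc)
  obtain ⟨r', hr', hrr', h⟩ := exists_cell_mem_coneRel_iff hr hyW
  obtain ⟨w, hw, hwr⟩ := Finset.not_subset.1 fun hsub => hy (by
    rw [← SetLike.mem_coe, ← coneRel_self]
    exact (h r hrF subset_rfl).2 hsub)
  exact ⟨w, hwr, mem_cells_of_between hr hr' (Finset.subset_insert w r)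
    (Finset.insert_subset hw hrr')⟩

theorem acyclicOn_starCells_of_mem {r : Finset V} (hr : r ∈ M.cells W) :
    AcyclicOn (cellBd (k := k) (M.cells W) W.card) (starCells (M.cells W) r) := by
  induction r using WellFoundedGT.induction with
  | ind r ih =>
  set Q : Set (Option (Finset V)) := {x | ∀ τ, x = some τ → τ ∈ M.cells W ∧ r ⊂ τ} with hQ
  have hQs : ∀ τ, some τ ∈ Q ↔ τ ∈ M.cells W ∧ r ⊂ τ := fun τ => by simp [hQ]
  have hQn : none ∈ Q := fun _ h => by simp at h
  have hst : starCells (M.cells W) r = insert (some r) Q := by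
    ext (_ | τ)
    · simp [none_mem_starCells, hQn]
    · rw [some_mem_starCells, Set.mem_insert_iff, hQs, Option.some.injEq,
        Finset.ssubset_iff_subset_ne]
      constructor
      · intro h
        by_cases he : τ = r
        exacts [Or.inl he, Or.inr ⟨h.1, h.2, Ne.symm he⟩]
      · rintro (rfl | h)
        exacts [⟨hr, subset_rfl⟩, ⟨h.1, h.2.1⟩]
  have hlow : ∀ c : Option (Finset V) → k, (∀ x ∈ Q, c x = 0) →
      cellBd (M.cells W) W.card c (some r) = 0 := fun c hc => by
    rw [cellBd_some _ _ hr, hc none hQn, ite_self, add_zero]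
    refine Finset.sum_eq_zero fun τ hτ => hc _ ?_
    rw [Finset.mem_filter] at hτ
    exact (hQs τ).2 ⟨hτ.1, hτ.2.1⟩
  obtain ⟨t, ht, htr⟩ : ∃ t : Option (Finset V) → k,
      (∀ x ∈ Q, cellBd (M.cells W) W.card t x = 0) ∧
      cellBd (M.cells W) W.card t (some r) = 1 := by
    by_cases hc : r.card = W.card
    · refine ⟨fun x => if x = none then 1 else 0, ?_, ?_⟩
      · rintro (_ | τ) hτ
        · rfl
        · obtain ⟨hτ, hrτ⟩ := (hQs τ).1 hτ
          have h1 := card_le (mem_cells.1 hτ).1 (mem_cells.1 hτ).2.subset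
          have h2 := Finset.card_lt_card hrτ
          omega
      · rw [cellBd_some _ _ hr, if_pos hc]
        simp
    · obtain ⟨w, hw, hwr⟩ := exists_insert_mem_cells hr hc
      refine ⟨fun x => if x = some (insert w r) then 1 else 0, ?_, ?_⟩
      · rintro (_ | τ) hτ
        · rfl
        · obtain ⟨hτ, hrτ⟩ := (hQs τ).1 hτ
          rw [cellBd_some _ _ hτ]
          simp only [Option.some.injEq, reduceCtorEq, if_false, ite_self, add_zero]
          refine Finset.sum_eq_zero fun υ hυ => if_neg ?_
          rintro rfl
          have h1 := (Finset.mem_filter.1 hυ).2.2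
          have h2 := Finset.card_lt_card hrτ
          rw [Finset.card_insert_of_notMem hw] at h1
          omega
      · rw [cellBd_some _ _ hr]
        simp only [Option.some.injEq, reduceCtorEq, if_false, ite_self, add_zero]
        rw [Finset.sum_ite_eq' _ _ fun _ => (1 : k), if_pos]
        exact Finset.mem_filter.2 ⟨hwr, Finset.ssubset_insert hw, Finset.card_insert_of_notMem hw⟩
  rw [hst]
  exact AcyclicOn.of_homologyLeOne cellBd_cells_sq hlow
    (homologyLeOne_link hr fun r' hr' hlt => ih r' hlt hr') ht htr

/-- The cells containing a given face form an acyclic complex. -/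
theorem acyclicOn_starCells {r : Finset V} (hr : M.Face r) (hrW : M.labels r ⊆ W) :
    AcyclicOn (cellBd (k := k) (M.cells W) W.card) (starCells (M.cells W) r) := by
  set C : Finset V → Set (ι → ℝ) := fun p => if p ∈ M.cells W then M.coneRel p ∅ else ∅ with hC
  have hC' : ∀ p y, y ∈ C p ↔ p ∈ M.cells W ∧ y ∈ M.coneRel p ∅ := by
    intro p y
    rw [hC]
    dsimp only
    split_ifs with h
    · exact ⟨fun h' => ⟨h, h'⟩, fun h' => h'.2⟩
    · exact ⟨fun h' => h'.elim, fun h' => h h'.1⟩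
  have hd : IsLocal (cellBd (k := k) (M.cells W) W.card) C :=
    isLocal_cellBd cellBd_cells_sq fun p _ q hq hpq y hy => by
      rw [hC'] at hy ⊢
      exact ⟨hq, coneRel_mono hpq ∅ hy.2⟩
  have hcv : ∀ p, Convex ℝ (C p) := fun p => by
    rw [hC]
    dsimp only
    split_ifs
    exacts [convex_coneRel p ∅, convex_empty]
  have hcl : ∀ p, IsClosed (C p) := fun p => by
    rw [hC]
    dsimp only
    split_ifs with h
    exacts [isClosed_coneRel (mem_cells.1 h).1 ∅, isClosed_empty]
  set x₀ := M.comb r fun _ => 1 with hx₀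
  set w : ι → ℝ := fun i => if i ∈ W then 1 else 0 with hw
  set b : Finset V → ι → ℝ := fun τ => if τ ∈ M.cells W then M.comb τ fun _ => 1 else w with hb
  set Ω : Set (ι → ℝ) := {x | (∀ i ∈ W, 0 < x i) ∧ ∀ i ∉ W, x i = 0} with hΩ
  have hΩc : Convex ℝ Ω := by
    rintro x ⟨hx, hx'⟩ y ⟨hy, hy'⟩ α β hα hβ hαβ
    refine ⟨fun i hi => ?_, fun i hi => by simp [hx' i hi, hy' i hi]⟩
    have := convex_Ioi (0 : ℝ) (hx i hi) (hy i hi) hα hβ hαβ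
    exact this
  have hwΩ : w ∈ Ω := ⟨fun i hi => by simp [hw, hi], fun i hi => by simp [hw, hi]⟩
  have hbΩ : ∀ τ, b τ ∈ Ω := fun τ => by
    rw [hb]
    dsimp only
    split_ifs with hτ
    · obtain ⟨hτF, hτW⟩ := mem_cells.1 hτ
      exact ⟨fun i hi => comb_one_pos hτF (hτW ▸ hi), fun i hi =>
        comb_eq_zero_off hτW.subset _ hi⟩
    · exact hwΩ
  set D : Set (ι → ℝ) := convexHull ℝ (insert w (Set.range b)) with hD
  have hDΩ : D ⊆ Ω := convexHull_min
    (Set.insert_subset hwΩ (Set.range_subset_iff.2 hbΩ)) hΩc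
  have hDc : IsCompact D := ((Set.finite_range b).insert w).isCompact_convexHull ℝ
  obtain ⟨ε, hε, hε0⟩ := ((hDc.eventually_add_smul_mem (eventually_subset hr)).and
    self_mem_nhdsWithin).exists
  have hε0 : 0 < ε := hε0
  set K : Set (ι → ℝ) := (fun y => x₀ + ε • y) '' D with hK
  have hKc : IsCompact K := hDc.image (by fun_prop)
  have hKv : Convex ℝ K := by
    have h1 := ((convex_convexHull ℝ (insert w (Set.range b))).smul ε).translate x₀
    rw [← hD, ← Set.image_smul, Set.image_image] at h1
    exact h1
  have hKn : K.Nonempty := ⟨_, w, subset_convexHull ℝ _ (Or.inl rfl), rfl⟩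
  have hx₀nn : ∀ i, 0 ≤ x₀ i := fun i => by
    rw [hx₀, comb_apply]
    exact Finset.sum_nonneg fun v _ => mul_nonneg zero_le_one (M.pos_nonneg v i)
  convert AcyclicOn.hitting_of_convex hd hcl hcv hKc hKv hKn ?_ using 1
  · ext (_ | τ)
    · simp [none_mem_hitting, none_mem_starCells]
    rw [some_mem_hitting, some_mem_starCells]
    constructor
    · rintro ⟨hτ, hrτ⟩
      refine ⟨_, (hC' τ _).2 ⟨hτ, ?_⟩, b τ, subset_convexHull ℝ _ (Or.inr ⟨τ, rfl⟩), rfl⟩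
      have h1 : b τ = M.comb τ fun _ => 1 := if_pos hτ
      refine mem_coneRel_empty.2 ⟨fun v => (if v ∈ r then 1 else 0) + ε * 1, fun v _ => ?_, ?_⟩
      · dsimp only
        split_ifs <;> linarith
      · rw [comb_add, comb_smul, M.comb_extend hrτ]
        dsimp only
        rw [h1]
    · rintro ⟨x, hx, y, hy, rfl⟩
      obtain ⟨hτ, hxτ⟩ := (hC' τ _).1 hx
      exact ⟨hτ, hε y hy τ (mem_cells.1 hτ).1 hxτ⟩
  · rintro _ ⟨y, hy, rfl⟩
    obtain ⟨hy1, hy2⟩ := hDΩ hy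
    obtain ⟨r', hr', hc⟩ := exists_isCarrier_of_pos (M := M) (x := x₀ + ε • y) (W := W)
      (fun i hi => add_pos_of_nonneg_of_pos (hx₀nn i) (mul_pos hε0 (hy1 i hi))) fun i hi => by
        rw [Pi.add_apply, Pi.smul_apply, hy2 i hi, hx₀, comb_eq_zero_off hrW _ hi, smul_zero,
          add_zero]
    convert acyclicOn_starCells_of_mem (k := k) hr' using 1
    ext (_ | τ)
    · simp [none_mem_hitting, none_mem_starCells]
    rw [some_mem_hitting, some_mem_starCells, Set.inter_singleton_nonempty, hC']
    exact and_congr_right fun hτ => hc.mem_coneRel_iff (mem_cells.1 hτ).1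

end GeomFan

section UpClosed

variable {V k : Type} [Field k] {S T : Finset (Finset V)} {N : ℕ}

theorem cellBd_eq_of_upClosed (hTS : T ⊆ S) (hup : ∀ τ ∈ T, ∀ υ ∈ S, τ ⊆ υ → υ ∈ T)
    (c : Option (Finset V) → k) {τ : Finset V} (hτ : τ ∈ T) :
    cellBd T N c (some τ) = cellBd S N c (some τ) := by
  rw [cellBd_some N c hτ, cellBd_some N c (hTS hτ)]
  congr 1
  refine Finset.sum_congr (Finset.ext fun υ => ?_) fun _ _ => rfl
  simp only [Finset.mem_filter, and_congr_left_iff]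
  exact fun h => ⟨fun hυ => hTS hυ, fun hυ => hup τ hτ υ hυ h.1.subset⟩

theorem AcyclicOn.of_upClosed (hTS : T ⊆ S) (hup : ∀ τ ∈ T, ∀ υ ∈ S, τ ⊆ υ → υ ∈ T)
    {U : Set (Option (Finset V))} (hU : ∀ τ, some τ ∈ U → τ ∈ T)
    (h : AcyclicOn (cellBd (k := k) S N) U) : AcyclicOn (cellBd (k := k) T N) U := by
  have key : ∀ (c : Option (Finset V) → k), ∀ x ∈ U, cellBd T N c x = cellBd S N c x := by
    rintro c (_ | τ) hx
    · rfl
    · exact cellBd_eq_of_upClosed hTS hup c (hU τ hx)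
  intro c hc
  obtain ⟨b, hb⟩ := h c fun x hx => (key c x hx).symm.trans (hc x hx)
  exact ⟨b, fun x hx => (hb x hx).trans (key b x hx).symm⟩

end UpClosed

namespace GeomFan

variable {V ι k : Type} {M : GeomFan V ι} {W : Finset ι}

theorem labels_insert_of_subset {v : V} {E s : Finset V} (hv : M.label v ⊆ M.labels E)
    (hE : E ⊆ s) : M.labels (insert v s) = M.labels s := by
  rw [LabelledComplex.labels, Finset.biUnion_insert]
  exact Finset.union_eq_right.2 (hv.trans (M.labels_mono hE))

variable [Fintype V]

theorem erase_mem_cells {v : V} {E s : Finset V} (hv : M.label v ⊆ M.labels E)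
    (hE : E ⊆ s) (hvE : v ∉ E) (hs : s ∈ M.cells W) : s.erase v ∈ M.cells W := by
  by_cases hvs : v ∈ s
  · obtain ⟨hsF, hsW⟩ := mem_cells.1 hs
    refine mem_cells.2 ⟨M.face_of_subset (Finset.erase_subset v s) hsF, ?_⟩
    rw [← hsW, ← labels_insert_of_subset hv (Finset.subset_erase.2 ⟨hE, hvE⟩),
      Finset.insert_erase hvs]
  · rwa [Finset.erase_eq_of_notMem hvs]

variable [Field k] [CharP k 2]

/-- A contraction of the complex of the cells whose union with `v` is a face. -/
theorem exists_cellBd_eq {v : V} {H : Finset V} (hvH : v ∉ H) (hv : M.label v ⊆ M.labels H)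
    {c : Option (Finset V) → k} (hc0 : c none = 0)
    (hc1 : ∀ τ ∈ M.cells W, H ⊆ τ → ¬M.Face (insert v τ) → c (some τ) = 0)
    (hc : ∀ τ ∈ M.cells W, H ⊆ τ → cellBd (M.cells W) W.card c (some τ) = 0) :
    ∃ b : Option (Finset V) → k, b none = 0 ∧ (∀ τ, v ∉ τ → b (some τ) = 0) ∧
      ∀ τ ∈ M.cells W, H ⊆ τ → cellBd (M.cells W) W.card b (some τ) = c (some τ) := by
  refine ⟨fun x => x.elim 0 fun τ => if v ∈ τ then c (some (τ.erase v)) else 0, rfl,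
    fun τ hτ => if_neg hτ, fun τ hτ hH => ?_⟩
  obtain ⟨hτF, hτW⟩ := mem_cells.1 hτ
  rw [cellBd_some _ _ hτ]
  simp only [Option.elim, ite_self, add_zero]
  have hins : ∀ {σ}, σ ∈ M.cells W → H ⊆ σ → M.Face (insert v σ) → insert v σ ∈ M.cells W :=
    fun hσ hHσ hF => mem_cells.2 ⟨hF, (labels_insert_of_subset hv hHσ).trans (mem_cells.1 hσ).2⟩
  by_cases hvτ : v ∈ τ
  · have hHe : H ⊆ τ.erase v := Finset.subset_erase.2 ⟨hH, hvH⟩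
    have hτe := erase_mem_cells hv hH hvH hτ
    have hce := Finset.card_erase_add_one hvτ
    have h0 := hc _ hτe hHe
    rw [cellBd_some _ _ hτe, hc0, ite_self, add_zero, ← Finset.add_sum_erase (a := τ) _ _
      (Finset.mem_filter.2 ⟨hτ, Finset.erase_ssubset hvτ, hce.symm⟩),
      CharTwo.add_eq_zero] at h0
    rw [h0]
    refine Finset.sum_of_injOn (fun υ => υ.erase v) ?_ ?_ ?_ ?_
    · intro υ₁ h₁ υ₂ h₂ he
      have h1 := (Finset.mem_filter.1 h₁).2.1.subset hvτ
      have h2 := (Finset.mem_filter.1 h₂).2.1.subset hvτ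
      rw [← Finset.insert_erase h1, ← Finset.insert_erase h2]
      exact congrArg _ he
    · intro υ hυ
      change υ.erase v ∈ _
      obtain ⟨hυ, hτυ, hcard⟩ := Finset.mem_filter.1 hυ
      have hvυ := hτυ.subset hvτ
      have hce' := Finset.card_erase_add_one hvυ
      refine Finset.mem_erase.2 ⟨fun he => ?_, Finset.mem_filter.2
        ⟨erase_mem_cells hv (hH.trans hτυ.subset) hvH hυ, ?_, by omega⟩⟩
      · exact Finset.notMem_erase v υ (he ▸ hvτ)
      · refine (Finset.erase_subset_erase v hτυ.subset).ssubset_of_ne fun he => ?_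
        have := congrArg Finset.card he
        omega
    · intro σ hσ hσ'
      obtain ⟨hne, hσ⟩ := Finset.mem_erase.1 hσ
      obtain ⟨hσ, hlt, hcard⟩ := Finset.mem_filter.1 hσ
      have hvσ : v ∉ σ := fun hvσ => hne (Finset.eq_of_subset_of_card_le
        ((Finset.insert_erase hvτ).symm.subset.trans (Finset.insert_subset hvσ hlt.subset))
        (by omega)).symm
      refine hc1 σ hσ (hHe.trans hlt.subset) fun hF => hσ' ⟨insert v σ, ?_,
        Finset.erase_insert hvσ⟩
      have hsub : τ ⊆ insert v σ := (Finset.insert_erase hvτ).symm.subset.trans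
        (Finset.insert_subset_insert v hlt.subset)
      have hci := Finset.card_insert_of_notMem hvσ
      refine Finset.mem_coe.2 (Finset.mem_filter.2 ⟨hins hσ (hHe.trans hlt.subset) hF,
        hsub.ssubset_of_ne fun he => ?_, by omega⟩)
      have := congrArg Finset.card he
      omega
    · intro υ hυ
      exact if_pos ((Finset.mem_filter.1 hυ).2.1.subset hvτ)
  · by_cases hF : M.Face (insert v τ)
    · rw [Finset.sum_eq_single (insert v τ), if_pos (Finset.mem_insert_self v τ),
        Finset.erase_insert hvτ]
      · intro υ hυ hne
        obtain ⟨hυ, hτυ, hcard⟩ := Finset.mem_filter.1 hυ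
        refine if_neg fun hvυ => hne (Finset.eq_of_subset_of_card_le
          (Finset.insert_subset hvυ hτυ.subset) ?_).symm
        rw [hcard, Finset.card_insert_of_notMem hvτ]
      · intro h
        exact absurd (Finset.mem_filter.2 ⟨hins hτ hH hF, Finset.ssubset_insert hvτ,
          Finset.card_insert_of_notMem hvτ⟩) h
    · rw [hc1 τ hτ hH hF]
      refine Finset.sum_eq_zero fun υ hυ => if_neg fun hvυ => hF ?_
      obtain ⟨hυ, hτυ, -⟩ := Finset.mem_filter.1 hυ
      exact M.face_of_subset (Finset.insert_subset hvυ hτυ.subset) (mem_cells.1 hυ).1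

variable [Fintype ι]

theorem cellBd_sq_of_upClosed {T : Finset (Finset V)} (hTS : T ⊆ M.cells W)
    (hup : ∀ τ ∈ T, ∀ υ ∈ M.cells W, τ ⊆ υ → υ ∈ T) (c : Option (Finset V) → k) :
    cellBd T W.card (cellBd T W.card c) = 0 := by
  refine cellBd_cellBd (fun r hr t ht s hrs hst =>
    hup r hr s (mem_cells_of_between (hTS hr) (hTS ht) hrs hst) hrs) (fun r hr hc => ?_) c
  convert even_card_covers (hTS hr) hc using 2
  refine Finset.ext fun υ => ?_
  simp only [Finset.mem_filter, and_congr_left_iff]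
  exact fun h => ⟨fun hυ => hTS hυ, fun hυ => hup r hr υ hυ h.1.subset⟩

theorem regOn_of_upClosed {a : V → ι → k} (ha : ∀ v i, a v i ≠ 0 → i ∈ M.label v)
    (hind : ∀ τ, M.Face τ → LinearIndependent k fun v : τ => a v) {T : Finset (Finset V)}
    (hTS : T ⊆ M.cells W) (hup : ∀ τ ∈ T, ∀ υ ∈ M.cells W, τ ⊆ υ → υ ∈ T)
    {Γ : Finset V → Prop} {hΓ : Monotone fun G => ¬Γ G}
    (hac : ∀ G, Γ G → AcyclicOn (cellBd (k := k) (M.cells W) W.card) (starCells T G))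
    (hno : ∀ G, ∀ τ ∈ T, G ⊆ τ → Γ G) : RegOn (linForm a) ⊤ (monoIdeal k _ hΓ) W := by
  refine regOn_top_of_acyclic a W
    (fun G hG => (hac G hG).of_upClosed hTS hup fun τ h => (some_mem_starCells.1 h).1)
    (fun G hG τ hτ hGτ => hG (hno G τ hτ hGτ)) (cellBd_sq_of_upClosed hTS hup)
    (fun τ hτ => hind τ (mem_cells.1 (hTS hτ)).1) fun τ hτ v hv i hi => ?_
  by_contra h
  exact hi ((mem_cells.1 (hTS hτ)).2 ▸ Finset.mem_biUnion.2 ⟨v, hv, ha v i h⟩)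

theorem regOn_star {a : V → ι → k} (ha : ∀ v i, a v i ≠ 0 → i ∈ M.label v)
    (hind : ∀ τ, M.Face τ → LinearIndependent k fun v : τ => a v) (E : Finset V) (W : Finset ι) :
    RegOn (linForm a) ⊤ ((M.star E).bad k W) W := by
  refine regOn_of_upClosed ha hind (T := {τ ∈ M.cells W | E ⊆ τ}) (Finset.filter_subset _ _)
    (fun τ hτ υ hυ h => Finset.mem_filter.2 ⟨hυ, (Finset.mem_filter.1 hτ).2.trans h⟩)
    (fun G hG => ?_) (fun G τ hτ hG => ?_)
  · convert acyclicOn_starCells (k := k) hG.1 hG.2 using 1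
    ext (_ | τ)
    · simp [none_mem_starCells]
    · simp only [some_mem_starCells, Finset.mem_filter, Finset.union_subset_iff]
      tauto
  · obtain ⟨hτ, hE⟩ := Finset.mem_filter.1 hτ
    obtain ⟨hτF, hτW⟩ := mem_cells.1 hτ
    have hsub := Finset.union_subset hG hE
    exact ⟨M.face_of_subset hsub hτF, (M.labels_mono hsub).trans hτW.subset⟩

theorem regOn_del {a : V → ι → k} (ha : ∀ v i, a v i ≠ 0 → i ∈ M.label v)
    (hind : ∀ τ, M.Face τ → LinearIndependent k fun v : τ => a v) {E : Finset V} {v : V}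
    (hvE : v ∉ E) (hv : M.label v ⊆ M.labels E) (W : Finset ι) :
    RegOn (linForm a) ⊤ ((M.del E v).bad k W) W := by
  have hT : ∀ τ, τ ∈ ({τ ∈ M.cells W | E ⊆ τ ∧ ¬M.Face (insert v τ)} : Finset (Finset V)) ↔
      τ ∈ M.cells W ∧ E ⊆ τ ∧ ¬M.Face (insert v τ) := fun τ => Finset.mem_filter
  refine regOn_of_upClosed ha hind
    (T := {τ ∈ M.cells W | E ⊆ τ ∧ ¬M.Face (insert v τ)}) (Finset.filter_subset _ _)
    (fun τ hτ υ hυ h => ?_) (fun G hG => ?_) (fun G τ hτ hG => ?_)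
  · rw [hT] at hτ ⊢
    exact ⟨hυ, hτ.2.1.trans h, fun hF =>
      hτ.2.2 (M.face_of_subset (Finset.insert_subset_insert v h) hF)⟩
  · obtain ⟨⟨hGF, hvG⟩, hGW⟩ := hG
    have hsub : ∀ {τ}, G ∪ E ⊆ τ → G ⊆ τ ∧ E ⊆ τ := Finset.union_subset_iff.1
    refine AcyclicOn.of_sub cellBd_cells_sq ?_ (acyclicOn_starCells (k := k) hGF hGW)
      fun c hc1 hc => ?_
    · rintro (_ | τ) h
      · exact none_mem_starCells
      · rw [some_mem_starCells, hT] at h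
        exact some_mem_starCells.2 ⟨h.1.1, Finset.union_subset h.2 h.1.2.1⟩
    obtain ⟨b, hb0, hb1, hb⟩ := exists_cellBd_eq (H := G ∪ E) (v := v) (c := c) (W := W) (M := M)
      (by simp [hvG, hvE]) (hv.trans (M.labels_mono Finset.subset_union_right))
      (hc1 _ none_mem_starCells)
      (fun τ hτ hH hF => hc1 _ (some_mem_starCells.2 ⟨(hT τ).2 ⟨hτ, (hsub hH).2, hF⟩, (hsub hH).1⟩))
      (fun τ hτ hH => hc _ (some_mem_starCells.2 ⟨hτ, hH⟩))
    refine ⟨b, ?_, ?_⟩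
    · rintro (_ | τ) h
      · exact hb0
      · rw [some_mem_starCells, hT] at h
        refine hb1 τ fun hvτ => h.1.2.2 ?_
        rw [Finset.insert_eq_of_mem hvτ]
        exact (mem_cells.1 h.1.1).1
    · rintro (_ | τ) h
      · exact (hc1 _ none_mem_starCells).symm
      · exact hb τ (some_mem_starCells.1 h).1 (some_mem_starCells.1 h).2
  · rw [hT] at hτ
    obtain ⟨hτ, hE, hF⟩ := hτ
    obtain ⟨hτF, hτW⟩ := mem_cells.1 hτ
    have h := Finset.union_subset hG hE
    refine ⟨⟨M.face_of_subset h hτF, fun hvG => hF ?_⟩, (M.labels_mono h).trans hτW.subset⟩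
    rwa [Finset.insert_eq_of_mem (hG hvG)]

end GeomFan

section GenericField

variable {V ι : Type}

theorem exists_injective_mem_of_linearIndependent {κ K : Type} [Field K] [Fintype κ] {w : κ → ι → K}
    (hw : LinearIndependent K w) {L : κ → Finset ι} (hL : ∀ v i, w v i ≠ 0 → i ∈ L v) :
    ∃ f : κ → ι, Function.Injective f ∧ ∀ v, f v ∈ L v := by
  refine (Finset.all_card_le_biUnion_card_iff_exists_injective L).1 fun s => ?_
  set Q := s.biUnion L
  let P : (ι → K) →ₗ[K] (Q → K) := LinearMap.funLeft K K (↑)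
  have hs : LinearIndependent K fun v : s => w v := hw.comp _ Subtype.val_injective
  have h : LinearIndependent K fun v : s => P (w v) := by
    rw [Fintype.linearIndependent_iff] at hs ⊢
    intro g hg
    refine hs g (funext fun i => ?_)
    by_cases hi : i ∈ Q
    · have := congrFun hg ⟨i, hi⟩
      simpa [P, LinearMap.funLeft_apply] using this
    · rw [Finset.sum_apply]
      refine Finset.sum_eq_zero fun v _ => ?_
      have : w v i = 0 := by
        by_contra hv
        exact hi (Finset.mem_biUnion.2 ⟨v, v.2, hL v i hv⟩)
      simp [this]
  simpa using h.fintype_card_le_finrank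

variable (V ι) in
/-- The field of rational functions over `𝔽₂` in variables indexed by `V × ι`. -/
abbrev GenField : Type := FractionRing (MvPolynomial (V × ι) (ZMod 2))

/-- The generic coefficients with support prescribed by `L`. -/
def genCoeff (L : V → Finset ι) (v : V) (i : ι) : GenField V ι :=
  if i ∈ L v then algebraMap (MvPolynomial (V × ι) (ZMod 2)) _ (MvPolynomial.X (v, i)) else 0

theorem mem_of_genCoeff_ne_zero {L : V → Finset ι} {v : V} {i : ι} (h : genCoeff L v i ≠ 0) :
    i ∈ L v := by
  by_contra hi
  exact h (if_neg hi)

instance charP_genField : CharP (GenField V ι) 2 :=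
  charP_of_injective_algebraMap (IsFractionRing.injective (MvPolynomial (V × ι) (ZMod 2)) _) 2

theorem linearIndependent_genCoeff {L : V → Finset ι} {τ : Finset V} {f : τ → ι}
    (hf : Function.Injective f) (hfL : ∀ v : τ, f v ∈ L v) :
    LinearIndependent (GenField V ι) fun v : τ => genCoeff L v := by
  refine LinearIndependent.of_comp (LinearMap.funLeft (GenField V ι) (GenField V ι) f) ?_
  let A : Matrix τ τ (MvPolynomial (V × ι) (ZMod 2)) := fun v v' =>
    if f v' ∈ L v then MvPolynomial.X ((v : V), f v') else 0
  let e : V × ι → ZMod 2 := fun x => if ∃ v : τ, (v : V) = x.1 ∧ f v = x.2 then 1 else 0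
  have hA : (MvPolynomial.eval e).mapMatrix A = 1 := by
    ext v v'
    rw [RingHom.mapMatrix_apply, Matrix.map_apply]
    by_cases h : v = v'
    · subst h
      simp only [A, if_pos (hfL v), MvPolynomial.eval_X, e, Matrix.one_apply_eq]
      exact if_pos ⟨v, rfl, rfl⟩
    · rw [Matrix.one_apply_ne h]
      simp only [A]
      split_ifs
      · rw [MvPolynomial.eval_X]
        refine if_neg ?_
        rintro ⟨u, hu, hu'⟩
        exact h ((Subtype.ext hu).symm.trans (hf hu'))
      · exact map_zero _
  have hdet : A.det ≠ 0 := by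
    intro h
    have := RingHom.map_det (MvPolynomial.eval e) A
    rw [hA, h] at this
    simp at this
  have hrow : (LinearMap.funLeft (GenField V ι) (GenField V ι) f ∘ fun v : τ => genCoeff L v)
      = ((algebraMap (MvPolynomial (V × ι) (ZMod 2)) (GenField V ι)).mapMatrix A).row := by
    ext v v'
    change genCoeff L v (f v') = algebraMap _ _ (A v v')
    simp only [genCoeff, A]
    split_ifs
    · rfl
    · exact (map_zero _).symm
  rw [hrow, Matrix.linearIndependent_rows_iff_isUnit, Matrix.isUnit_iff_isUnit_det,
    ← RingHom.map_det, isUnit_iff_ne_zero]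
  exact fun h => hdet (IsFractionRing.injective (MvPolynomial (V × ι) (ZMod 2)) _
    (h.trans (map_zero _).symm))

end GenericField

namespace GeomFan

variable {V ι : Type} {M : GeomFan V ι}

theorem exists_injective_mem_label {τ : Finset V} (hτ : M.Face τ) :
    ∃ f : τ → ι, Function.Injective f ∧ ∀ v : τ, f v ∈ M.label v :=
  exists_injective_mem_of_linearIndependent (M.indep hτ) fun _ _ h => M.mem_label.2 h

theorem linearIndependent_genCoeff_label {τ : Finset V} (hτ : M.Face τ) :
    LinearIndependent (GenField V ι) fun v : τ => genCoeff M.label v := by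
  obtain ⟨f, hf, hfL⟩ := exists_injective_mem_label hτ
  exact linearIndependent_genCoeff hf hfL

theorem coeff_sum_ne_zero [Fintype V] [Fintype ι] {E F₁ F₂ B : Finset V}
    (hface : M.Face (F₁ ∪ F₂ ∪ B ∪ E)) (hF₁ : Disjoint F₁ (F₂ ∪ E)) (hF₁B : Disjoint F₁ B)
    (hint : M.labels (F₁ ∪ B ∪ E) = Finset.univ)
    (hl : ∀ v ∈ F₁, M.label v ⊆ M.labels (F₂ ∪ E))
    (hapex : ∀ v ∈ B, ∀ p, ∃ q, q ≠ p ∧ q ∉ M.labels (B.erase v ∪ (F₁ ∪ (F₂ ∪ E)))) :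
    PowerSeries.coeff (F₁.card + B.card) (∑ s with M.Face (s ∪ E),
      ((PowerSeries.X : PowerSeries ℤ) * PowerSeries.mk 1) ^ s.card *
        ((-PowerSeries.X) ^ (Fintype.card ι - (M.labels (s ∪ E)).card) *
          (1 - PowerSeries.X) ^ (M.labels (s ∪ E)).card)) ≠ 0 := by
  have ha : ∀ v i, genCoeff M.label v i ≠ 0 → i ∈ M.label v := fun _ _ => mem_of_genCoeff_ne_zero
  have hind := fun τ (hτ : M.Face τ) => linearIndependent_genCoeff_label hτ
  have h := SuppComplex.hilb_univ (M.toLabelledComplex.compatible_star ha E) (regOn_star ha hind E)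
  exact h ▸ M.toLabelledComplex.coeff_hilb_ne_zero ha
    (fun E v _ hvE hv W => regOn_del ha hind hvE hv W) hface hF₁ hF₁B hint hl hapex

/-- Summing over the star of `E` amounts to summing over the faces containing `E`. -/
theorem sum_star_eq [Fintype V] [Fintype ι] (E : Finset V) :
    (∑ s with M.Face (s ∪ E), ((PowerSeries.X : PowerSeries ℤ) * PowerSeries.mk 1) ^ s.card *
        ((-PowerSeries.X) ^ (Fintype.card ι - (M.labels (s ∪ E)).card) *
          (1 - PowerSeries.X) ^ (M.labels (s ∪ E)).card)) =
      ∑ τ with M.Face τ ∧ E ⊆ τ, PowerSeries.X ^ (τ.card - E.card) *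
        ((-PowerSeries.X) ^ (Fintype.card ι - (M.labels τ).card) *
          (1 - PowerSeries.X) ^ ((M.labels τ).card - τ.card)) := by
  have hw : (PowerSeries.mk 1 : PowerSeries ℤ) * (1 - PowerSeries.X) = 1 :=
    PowerSeries.mk_one_mul_one_sub_eq_one ℤ
  have hw' : (PowerSeries.X : PowerSeries ℤ) * PowerSeries.mk 1 + 1 = PowerSeries.mk 1 := by
    linear_combination (-1 : PowerSeries ℤ) * hw
  rw [← Finset.sum_fiberwise_of_maps_to (g := fun s => s ∪ E)
    (t := {τ | M.Face τ ∧ E ⊆ τ}) (fun s hs => by simpa using hs)]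
  refine Finset.sum_congr rfl fun τ hτ => ?_
  obtain ⟨hτF, hEτ⟩ := (Finset.mem_filter.1 hτ).2
  have hcard := Finset.card_sdiff_add_card_eq_card hEτ
  have hle := card_le hτF subset_rfl
  have hsum : ∑ s with M.Face (s ∪ E) ∧ s ∪ E = τ,
      ((PowerSeries.X : PowerSeries ℤ) * PowerSeries.mk 1) ^ s.card =
      PowerSeries.X ^ (τ.card - E.card) * PowerSeries.mk 1 ^ τ.card := by
    trans ∑ r ∈ E.powerset, ((PowerSeries.X : PowerSeries ℤ) * PowerSeries.mk 1) ^
      ((τ \ E).card + r.card)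
    · refine Finset.sum_nbij' (fun s => s ∩ E) (fun r => τ \ E ∪ r) ?_ ?_ ?_ ?_ ?_
      · intro s _
        exact Finset.mem_powerset.2 Finset.inter_subset_right
      · intro r hr
        have hr := Finset.mem_powerset.1 hr
        have he : τ \ E ∪ r ∪ E = τ := by grind
        exact Finset.mem_filter.2 ⟨Finset.mem_univ _, by rwa [he], he⟩
      · intro s hs
        have := (Finset.mem_filter.1 hs).2.2
        grind
      · intro r hr
        have hr := Finset.mem_powerset.1 hr
        grind
      · intro s hs
        have hs := (Finset.mem_filter.1 hs).2.2
        have : s = τ \ E ∪ s ∩ E := by grind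
        conv_lhs => rw [this]
        rw [Finset.card_union_of_disjoint (by
          rw [Finset.disjoint_left]; grind)]
    · have h := Finset.sum_pow_mul_eq_add_pow
        ((PowerSeries.X : PowerSeries ℤ) * PowerSeries.mk 1) 1 E
      simp only [one_pow, mul_one, hw'] at h
      simp only [pow_add, ← Finset.mul_sum, h]
      rw [← hcard, Nat.add_sub_cancel, pow_add, mul_pow, mul_assoc]
  rw [Finset.filter_filter, Finset.sum_congr rfl (g := fun s =>
    ((PowerSeries.X : PowerSeries ℤ) * PowerSeries.mk 1) ^ s.card *
        ((-PowerSeries.X) ^ (Fintype.card ι - (M.labels τ).card) *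
          (1 - PowerSeries.X) ^ (M.labels τ).card)) fun s hs => by
        rw [(Finset.mem_filter.1 hs).2.2], ← Finset.sum_mul, hsum]
  have hpow : (PowerSeries.mk 1 : PowerSeries ℤ) ^ τ.card * (1 - PowerSeries.X) ^ τ.card = 1 := by
    rw [← mul_pow, hw, one_pow]
  obtain ⟨e, he⟩ := Nat.exists_eq_add_of_le hle
  rw [he, Nat.add_sub_cancel_left, pow_add]
  linear_combination (PowerSeries.X : PowerSeries ℤ) ^ (τ.card - E.card) *
    (-PowerSeries.X) ^ (Fintype.card ι - (τ.card + e)) * (1 - PowerSeries.X) ^ e * hpow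

end GeomFan

namespace SimplicialFan

variable {n : ℕ} (S : SimplicialFan n)

/-- The type of the vertices of a fan. -/
@[ext]
structure Vert where
  vec : Fin n → ℝ
  mem : vec ∈ S.verts

/-- The inclusion of the vertices. -/
def vertEmb : S.Vert ↪ (Fin n → ℝ) := ⟨Vert.vec, fun _ _ => Vert.ext⟩

instance fintypeVert : Fintype S.Vert :=
  Fintype.ofInjective (fun v => (⟨v.vec, v.mem⟩ : {v // v ∈ S.verts}))
    fun _ _ h => Vert.ext (congrArg Subtype.val h)

/-- The vectors underlying a set of vertices. -/
def vecs (s : Finset S.Vert) : Finset (Fin n → ℝ) := s.map S.vertEmb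

/-- The vertices of the fan belonging to a set of vectors. -/
def vertsOf (F : Finset (Fin n → ℝ)) : Finset S.Vert := {v | v.vec ∈ F}

variable {S}

theorem mem_vecs {s : Finset S.Vert} {v : S.Vert} : v.vec ∈ S.vecs s ↔ v ∈ s :=
  Finset.mem_map' S.vertEmb

theorem mem_vertsOf {F : Finset (Fin n → ℝ)} {v : S.Vert} : v ∈ S.vertsOf F ↔ v.vec ∈ F := by
  simp [vertsOf]

theorem vecs_vertsOf {F : Finset (Fin n → ℝ)} (hF : F ⊆ S.verts) : S.vecs (S.vertsOf F) = F := by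
  ext x
  refine Finset.mem_map.trans ⟨?_, fun hx => ⟨⟨x, hF hx⟩, mem_vertsOf.2 hx, rfl⟩⟩
  rintro ⟨v, hv, rfl⟩
  exact mem_vertsOf.1 hv

theorem vertsOf_vecs (s : Finset S.Vert) : S.vertsOf (S.vecs s) = s :=
  Finset.ext fun _ => mem_vertsOf.trans mem_vecs

theorem card_vecs (s : Finset S.Vert) : (S.vecs s).card = s.card :=
  Finset.card_map _

theorem card_vertsOf {F : Finset (Fin n → ℝ)} (hF : F ⊆ S.verts) :
    (S.vertsOf F).card = F.card := by
  rw [← card_vecs, vecs_vertsOf hF]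

theorem sum_mem_coneOf {s : Finset S.Vert} {lam : S.Vert → ℝ}
    (h : ∀ v ∈ s, 0 ≤ lam v) : ∑ v ∈ s, lam v • v.vec ∈ coneOf (S.vecs s) := by
  refine ⟨Function.extend S.vertEmb lam 0, fun x hx => ?_, ?_⟩
  · obtain ⟨v, hv, rfl⟩ := Finset.mem_map.1 hx
    rw [S.vertEmb.injective.extend_apply]
    exact h v hv
  · rw [vecs, Finset.sum_map]
    exact Finset.sum_congr rfl fun v _ =>
      congrArg (· • v.vec) (S.vertEmb.injective.extend_apply lam 0 v).symm

theorem exists_sum_eq_of_mem_coneOf {s : Finset S.Vert} {x : Fin n → ℝ}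
    (h : x ∈ coneOf (S.vecs s)) : ∃ lam : S.Vert → ℝ, (∀ v ∈ s, 0 ≤ lam v) ∧
      x = ∑ v ∈ s, lam v • v.vec := by
  obtain ⟨lam, h0, rfl⟩ := h
  exact ⟨fun v => lam v.vec, fun v hv => h0 v.vec (mem_vecs.2 hv), Finset.sum_map _ _ _⟩

variable (S) in
/-- The fan with its vertices indexed by a type. -/
def toGeomFan : GeomFan S.Vert (Fin n) where
  Face s := S.vecs s ∈ S.faces
  label v := Finset.univ.filter fun i => v.vec i ≠ 0
  face_of_subset h ht := S.down_closed _ ht _ (Finset.map_subset_map.2 h)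
  pos v := v.vec
  pos_nonneg v := S.verts_nonneg v.vec v.mem
  mem_label := by simp
  indep {s} hs := (S.indep _ hs).comp (fun v : s => ⟨v.1.vec, mem_vecs.2 v.2⟩) fun v w h =>
    Subtype.ext (Vert.ext (congrArg (fun x => x.1) h))
  covers x hx := by
    have h : x ∈ ⋃ F ∈ S.faces, coneOf F := S.covers ▸ hx
    simp only [Set.mem_iUnion] at h
    obtain ⟨F, hF, h⟩ := h
    rw [← vecs_vertsOf (S.faces_subset_verts F hF)] at h
    exact ⟨_, (vecs_vertsOf (S.faces_subset_verts F hF)).symm ▸ hF, exists_sum_eq_of_mem_coneOf h⟩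
  inter {s t lam mu} hs ht hlam hmu h := by
    have h1 := sum_mem_coneOf hlam
    have h2 := sum_mem_coneOf hmu
    rw [← h] at h2
    have h3 : _ ∈ coneOf (S.vecs s) ∩ coneOf (S.vecs t) := ⟨h1, h2⟩
    rw [S.inter_cone _ hs _ ht, vecs, vecs, ← Finset.map_inter] at h3
    obtain ⟨nu, -, hnu⟩ := exists_sum_eq_of_mem_coneOf h3
    exact ⟨nu, hnu⟩

theorem suppSet_vecs (s : Finset S.Vert) :
    suppSet (S.vecs s) = S.toGeomFan.labels s := by
  ext i
  simp [suppSet, vecs, LabelledComplex.labels, toGeomFan]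
  rfl

theorem labels_vertsOf {F : Finset (Fin n → ℝ)} (hF : F ⊆ S.verts) :
    S.toGeomFan.labels (S.vertsOf F) = suppSet F := by
  rw [← suppSet_vecs, vecs_vertsOf hF]

theorem face_vertsOf {F : Finset (Fin n → ℝ)} (hF : F ∈ S.faces) :
    S.toGeomFan.Face (S.vertsOf F) := by
  change S.vecs _ ∈ S.faces
  rwa [vecs_vertsOf (S.faces_subset_verts F hF)]

theorem coe_localH {E : Finset (Fin n → ℝ)} (hE : E ∈ S.faces) :
    (localH S E : PowerSeries ℤ) = ∑ τ with S.toGeomFan.Face τ ∧ S.vertsOf E ⊆ τ,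
      PowerSeries.X ^ (τ.card - (S.vertsOf E).card) *
        ((-PowerSeries.X) ^ (Fintype.card (Fin n) - (S.toGeomFan.labels τ).card) *
          (1 - PowerSeries.X) ^ ((S.toGeomFan.labels τ).card - τ.card)) := by
  rw [localH, ← Polynomial.coeToPowerSeries.ringHom_apply, map_sum]
  have hEv := S.faces_subset_verts E hE
  refine Finset.sum_bij' (fun F _ => S.vertsOf F) (fun τ _ => S.vecs τ) ?_ ?_ ?_ ?_ ?_
  · intro F hF
    obtain ⟨hF, hEF⟩ := Finset.mem_filter.1 hF
    exact Finset.mem_filter.2 ⟨Finset.mem_univ _, face_vertsOf hF,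
      fun v hv => mem_vertsOf.2 (hEF (mem_vertsOf.1 hv))⟩
  · intro τ hτ
    obtain ⟨hτ, hEτ⟩ := (Finset.mem_filter.1 hτ).2
    refine Finset.mem_filter.2 ⟨hτ, ?_⟩
    rw [← vecs_vertsOf hEv]
    exact Finset.map_subset_map.2 hEτ
  · intro F hF
    exact vecs_vertsOf (S.faces_subset_verts F (Finset.mem_filter.1 hF).1)
  · intro τ _
    exact vertsOf_vecs τ
  · intro F hF
    obtain ⟨hF, hEF⟩ := Finset.mem_filter.1 hF
    have hFv := S.faces_subset_verts F hF
    have h1 := GeomFan.card_le (face_vertsOf hF) subset_rfl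
    have h2 := Finset.card_le_univ (suppSet F)
    have h3 := Finset.card_le_card hEF
    rw [labels_vertsOf hFv, card_vertsOf hFv] at *
    rw [card_vertsOf hEv, Fintype.card_fin] at *
    obtain ⟨g, hg⟩ := Nat.exists_eq_add_of_le h3
    obtain ⟨e, he⟩ := Nat.exists_eq_add_of_le h1
    obtain ⟨d, hd⟩ := Nat.exists_eq_add_of_le h2
    have e1 : n - F.card = e + d := by omega
    have e2 : n - E.card - e = g + d := by omega
    have e3 : F.card - E.card = g := by omega
    have e4 : n - (suppSet F).card = d := by omega
    have e5 : (suppSet F).card - F.card = e := by omega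
    rw [excess, e5, e1, e2, e3, e4]
    simp only [map_mul, map_pow, map_sub, map_one, map_neg,
      Polynomial.coeToPowerSeries.ringHom_apply, Polynomial.coe_X]
    rw [show (1 - PowerSeries.X : PowerSeries ℤ) = -1 * (PowerSeries.X - 1) by ring,
      neg_pow PowerSeries.X, mul_pow]
    ring

end SimplicialFan

/-- **Theorem 4.1.** Let `(V, 𝒮)` be a simplicial fan supported on `ℝⁿ_{≥0}`, let
`E ∈ 𝒮`, and let `F ∈ lk(E)` admit a full partition `F = F₁ ⊔ F₂ ⊔ 𝒜_F`. If the
coefficient of `t^{|F₁| + |𝒜_F|}` in `ℓ(𝒮, E; t)` is zero, then `F` is a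
U-pyramid. -/
theorem coeff_localH_eq_zero_imp_isUPyramid {n : ℕ} (S : SimplicialFan n)
    (E : Finset (Fin n → ℝ)) (hE : E ∈ S.faces)
    (F : Finset (Fin n → ℝ)) (hF : F ∈ link S E)
    (F₁ F₂ : Finset (Fin n → ℝ)) (hfull : IsFullPartition E F F₁ F₂)
    (hzero : (localH S E).coeff (F₁.card + (apices E F).card) = 0) :
    IsUPyramid E F := by
  obtain ⟨hFeq, h12, h1A, h2A, hint, hsupp⟩ := hfull
  obtain ⟨-, hFE, hFEf⟩ := Finset.mem_filter.1 hF
  by_contra hU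
  have hv := S.faces_subset_verts _ hFEf
  have hmem : ∀ v, v ∈ F ↔ (v ∈ F₁ ∨ v ∈ F₂) ∨ v ∈ apices E F := fun v => by
    conv_lhs => rw [hFeq]
    simp only [Finset.mem_union]
  have hdisj : Disjoint F E := Finset.disjoint_iff_inter_eq_empty.2 hFE
  have hF₁F : F₁ ⊆ F := fun v h => (hmem v).2 (.inl (.inl h))
  have hF₂F : F₂ ⊆ F := fun v h => (hmem v).2 (.inl (.inr h))
  have hBF : apices E F ⊆ F := Finset.filter_subset _ _
  have hsub : ∀ {G}, G ⊆ F ∪ E → G ⊆ S.verts := fun h => h.trans hv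
  have hEF : E ⊆ F ∪ E := Finset.subset_union_right
  have hFF : F ⊆ F ∪ E := Finset.subset_union_left
  have hF₁v := hsub (hF₁F.trans hFF)
  have hBv := hsub (hBF.trans hFF)
  have hun : ∀ G H, S.vertsOf (G ∪ H) = S.vertsOf G ∪ S.vertsOf H := fun G H => by
    ext v
    simp only [SimplicialFan.mem_vertsOf, Finset.mem_union]
  have hdis : ∀ {G H}, Disjoint G H → Disjoint (S.vertsOf G) (S.vertsOf H) := fun h =>
    Finset.disjoint_left.2 fun v hG hH => Finset.disjoint_left.1 h
      (SimplicialFan.mem_vertsOf.1 hG) (SimplicialFan.mem_vertsOf.1 hH)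
  have hcoeff : PowerSeries.coeff (F₁.card + (apices E F).card)
      (localH S E : PowerSeries ℤ) = 0 := by
    rwa [Polynomial.coeff_coe]
  rw [SimplicialFan.coe_localH hE, ← GeomFan.sum_star_eq, ← SimplicialFan.card_vertsOf hF₁v,
    ← SimplicialFan.card_vertsOf hBv] at hcoeff
  refine GeomFan.coeff_sum_ne_zero (F₂ := S.vertsOf F₂) ?_ ?_ (hdis h1A) ?_ ?_ ?_ hcoeff
  · rw [← hun, ← hun, ← hFeq, ← hun]
    exact SimplicialFan.face_vertsOf hFEf
  · rw [← hun]
    exact hdis (Finset.disjoint_union_right.2 ⟨h12, hdisj.mono_left hF₁F⟩)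
  · rw [← hun, ← hun, SimplicialFan.labels_vertsOf (hsub (Finset.union_subset
      (Finset.union_subset (hF₁F.trans hFF) (hBF.trans hFF)) hEF))]
    exact hint
  · intro v hvF i hi
    have hvF := SimplicialFan.mem_vertsOf.1 hvF
    rw [← hun, SimplicialFan.labels_vertsOf
      (hsub (Finset.union_subset_union_left hF₂F)), hsupp, Finset.mem_sdiff]
    refine ⟨Finset.mem_univ _, fun h => ?_⟩
    obtain ⟨A, hA, hiA⟩ := Finset.mem_biUnion.1 h
    refine (Finset.mem_sdiff.1 hiA).2 (Finset.mem_filter.2 ⟨Finset.mem_univ _, v.vec, ?_,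
      (Finset.mem_filter.1 hi).2⟩)
    exact Finset.mem_erase.2 ⟨fun h => Finset.disjoint_left.1 h1A hvF (h ▸ hA), hFF (hF₁F hvF)⟩
  · intro v hvB p
    have hvB := SimplicialFan.mem_vertsOf.1 hvB
    have hne : (baseDirs E F v.vec).Nonempty := by
      rw [baseDirs, Finset.sdiff_nonempty]
      exact fun h => (Finset.mem_filter.1 hvB).2.2.2 (Finset.univ_subset_iff.1 h)
    have hcard : 1 < (baseDirs E F v.vec).card :=
      lt_of_le_of_ne hne.card_pos fun h => hU ⟨v.vec, hvB, h.symm⟩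
    obtain ⟨q, hq, hqp⟩ := Finset.exists_mem_ne hcard p
    refine ⟨q, hqp, fun hq' => (Finset.mem_sdiff.1 hq).2 ?_⟩
    have hv2 : v.vec ∉ F₂ ∪ E := fun h => (Finset.mem_union.1 h).elim
      (fun h => Finset.disjoint_left.1 h2A h hvB) (Finset.disjoint_left.1 hdisj (hBF hvB))
    have hv1 : v.vec ∉ F₁ := fun h => Finset.disjoint_left.1 h1A h hvB
    rw [← SimplicialFan.labels_vertsOf (hsub (Finset.erase_subset _ _))]
    refine S.toGeomFan.labels_mono (fun w hw => ?_) hq'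
    simp only [Finset.mem_union, Finset.mem_erase, SimplicialFan.mem_vertsOf] at hw hv2 ⊢
    refine ⟨?_, ?_⟩
    · rintro h
      rcases hw with hw | hw | hw | hw
      · exact hw.1 (SimplicialFan.Vert.ext h)
      · exact hv1 (h ▸ hw)
      · exact hv2 (.inl (h ▸ hw))
      · exact hv2 (.inr (h ▸ hw))
    · rw [hmem]
      tauto

end
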